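/- arXiv:2112.13978 — 4 statements merged into one kernel-verified Lean document; each statement's English description precedes it below -/
import Mathlib

section
/- Let n ≥ 3, let Ω ⊂ ℝⁿ be an open bounded set and let Ω₁ ⊂ ℝⁿ be an open bounded set with closure(Ω) ⊂ Ω₁. Then there exists a constant C > 0, independent of M, such that for every M > 0 and all continuously differentiable f₁, f₂ : ℝⁿ → ℝ supported in the closure of Ω with ‖f_j‖_{C¹(ℝⁿ)} ≤ M for j = 1,2, one has ‖Kf₁ − Kf₂‖_{H¹(Ω₁)} ≤ C (1 + e^{CM} + M e^{CM}) ‖f₁ − f₂‖_{L²(ℝⁿ)} + C (e^{CM} − 1) ‖∇(f₁ − f₂)‖_{L²(ℝⁿ)}. -/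
open MeasureTheory Metric Real

/-- The `n`-dimensional Euclidean space. -/
abbrev Euc (n : ℕ) := EuclideanSpace ℝ (Fin n)

/-- The standard surface measure on the unit sphere `S^{n-1} ⊂ ℝⁿ`. -/
noncomputable def sphereMeasure (n : ℕ) : Measure (sphere (0 : Euc n) 1) :=
  (volume : Measure (Euc n)).toSphere

/-- The surface measure `|S^{n-1}|` of the unit sphere in `ℝⁿ`. -/
noncomputable def sphereVol (n : ℕ) : ℝ := (sphereMeasure n Set.univ).toReal

/-- The X-ray transform `Xf(x,θ) = ∫_ℝ f(x+sθ) ds`. -/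
noncomputable def Xray {n : ℕ} (f : Euc n → ℝ) (x θ : Euc n) : ℝ :=
  ∫ s : ℝ, f (x + s • θ)

/-- The normal operator `X'Xf(x) = ∫_{S^{n-1}} Xf(x,θ) dθ`. -/
noncomputable def normalOp {n : ℕ} (f : Euc n → ℝ) (x : Euc n) : ℝ :=
  ∫ θ : sphere (0 : Euc n) 1, Xray f x (θ : Euc n) ∂(sphereMeasure n)

/-- The single pixel X-ray transform `Kf(x) = ∫_{S^{n-1}} e^{-Xf(x,θ)} dθ`. -/
noncomputable def singlePixel {n : ℕ} (f : Euc n → ℝ) (x : Euc n) : ℝ :=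
  ∫ θ : sphere (0 : Euc n) 1, Real.exp (-(Xray f x (θ : Euc n))) ∂(sphereMeasure n)

/-- The Fourier transform `𝓕f(ξ) = ∫ e^{-i x·ξ} f(x) dx`. -/
noncomputable def FT {n : ℕ} (f : Euc n → ℝ) (ξ : Euc n) : ℂ :=
  ∫ x : Euc n, Complex.exp (-(Complex.I * ((inner ℝ x ξ : ℝ) : ℂ))) * (f x : ℂ)

/-- The inverse Fourier transform `𝓕⁻¹g(x) = (2π)^{-n} ∫ e^{i x·ξ} g(ξ) dξ`. -/
noncomputable def invFT {n : ℕ} (g : Euc n → ℂ) (x : Euc n) : ℂ :=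
  ((((2 * π) ^ n)⁻¹ : ℝ) : ℂ) * ∫ ξ : Euc n, Complex.exp (Complex.I * ((inner ℝ x ξ : ℝ) : ℂ)) * g ξ

/-- The `L²(ℝⁿ)` norm `(∫ |f|²)^{1/2}`. -/
noncomputable def L2norm {n : ℕ} (f : Euc n → ℝ) : ℝ :=
  (∫ x : Euc n, f x ^ 2) ^ ((1 : ℝ) / 2)

/-- The `H¹(U)` norm `(∫_U |u|²)^{1/2} + (∫_U |∇u|²)^{1/2}`. -/
noncomputable def H1norm {n : ℕ} (U : Set (Euc n)) (u : Euc n → ℝ) : ℝ :=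
  (∫ x in U, u x ^ 2) ^ ((1 : ℝ) / 2) + (∫ x in U, ‖fderiv ℝ u x‖ ^ 2) ^ ((1 : ℝ) / 2)

/-!
Near the supports of `f₁` and `f₂` the line integrals may be cut off by a smooth bump, i.e. taken
against a finite measure `ν` on `ℝ` that agrees with Lebesgue measure on a long interval. With `X`
the resulting X-ray transform and `h = f₁ - f₂`, the difference `Kf₁ - Kf₂` is dominated by the
average of the translates of `|h|` over the finite measure `σ`, the push-forward of (surface
measure) `× ν` under `(θ, s) ↦ s • θ`, and such averages are bounded on `L²`. For the gradient,
`∇(Kf₁ - Kf₂) = -∫ (e^{-Xf₁} - e^{-Xf₂}) X∇f₁ - ∫ (e^{-Xf₂} - 1) X∇h - ∫ X∇h`.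
The first two terms are treated in the same way, the second one with the small factor `e^{CM} - 1`.
The last term has no small factor but gains a derivative: it is the average of the translates of
`∇h` over `σ`, and the characteristic function of `σ` is `O(‖ξ‖⁻¹)`, because that of `ν` decays
quadratically and the integral of `(1 + ⟪θ, ξ⟫²)⁻¹` over the sphere is `O(‖ξ‖⁻¹)`. By Plancherel
it is bounded by the `L²` norm of `h`.
-/

open scoped FourierTransform SchwartzMap ContDiff ENNReal

section Plancherel

variable {E F : Type*} [NormedAddCommGroup E] [InnerProductSpace ℝ E] [FiniteDimensional ℝ E]
  [MeasurableSpace E] [BorelSpace E]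
  [NormedAddCommGroup F] [InnerProductSpace ℂ F] [CompleteSpace F]

theorem coeFn_fourier_toLp_two {f : E → F} (h1 : Integrable f) (h2 : MemLp f 2) :
    ⇑(𝓕 h2.toLp : Lp (α := E) F 2 volume) =ᵐ[volume] 𝓕 f := by
  have hcont : Continuous (𝓕 f) :=
    VectorFourier.fourierIntegral_continuous Real.continuous_fourierChar
      (by exact continuous_inner) h1
  refine ae_eq_of_integral_contDiff_smul_eq
    ((Lp.memLp _).locallyIntegrable (by norm_num)) hcont.locallyIntegrable fun g hg hgs => ?_
  have hgs' : HasCompactSupport (fun x => (g x : ℂ)) :=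
    hgs.comp_left (g := fun t : ℝ => (t : ℂ)) (by simp)
  let G : 𝓢(E, ℂ) := hgs'.toSchwartzMap (Complex.ofRealCLM.contDiff.comp hg)
  have hG : ∀ (x : E) (v : F), g x • v = G x • v := fun x v => (Complex.coe_smul (g x) v).symm
  have hself_adjoint : ∫ ξ, 𝓕 (G : E → ℂ) ξ • f ξ = ∫ x, G x • 𝓕 f x := by
    have := VectorFourier.integral_fourierIntegral_smul_eq_flip (L := innerₗ E)
      (μ := volume) (ν := volume) Real.continuous_fourierChar
      (by exact continuous_inner) G.integrable h1
    rwa [flip_innerₗ] at this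
  simp only [hG]
  calc ∫ x, G x • (𝓕 h2.toLp : Lp (α := E) F 2 volume) x
      = ∫ x, (𝓕 G) x • (h2.toLp : Lp (α := E) F 2 volume) x := by
        simpa only [TemperedDistribution.fourier_apply, Lp.toTemperedDistribution_apply] using
          (congrArg (fun T => T G) (Lp.fourier_toTemperedDistribution_eq h2.toLp)).symm
    _ = ∫ ξ, 𝓕 (G : E → ℂ) ξ • f ξ := by
        refine integral_congr_ae ?_
        filter_upwards [h2.coeFn_toLp] with x hx
        rw [hx, SchwartzMap.fourier_coe]
    _ = ∫ x, G x • 𝓕 f x := hself_adjoint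

theorem memLp_two_fourier {f : E → F} (h1 : Integrable f) (h2 : MemLp f 2) : MemLp (𝓕 f) 2 :=
  (memLp_congr_ae (coeFn_fourier_toLp_two h1 h2)).1 (Lp.memLp _)

theorem lpNorm_two_fourier {f : E → F} (h1 : Integrable f) (h2 : MemLp f 2) :
    lpNorm (𝓕 f) 2 volume = lpNorm f 2 volume := by
  have h := Lp.norm_fourier_eq h2.toLp
  rwa [Lp.norm_def, Lp.norm_def, eLpNorm_congr_ae h2.coeFn_toLp,
    eLpNorm_congr_ae (coeFn_fourier_toLp_two h1 h2),
    toReal_eLpNorm (memLp_two_fourier h1 h2).1, toReal_eLpNorm h2.1] at h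

end Plancherel

theorem lpNorm_le_mul_lpNorm_of_norm_le {α E F : Type*} [MeasurableSpace α] {μ : Measure α}
    [NormedAddCommGroup E] [NormedAddCommGroup F] {f : α → E} {g : α → F} {p : ℝ≥0∞} {c : ℝ}
    (hg : MemLp g p μ) (hc : 0 ≤ c) (h : ∀ x, ‖f x‖ ≤ c * ‖g x‖) :
    lpNorm f p μ ≤ c * lpNorm g p μ := by
  have hscale : lpNorm (fun x => c * ‖g x‖) p μ = c * lpNorm g p μ := by
    simpa [Pi.smul_def, lpNorm_norm hg.1, abs_of_nonneg hc] using
      lpNorm_const_smul (p := p) c (fun x => ‖g x‖) μ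
  exact (lpNorm_mono_real (hg.norm.const_mul c) h).trans_eq hscale

theorem lpNorm_complex_ofReal {α : Type*} [MeasurableSpace α] {μ : Measure α} {f : α → ℝ}
    (hf : AEStronglyMeasurable f μ) (p : ℝ≥0∞) :
    lpNorm (fun x => (f x : ℂ)) p μ = lpNorm f p μ := by
  rw [← lpNorm_norm (Complex.continuous_ofReal.comp_aestronglyMeasurable hf), ← lpNorm_norm hf]
  simp only [Complex.norm_real]

section TranslateAverage

theorem enorm_integral_rpow_le {G F : Type*} [MeasurableSpace G] [NormedAddCommGroup F]
    [NormedSpace ℝ F] {f : G → F} {σ : Measure G} (hf : AEStronglyMeasurable f σ)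
    {p : ℝ} (hp : 1 ≤ p) :
    ‖∫ y, f y ∂σ‖ₑ ^ p ≤ σ Set.univ ^ (p - 1) * ∫⁻ y, ‖f y‖ₑ ^ p ∂σ := by
  have hp0 : 0 < p := by linarith
  have holder : ‖∫ y, f y ∂σ‖ₑ ≤ eLpNorm' f p σ * σ Set.univ ^ (1 - 1 / p) := by
    simpa [eLpNorm'] using (enorm_integral_le_lintegral_enorm f).trans
      (by simpa [eLpNorm'] using eLpNorm'_le_eLpNorm'_mul_rpow_measure_univ one_pos hp hf)
  calc ‖∫ y, f y ∂σ‖ₑ ^ p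
      ≤ (eLpNorm' f p σ * σ Set.univ ^ (1 - 1 / p)) ^ p := by gcongr
    _ = σ Set.univ ^ (p - 1) * ∫⁻ y, ‖f y‖ₑ ^ p ∂σ := by
        rw [ENNReal.mul_rpow_of_nonneg _ _ hp0.le, ← ENNReal.rpow_mul,
          lintegral_rpow_enorm_eq_rpow_eLpNorm' hp0, mul_comm, sub_mul, one_mul,
          div_mul_cancel₀ _ hp0.ne']

/-- The average of the translates of `g` with weight `σ`, i.e. the convolution of `g` with the
reflection of the measure `σ`. -/
noncomputable def translateAverage {G F : Type*} [Add G] [MeasurableSpace G]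
    [NormedAddCommGroup F] [NormedSpace ℝ F] (σ : Measure G) (g : G → F) (x : G) : F :=
  ∫ y, g (x + y) ∂σ

variable {G F : Type*} [NormedAddCommGroup F] [MeasurableSpace G]
  [AddGroup G] [MeasurableAdd₂ G] {σ μ : Measure G} [SFinite μ] [μ.IsAddRightInvariant]
  {g : G → F}

theorem aestronglyMeasurable_comp_add [SFinite σ] (hg : AEStronglyMeasurable g μ) :
    AEStronglyMeasurable (fun z : G × G => g (z.1 + z.2)) (μ.prod σ) :=
  hg.comp_fst.comp_measurePreserving (measurePreserving_add_prod μ σ)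

theorem integrable_comp_add [IsFiniteMeasure σ] (hg : Integrable g μ) :
    Integrable (fun z : G × G => g (z.1 + z.2)) (μ.prod σ) :=
  (measurePreserving_add_prod μ σ).integrable_comp_of_integrable (hg.comp_fst σ)

variable [NormedSpace ℝ F]

theorem integrable_translateAverage [IsFiniteMeasure σ] (hg : Integrable g μ) :
    Integrable (translateAverage σ g) μ :=
  (integrable_comp_add hg).integral_prod_left

theorem eLpNorm_translateAverage_le [SFinite σ] (hg : AEStronglyMeasurable g μ) {p : ℝ≥0∞}
    (hp : 1 ≤ p) (hp_top : p ≠ ⊤) :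
    eLpNorm (translateAverage σ g) p μ ≤ σ Set.univ * eLpNorm g p μ := by
  have hp0 : p ≠ 0 := (one_pos.trans_le hp).ne'
  have hp1 : 1 ≤ p.toReal := (ENNReal.ofReal_le_iff_le_toReal hp_top).1 (by simpa using hp)
  have hp_pos : 0 < p.toReal := by linarith
  have hmeas := aestronglyMeasurable_comp_add (σ := σ) hg
  rw [eLpNorm_eq_eLpNorm' hp0 hp_top, eLpNorm_eq_eLpNorm' hp0 hp_top,
    ← ENNReal.rpow_le_rpow_iff hp_pos, ENNReal.mul_rpow_of_nonneg _ _ hp_pos.le,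
    ← lintegral_rpow_enorm_eq_rpow_eLpNorm' hp_pos, ← lintegral_rpow_enorm_eq_rpow_eLpNorm' hp_pos]
  set q := p.toReal
  calc ∫⁻ x, ‖translateAverage σ g x‖ₑ ^ q ∂μ
      ≤ ∫⁻ x, σ Set.univ ^ (q - 1) * ∫⁻ y, ‖g (x + y)‖ₑ ^ q ∂σ ∂μ :=
        lintegral_mono_ae (hmeas.prodMk_left.mono fun x hx => enorm_integral_rpow_le hx hp1)
    _ = σ Set.univ ^ (q - 1) * ∫⁻ x, ∫⁻ y, ‖g (x + y)‖ₑ ^ q ∂σ ∂μ :=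
        lintegral_const_mul'' _ (hmeas.enorm.pow_const q).lintegral_prod_right'
    _ = σ Set.univ ^ (q - 1) * ∫⁻ y, ∫⁻ x, ‖g (x + y)‖ₑ ^ q ∂μ ∂σ := by
        rw [lintegral_lintegral_swap (hmeas.enorm.pow_const q)]
    _ = σ Set.univ ^ (q - 1) * (σ Set.univ * ∫⁻ x, ‖g x‖ₑ ^ q ∂μ) := by
        simp only [lintegral_add_right_eq_self (fun x => ‖g x‖ₑ ^ q), lintegral_const, mul_comm]
    _ = σ Set.univ ^ q * ∫⁻ x, ‖g x‖ₑ ^ q ∂μ := by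
        rw [← mul_assoc]
        congr 1
        nth_rewrite 2 [← ENNReal.rpow_one (σ Set.univ)]
        rw [← ENNReal.rpow_add_of_nonneg _ _ (by linarith) zero_le_one, sub_add_cancel]

theorem memLp_translateAverage [IsFiniteMeasure σ] {p : ℝ≥0∞} (hp : 1 ≤ p) (hp_top : p ≠ ⊤)
    (hg : MemLp g p μ) : MemLp (translateAverage σ g) p μ :=
  ⟨(aestronglyMeasurable_comp_add hg.1).integral_prod_right',
    (eLpNorm_translateAverage_le hg.1 hp hp_top).trans_lt
      (ENNReal.mul_lt_top (measure_lt_top σ _) hg.2)⟩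

theorem lpNorm_translateAverage_le [IsFiniteMeasure σ] {p : ℝ≥0∞} (hp : 1 ≤ p) (hp_top : p ≠ ⊤)
    (hg : MemLp g p μ) : lpNorm (translateAverage σ g) p μ ≤ σ.real Set.univ * lpNorm g p μ := by
  rw [← toReal_eLpNorm (memLp_translateAverage hp hp_top hg).1, ← toReal_eLpNorm hg.1,
    measureReal_def, ← ENNReal.toReal_mul]
  exact ENNReal.toReal_mono (ENNReal.mul_ne_top (measure_ne_top σ _) hg.2.ne)
    (eLpNorm_translateAverage_le hg.1 hp hp_top)

end TranslateAverage

section Smoothing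

variable {E F : Type*} [NormedAddCommGroup E] [InnerProductSpace ℝ E] [FiniteDimensional ℝ E]
  [MeasurableSpace E] [BorelSpace E] {σ : Measure E} [IsFiniteMeasure σ]

theorem fourier_translateAverage [NormedAddCommGroup F] [NormedSpace ℂ F] [CompleteSpace F]
    {g : E → F} (hg : Integrable g) (ξ : E) :
    𝓕 (translateAverage σ g) ξ = charFun σ ((2 * π) • ξ) • 𝓕 g ξ := by
  have hphase : Continuous fun z : E × E => 𝐞 (-inner ℝ z.1 ξ) :=
    Real.continuous_fourierChar.comp (by fun_prop)
  have hint : Integrable (fun z : E × E => 𝐞 (-inner ℝ z.1 ξ) • g (z.1 + z.2))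
      (volume.prod σ) :=
    (integrable_comp_add hg).mono
      (hphase.aestronglyMeasurable.smul (integrable_comp_add hg).1)
      (ae_of_all _ fun z => (Circle.norm_smul _ _).le)
  have htranslate : ∀ y, ∫ x, 𝐞 (-inner ℝ x ξ) • g (x + y) = 𝐞 (inner ℝ y ξ) • 𝓕 g ξ := fun y =>
    congrFun (VectorFourier.fourierIntegral_comp_add_right 𝐞 volume (innerₗ E) g y) ξ
  calc 𝓕 (translateAverage σ g) ξ
      = ∫ x, ∫ y, 𝐞 (-inner ℝ x ξ) • g (x + y) ∂σ := by
        simp only [Real.fourier_eq, translateAverage, Circle.smul_def, integral_smul]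
    _ = ∫ y, (∫ x, 𝐞 (-inner ℝ x ξ) • g (x + y)) ∂σ := integral_integral_swap hint
    _ = ∫ y, (𝐞 (inner ℝ y ξ) : ℂ) • 𝓕 g ξ ∂σ := by simp only [htranslate]; rfl
    _ = charFun σ ((2 * π) • ξ) • 𝓕 g ξ := by
        rw [integral_smul_const, charFun_apply]
        simp only [Real.fourierChar_apply, inner_smul_right]

theorem norm_fourier_fderiv_apply_le [NormedAddCommGroup F] [NormedSpace ℂ F] [CompleteSpace F]
    {h : E → F} (hi : Integrable h) (hd : Differentiable ℝ h) (hdi : Integrable (fderiv ℝ h))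
    (v ξ : E) : ‖𝓕 (fun x => fderiv ℝ h x v) ξ‖ ≤ 2 * π * ‖v‖ * ‖ξ‖ * ‖𝓕 h ξ‖ := by
  have hdi' : Integrable fun x => 𝐞 (-inner ℝ x ξ) • fderiv ℝ h x :=
    (Real.fourierIntegral_convergent_iff ξ).2 hdi
  have happly : 𝓕 (fun x => fderiv ℝ h x v) ξ = 𝓕 (fderiv ℝ h) ξ v := by
    rw [Real.fourier_eq, Real.fourier_eq, ContinuousLinearMap.integral_apply hdi']
    rfl
  rw [happly, Real.fourier_fderiv hi hd hdi]
  have hinner : innerSL ℝ ξ v = inner ℝ ξ v := rfl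
  calc ‖VectorFourier.fourierSMulRight (-innerSL ℝ) (𝓕 h) ξ v‖
      = 2 * π * |inner ℝ ξ v| * ‖𝓕 h ξ‖ := by
        simp [VectorFourier.fourierSMulRight_apply, norm_smul, abs_of_pos pi_pos, mul_assoc,
          hinner]
    _ ≤ 2 * π * (‖ξ‖ * ‖v‖) * ‖𝓕 h ξ‖ := by
        gcongr
        exact abs_real_inner_le_norm ξ v
    _ = 2 * π * ‖v‖ * ‖ξ‖ * ‖𝓕 h ξ‖ := by ring

theorem lpNorm_translateAverage_fderiv_apply_le [NormedAddCommGroup F] [InnerProductSpace ℂ F]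
    [CompleteSpace F] {D : ℝ} (hD : ∀ ξ, ‖ξ‖ * ‖charFun σ ξ‖ ≤ D) {h : E → F}
    (hh : ContDiff ℝ 1 h) (hs : HasCompactSupport h) (v : E) :
    lpNorm (translateAverage σ fun x => fderiv ℝ h x v) 2 volume
      ≤ ‖v‖ * D * lpNorm h 2 volume := by
  have hhc := hh.continuous
  have hdc := hh.continuous_fderiv one_ne_zero
  have hgc : Continuous fun x => fderiv ℝ h x v := by fun_prop
  have hgs := hs.fderiv_apply ℝ v
  have hgi := hgc.integrable_of_hasCompactSupport (μ := volume) hgs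
  have hg2 := hgc.memLp_of_hasCompactSupport (p := 2) (μ := volume) hgs
  have hhi := hhc.integrable_of_hasCompactSupport (μ := volume) hs
  have hh2 := hhc.memLp_of_hasCompactSupport (p := 2) (μ := volume) hs
  have hsymbol : ∀ ξ, ‖𝓕 (translateAverage σ fun x => fderiv ℝ h x v) ξ‖
      ≤ ‖v‖ * D * ‖𝓕 h ξ‖ := fun ξ => by
    have hDξ := hD ((2 * π) • ξ)
    rw [norm_smul, Real.norm_of_nonneg two_pi_pos.le] at hDξ
    calc ‖𝓕 (translateAverage σ fun x => fderiv ℝ h x v) ξ‖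
        = ‖charFun σ ((2 * π) • ξ)‖ * ‖𝓕 (fun x => fderiv ℝ h x v) ξ‖ := by
          rw [fourier_translateAverage hgi, norm_smul]
      _ ≤ ‖charFun σ ((2 * π) • ξ)‖ * (2 * π * ‖v‖ * ‖ξ‖ * ‖𝓕 h ξ‖) := by
          gcongr
          exact norm_fourier_fderiv_apply_le hhi (hh.differentiable one_ne_zero)
            (hdc.integrable_of_hasCompactSupport (hs.fderiv ℝ)) v ξ
      _ = ‖v‖ * (2 * π * ‖ξ‖ * ‖charFun σ ((2 * π) • ξ)‖) * ‖𝓕 h ξ‖ := by ring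
      _ ≤ ‖v‖ * D * ‖𝓕 h ξ‖ := by gcongr
  calc lpNorm (translateAverage σ fun x => fderiv ℝ h x v) 2 volume
      = lpNorm (𝓕 (translateAverage σ fun x => fderiv ℝ h x v)) 2 volume :=
        (lpNorm_two_fourier (integrable_translateAverage hgi)
          (memLp_translateAverage one_le_two ENNReal.ofNat_ne_top hg2)).symm
    _ ≤ ‖v‖ * D * lpNorm (𝓕 h) 2 volume :=
        lpNorm_le_mul_lpNorm_of_norm_le (memLp_two_fourier hhi hh2)
          (mul_nonneg (norm_nonneg v) (by simpa using hD 0)) hsymbol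
    _ = ‖v‖ * D * lpNorm h 2 volume := by rw [lpNorm_two_fourier hhi hh2]

theorem lpNorm_translateAverage_fderiv_apply_le_real {D : ℝ} (hD : ∀ ξ, ‖ξ‖ * ‖charFun σ ξ‖ ≤ D)
    {h : E → ℝ} (hh : ContDiff ℝ 1 h) (hs : HasCompactSupport h) (v : E) :
    lpNorm (translateAverage σ fun x => fderiv ℝ h x v) 2 volume
      ≤ ‖v‖ * D * lpNorm h 2 volume := by
  let H : E → ℂ := fun x => h x
  have hHc : ContDiff ℝ 1 H := Complex.ofRealCLM.contDiff.comp hh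
  have hHs : HasCompactSupport H := hs.comp_left Complex.ofReal_zero
  have hd : ∀ x, fderiv ℝ H x v = fderiv ℝ h x v := fun x => by
    have hchain := (Complex.ofRealCLM.hasFDerivAt.comp x
      (hh.differentiable one_ne_zero x).hasFDerivAt).fderiv
    exact congrArg (· v) hchain
  have hg2 : MemLp (fun x => fderiv ℝ h x v) 2 :=
    Continuous.memLp_of_hasCompactSupport (by have := hh.continuous_fderiv one_ne_zero; fun_prop)
      (hs.fderiv_apply ℝ v)
  have havg : translateAverage σ (fun y => fderiv ℝ H y v)
      = fun x => ((translateAverage σ (fun y => fderiv ℝ h y v) x : ℝ) : ℂ) := funext fun x => by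
    simp only [translateAverage, hd, integral_complex_ofReal]
  have hcomplex := lpNorm_translateAverage_fderiv_apply_le hD hHc hHs v
  rwa [havg, lpNorm_complex_ofReal (memLp_translateAverage one_le_two ENNReal.ofNat_ne_top hg2).1,
    lpNorm_complex_ofReal hh.continuous.aestronglyMeasurable] at hcomplex

end Smoothing

section Cutoff

theorem exists_norm_schwartzMap_le_inv_one_add_sq (G : 𝓢(ℝ, ℂ)) :
    ∃ A, 0 ≤ A ∧ ∀ t, ‖G t‖ ≤ A * (1 + t ^ 2)⁻¹ := by
  obtain ⟨C₀, hC₀, h₀⟩ := G.decay 0 0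
  obtain ⟨C₂, hC₂, h₂⟩ := G.decay 2 0
  refine ⟨C₀ + C₂, by positivity, fun t => ?_⟩
  have e₀ := h₀ t
  have e₂ := h₂ t
  simp only [norm_iteratedFDeriv_zero, pow_zero, one_mul, Real.norm_eq_abs, sq_abs] at e₀ e₂
  rw [← div_eq_mul_inv, le_div_iff₀ (by positivity)]
  linarith

theorem charFun_withDensity_ofReal (G : ℝ → ℝ) (hG : Measurable G) (hG0 : ∀ s, 0 ≤ G s) (t : ℝ) :
    charFun (volume.withDensity fun s => ENNReal.ofReal (G s)) t
      = 𝓕 (fun s => (G s : ℂ)) (-(2 * π)⁻¹ * t) := by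
  rw [charFun_apply, integral_withDensity_eq_integral_toReal_smul hG.ennreal_ofReal (by simp),
    Real.fourier_real_eq_integral_exp_smul]
  congr with s
  rw [ENNReal.toReal_ofReal (hG0 s), Complex.real_smul, smul_eq_mul, mul_comm]
  congr 2
  simp
  field_simp

theorem exists_cutoff_measure (T : ℝ) :
    ∃ ν : Measure ℝ, IsFiniteMeasure ν ∧
      ν.restrict (Set.Icc (-T) T) = volume.restrict (Set.Icc (-T) T) ∧
      ∃ A, ∀ t, ‖charFun ν t‖ ≤ A * (1 + t ^ 2)⁻¹ := by
  let χ : ContDiffBump (0 : ℝ) := ⟨max T 1, max T 1 + 1, by positivity, by linarith⟩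
  let G : 𝓢(ℝ, ℂ) := HasCompactSupport.toSchwartzMap (f := fun s => (χ s : ℂ))
    (χ.hasCompactSupport.comp_left Complex.ofReal_zero)
    (Complex.ofRealCLM.contDiff.comp χ.contDiff)
  obtain ⟨A, hA, hdecay⟩ := exists_norm_schwartzMap_le_inv_one_add_sq (𝓕 G)
  refine ⟨volume.withDensity fun s => ENNReal.ofReal (χ s), isFiniteMeasure_withDensity_ofReal
    (χ.continuous.integrable_of_hasCompactSupport χ.hasCompactSupport).2, ?_,
    A * (2 * π) ^ 2, fun t => ?_⟩
  · have hone : ∀ s ∈ Set.Icc (-T) T, ENNReal.ofReal (χ s) = 1 := fun s hs => by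
      rw [χ.one_of_mem_closedBall, ENNReal.ofReal_one]
      rw [mem_closedBall_zero_iff]
      exact (abs_le.2 hs).trans (le_max_left T 1)
    rw [restrict_withDensity measurableSet_Icc, withDensity_congr_ae (g := 1), withDensity_one]
    exact (ae_restrict_iff' measurableSet_Icc).2 (ae_of_all _ hone)
  · rw [charFun_withDensity_ofReal _ χ.continuous.measurable fun _ => χ.nonneg]
    have hscale : 1 + t ^ 2 ≤ (2 * π) ^ 2 * (1 + (-(2 * π)⁻¹ * t) ^ 2) := by
      have h2π : (1 : ℝ) ≤ (2 * π) ^ 2 := one_le_pow₀ (by linarith [pi_gt_three])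
      field_simp
      linarith
    calc ‖𝓕 (fun s => (χ s : ℂ)) (-(2 * π)⁻¹ * t)‖
        ≤ A * (1 + (-(2 * π)⁻¹ * t) ^ 2)⁻¹ := hdecay (-(2 * π)⁻¹ * t)
      _ ≤ A * ((2 * π) ^ 2 * (1 + t ^ 2)⁻¹) := by
          gcongr
          rw [← div_eq_mul_inv, inv_le_comm₀ (by positivity) (by positivity), inv_div,
            div_le_iff₀' (by positivity)]
          exact hscale
      _ = A * (2 * π) ^ 2 * (1 + t ^ 2)⁻¹ := by ring

end Cutoff

section WeightedXray

variable {E F : Type*} [NormedAddCommGroup E] [NormedSpace ℝ E] [NormedAddCommGroup F]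
  {ν : Measure ℝ} [IsFiniteMeasure ν] {C C' : ℝ} {f g : E → F}

theorem integrable_comp_ray (hf : Continuous f) (hC : ∀ x, ‖f x‖ ≤ C) (x θ : E) :
    Integrable (fun s : ℝ => f (x + s • θ)) ν :=
  .of_bound (hf.comp (by fun_prop)).aestronglyMeasurable C (ae_of_all _ fun _ => hC _)

variable [NormedSpace ℝ F]

/-- The X-ray transform in which each line carries the weight `ν` instead of Lebesgue measure. -/
noncomputable def weightedXray (ν : Measure ℝ) (f : E → F) (x θ : E) : F :=
  ∫ s, f (x + s • θ) ∂ν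

theorem norm_weightedXray_le (hC : ∀ x, ‖f x‖ ≤ C) (x θ : E) :
    ‖weightedXray ν f x θ‖ ≤ C * ν.real Set.univ :=
  norm_integral_le_of_norm_le_const (ae_of_all _ fun _ => hC _)

theorem weightedXray_sub (hf : Continuous f) (hC : ∀ x, ‖f x‖ ≤ C) (hg : Continuous g)
    (hC' : ∀ x, ‖g x‖ ≤ C') (x θ : E) :
    weightedXray ν (fun y => f y - g y) x θ = weightedXray ν f x θ - weightedXray ν g x θ :=
  integral_sub (integrable_comp_ray hf hC x θ) (integrable_comp_ray hg hC' x θ)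

theorem continuous_weightedXray (hf : Continuous f) (hC : ∀ x, ‖f x‖ ≤ C) (x : E) :
    Continuous (weightedXray ν f x) :=
  continuous_of_dominated (fun θ => (integrable_comp_ray hf hC x θ).1)
    (fun _ => ae_of_all _ fun _ => hC _) (integrable_const C) (ae_of_all _ fun s => by fun_prop)

theorem hasFDerivAt_weightedXray {f : E → ℝ} (hf : ContDiff ℝ 1 f)
    (hC : ∀ x, ‖f x‖ ≤ C) (hC' : ∀ x, ‖fderiv ℝ f x‖ ≤ C') (x θ : E) :
    HasFDerivAt (fun y => weightedXray ν f y θ) (weightedXray ν (fderiv ℝ f) x θ) x :=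
  hasFDerivAt_integral_of_dominated_of_fderiv_le
    (F' := fun y s => fderiv ℝ f (y + s • θ)) (bound := fun _ => C') Filter.univ_mem
    (.of_forall fun y => (integrable_comp_ray hf.continuous hC y θ).1)
    (integrable_comp_ray hf.continuous hC x θ)
    (integrable_comp_ray (hf.continuous_fderiv one_ne_zero) hC' x θ).1
    (ae_of_all _ fun _ _ _ => hC' _) (integrable_const _) (ae_of_all _ fun s _ _ =>
      (hasFDerivAt_comp_add_right (s • θ)).2 (hf.differentiable one_ne_zero _).hasFDerivAt)

theorem exp_neg_weightedXray_le {f : E → ℝ} (hC : ∀ x, ‖f x‖ ≤ C) (x θ : E) :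
    exp (-weightedXray ν f x θ) ≤ exp (C * ν.real Set.univ) :=
  exp_le_exp.2 ((neg_le_abs _).trans (norm_weightedXray_le hC x θ))

variable [MeasurableSpace E]

/-- The push-forward of `τ × ν` under `(θ, s) ↦ s • θ`: translate averages with this weight are
averages along the lines through a point, with directions distributed according to `τ`. -/
noncomputable def rayMeasure (τ : Measure E) (ν : Measure ℝ) : Measure E :=
  (τ.prod ν).map fun p => p.2 • p.1

instance (τ : Measure E) (ν : Measure ℝ) [IsFiniteMeasure τ] [IsFiniteMeasure ν] :
    IsFiniteMeasure (rayMeasure τ ν) :=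
  Measure.isFiniteMeasure_map _ _

/-- The single pixel X-ray transform built from `weightedXray`, with directions distributed
according to `τ`. -/
noncomputable def weightedPixel (τ : Measure E) (ν : Measure ℝ) (f : E → ℝ) (x : E) : ℝ :=
  ∫ θ, exp (-weightedXray ν f x θ) ∂τ

variable [BorelSpace E] {τ : Measure E} [IsFiniteMeasure τ]

theorem integrable_exp_neg_weightedXray {f : E → ℝ} (hf : Continuous f) (hC : ∀ x, ‖f x‖ ≤ C)
    (x : E) : Integrable (fun θ => exp (-weightedXray ν f x θ)) τ :=
  .of_bound (continuous_weightedXray hf hC x).neg.rexp.aestronglyMeasurable _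
    (ae_of_all _ fun θ => (norm_of_nonneg (exp_pos _).le).trans_le (exp_neg_weightedXray_le hC x θ))

variable [SecondCountableTopology E]

theorem integrable_weightedXray (hf : Continuous f) (hC : ∀ x, ‖f x‖ ≤ C) (x : E) :
    Integrable (weightedXray ν f x) τ :=
  .of_bound (continuous_weightedXray hf hC x).aestronglyMeasurable _
    (ae_of_all _ (norm_weightedXray_le hC x))

theorem integral_weightedXray (hf : Continuous f) (hC : ∀ x, ‖f x‖ ≤ C) (x : E) :
    ∫ θ, weightedXray ν f x θ ∂τ = translateAverage (rayMeasure τ ν) f x := by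
  have hfx : Continuous fun y => f (x + y) := by fun_prop
  rw [translateAverage, rayMeasure, integral_map (by fun_prop) hfx.aestronglyMeasurable]
  have hfray : Continuous fun p : E × ℝ => f (x + p.2 • p.1) := by fun_prop
  exact (integral_prod _ (.of_bound hfray.aestronglyMeasurable C
    (ae_of_all _ fun _ => hC _))).symm

theorem integrable_exp_neg_weightedXray_smul {f : E → ℝ} (hf : Continuous f)
    (hC : ∀ x, ‖f x‖ ≤ C) (hg : Continuous g) (hC' : ∀ x, ‖g x‖ ≤ C') (x : E) :
    Integrable (fun θ => exp (-weightedXray ν f x θ) • -weightedXray ν g x θ) τ :=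
  (integrable_weightedXray hg hC' x).neg.bdd_smul _
    (continuous_weightedXray hf hC x).neg.rexp.aestronglyMeasurable
    (ae_of_all _ fun θ => (norm_of_nonneg (exp_pos _).le).trans_le (exp_neg_weightedXray_le hC x θ))

theorem hasFDerivAt_weightedPixel {f : E → ℝ} (hf : ContDiff ℝ 1 f)
    (hC : ∀ x, ‖f x‖ ≤ C) (hC' : ∀ x, ‖fderiv ℝ f x‖ ≤ C') (x : E) :
    HasFDerivAt (weightedPixel τ ν f)
      (∫ θ, exp (-weightedXray ν f x θ) • -weightedXray ν (fderiv ℝ f) x θ ∂τ) x := by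
  have hf' := hf.continuous_fderiv one_ne_zero
  refine hasFDerivAt_integral_of_dominated_of_fderiv_le
    (F := fun y θ => exp (-weightedXray ν f y θ))
    (F' := fun y θ => exp (-weightedXray ν f y θ) • -weightedXray ν (fderiv ℝ f) y θ)
    (bound := fun _ => exp (C * ν.real Set.univ) * (C' * ν.real Set.univ)) Filter.univ_mem
    (.of_forall fun y => (integrable_exp_neg_weightedXray (ν := ν) hf.continuous hC y).1)
    (integrable_exp_neg_weightedXray (ν := ν) hf.continuous hC x)
    (integrable_exp_neg_weightedXray_smul hf.continuous hC hf' hC' x).1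
    (ae_of_all _ fun θ y _ => ?_) (integrable_const _)
    (ae_of_all _ fun θ y _ => (hasFDerivAt_weightedXray hf hC hC' y θ).neg.exp)
  rw [norm_smul, norm_neg, norm_of_nonneg (exp_pos _).le]
  exact mul_le_mul (exp_neg_weightedXray_le hC y θ) (norm_weightedXray_le hC' y θ)
    (norm_nonneg _) (exp_pos _).le

end WeightedXray

section PointwiseEstimates

theorem abs_exp_sub_exp_le {a b m : ℝ} (ha : a ≤ m) (hb : b ≤ m) :
    |exp a - exp b| ≤ exp m * |a - b| := by
  wlog hab : b ≤ a generalizing a b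
  · rw [abs_sub_comm, abs_sub_comm a b]
    exact this hb ha (le_of_not_ge hab)
  rw [abs_of_nonneg (sub_nonneg.2 (exp_le_exp.2 hab)), abs_of_nonneg (sub_nonneg.2 hab)]
  calc exp a - exp b = exp a * (1 - exp (b - a)) := by
        rw [mul_sub, mul_one, ← exp_add, add_sub_cancel]
    _ ≤ exp a * (a - b) :=
        mul_le_mul_of_nonneg_left (by linarith [add_one_le_exp (b - a)]) (exp_pos a).le
    _ ≤ exp m * (a - b) := by gcongr

theorem abs_exp_sub_one_le_exp_sub_one {b m : ℝ} (hb : |b| ≤ m) : |exp b - 1| ≤ exp m - 1 := by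
  have hbm := exp_le_exp.2 (abs_le.1 hb).2
  exact abs_le.2 ⟨by linarith [add_one_le_exp m, add_one_le_exp b, (abs_le.1 hb).1],
    by linarith⟩

theorem norm_smul_neg_sub_smul_neg_add_sub_le {V : Type*} [SeminormedAddCommGroup V]
    [NormedSpace ℝ V] (a b : ℝ) (u v : V) :
    ‖a • -u - b • -v + (u - v)‖ ≤ |a - b| * ‖u‖ + |b - 1| * ‖u - v‖ := by
  have hsplit : a • -u - b • -v + (u - v) = -((a - b) • u) - (b - 1) • (u - v) := by module
  calc ‖a • -u - b • -v + (u - v)‖ ≤ ‖-((a - b) • u)‖ + ‖(b - 1) • (u - v)‖ :=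
        hsplit ▸ norm_sub_le _ _
    _ = |a - b| * ‖u‖ + |b - 1| * ‖u - v‖ := by
        rw [norm_neg, norm_smul, norm_smul, norm_eq_abs, norm_eq_abs]

variable {E : Type*} [NormedAddCommGroup E] [NormedSpace ℝ E] {ν : Measure ℝ}
  [IsFiniteMeasure ν] {f₁ f₂ : E → ℝ} {M M' : ℝ}

theorem abs_exp_neg_weightedXray_sub_le (h₁ : Continuous f₁) (hM₁ : ∀ x, ‖f₁ x‖ ≤ M)
    (h₂ : Continuous f₂) (hM₂ : ∀ x, ‖f₂ x‖ ≤ M) (x θ : E) :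
    |exp (-weightedXray ν f₁ x θ) - exp (-weightedXray ν f₂ x θ)|
      ≤ exp (M * ν.real Set.univ) * weightedXray ν (fun y => ‖f₁ y - f₂ y‖) x θ :=
  calc |exp (-weightedXray ν f₁ x θ) - exp (-weightedXray ν f₂ x θ)|
      ≤ exp (M * ν.real Set.univ) * |-weightedXray ν f₁ x θ - -weightedXray ν f₂ x θ| :=
        abs_exp_sub_exp_le ((neg_le_abs _).trans (norm_weightedXray_le hM₁ x θ))
          ((neg_le_abs _).trans (norm_weightedXray_le hM₂ x θ))
    _ = exp (M * ν.real Set.univ) * ‖weightedXray ν (fun y => f₁ y - f₂ y) x θ‖ := by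
        rw [neg_sub_neg, abs_sub_comm, weightedXray_sub h₁ hM₁ h₂ hM₂, norm_eq_abs]
    _ ≤ exp (M * ν.real Set.univ) * weightedXray ν (fun y => ‖f₁ y - f₂ y‖) x θ := by
        gcongr
        exact norm_integral_le_integral_norm _

theorem norm_exp_neg_weightedXray_smul_sub_add_le {F : Type*} [NormedAddCommGroup F]
    [NormedSpace ℝ F] (h₁ : Continuous f₁) (hM₁ : ∀ x, ‖f₁ x‖ ≤ M) (h₂ : Continuous f₂)
    (hM₂ : ∀ x, ‖f₂ x‖ ≤ M) {g₁ g₂ : E → F} (hg₁ : Continuous g₁) (hC₁ : ∀ x, ‖g₁ x‖ ≤ M)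
    (hg₂ : Continuous g₂) (hC₂ : ∀ x, ‖g₂ x‖ ≤ M') (x θ : E) :
    ‖exp (-weightedXray ν f₁ x θ) • -weightedXray ν g₁ x θ
        - exp (-weightedXray ν f₂ x θ) • -weightedXray ν g₂ x θ
        + weightedXray ν (fun y => g₁ y - g₂ y) x θ‖
      ≤ exp (M * ν.real Set.univ) * (M * ν.real Set.univ) *
          weightedXray ν (fun y => ‖f₁ y - f₂ y‖) x θ
        + (exp (M * ν.real Set.univ) - 1) * weightedXray ν (fun y => ‖g₁ y - g₂ y‖) x θ := by
  have hexp := abs_exp_neg_weightedXray_sub_le (ν := ν) h₁ hM₁ h₂ hM₂ x θ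
  have hexp_one : |exp (-weightedXray ν f₂ x θ) - 1| ≤ exp (M * ν.real Set.univ) - 1 :=
    abs_exp_sub_one_le_exp_sub_one ((abs_neg _).trans_le (norm_weightedXray_le hM₂ x θ))
  have hXg : ‖weightedXray ν g₁ x θ - weightedXray ν g₂ x θ‖
      ≤ weightedXray ν (fun y => ‖g₁ y - g₂ y‖) x θ := by
    rw [← weightedXray_sub hg₁ hC₁ hg₂ hC₂]
    exact norm_integral_le_integral_norm _
  rw [weightedXray_sub hg₁ hC₁ hg₂ hC₂, mul_right_comm]
  exact (norm_smul_neg_sub_smul_neg_add_sub_le _ _ _ _).trans (add_le_add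
    (mul_le_mul hexp (norm_weightedXray_le hC₁ x θ) (norm_nonneg _) ((abs_nonneg _).trans hexp))
    (mul_le_mul hexp_one hXg (norm_nonneg _) ((abs_nonneg _).trans hexp_one)))

variable [MeasurableSpace E] [BorelSpace E] [SecondCountableTopology E] {τ : Measure E}
  [IsFiniteMeasure τ]

theorem abs_weightedPixel_sub_le (h₁ : Continuous f₁) (hM₁ : ∀ x, ‖f₁ x‖ ≤ M)
    (h₂ : Continuous f₂) (hM₂ : ∀ x, ‖f₂ x‖ ≤ M) (x : E) :
    |weightedPixel τ ν f₁ x - weightedPixel τ ν f₂ x| ≤ exp (M * ν.real Set.univ) *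
      translateAverage (rayMeasure τ ν) (fun y => ‖f₁ y - f₂ y‖) x := by
  have hh : Continuous fun y => ‖f₁ y - f₂ y‖ := by fun_prop
  have hMh : ∀ y, ‖‖f₁ y - f₂ y‖‖ ≤ M + M := fun y =>
    (norm_norm _).trans_le (norm_sub_le_of_le (hM₁ y) (hM₂ y))
  rw [weightedPixel, weightedPixel, ← integral_sub (integrable_exp_neg_weightedXray h₁ hM₁ x)
    (integrable_exp_neg_weightedXray h₂ hM₂ x), ← integral_weightedXray hh hMh,
    ← integral_const_mul, ← norm_eq_abs]
  exact norm_integral_le_of_norm_le ((integrable_weightedXray hh hMh x).const_mul _)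
    (ae_of_all _ (abs_exp_neg_weightedXray_sub_le h₁ hM₁ h₂ hM₂ x))

theorem norm_fderiv_weightedPixel_sub_le (h₁ : ContDiff ℝ 1 f₁) (hM₁ : ∀ x, ‖f₁ x‖ ≤ M)
    (hM₁' : ∀ x, ‖fderiv ℝ f₁ x‖ ≤ M) (h₂ : ContDiff ℝ 1 f₂) (hM₂ : ∀ x, ‖f₂ x‖ ≤ M)
    (hM₂' : ∀ x, ‖fderiv ℝ f₂ x‖ ≤ M') (x : E) :
    ‖fderiv ℝ (weightedPixel τ ν f₁) x - fderiv ℝ (weightedPixel τ ν f₂) x‖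
      ≤ exp (M * ν.real Set.univ) * (M * ν.real Set.univ) *
          translateAverage (rayMeasure τ ν) (fun y => ‖f₁ y - f₂ y‖) x
        + (exp (M * ν.real Set.univ) - 1) *
          translateAverage (rayMeasure τ ν) (fun y => ‖fderiv ℝ f₁ y - fderiv ℝ f₂ y‖) x
        + ‖translateAverage (rayMeasure τ ν) (fun y => fderiv ℝ f₁ y - fderiv ℝ f₂ y) x‖ := by
  have hc₁ := h₁.continuous
  have hc₂ := h₂.continuous
  have hd₁ := h₁.continuous_fderiv one_ne_zero
  have hd₂ := h₂.continuous_fderiv one_ne_zero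
  have hh : Continuous fun y => f₁ y - f₂ y := by fun_prop
  have hh' : Continuous fun y => fderiv ℝ f₁ y - fderiv ℝ f₂ y := by fun_prop
  have hMh : ∀ y, ‖‖f₁ y - f₂ y‖‖ ≤ M + M := fun y =>
    (norm_norm _).trans_le (norm_sub_le_of_le (hM₁ y) (hM₂ y))
  have hMh' : ∀ y, ‖fderiv ℝ f₁ y - fderiv ℝ f₂ y‖ ≤ M + M' := fun y =>
    norm_sub_le_of_le (hM₁' y) (hM₂' y)
  have hMh'' : ∀ y, ‖‖fderiv ℝ f₁ y - fderiv ℝ f₂ y‖‖ ≤ M + M' := by simpa using hMh'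
  have hI₁ := integrable_exp_neg_weightedXray_smul (τ := τ) (ν := ν) hc₁ hM₁ hd₁ hM₁' x
  have hI₂ := integrable_exp_neg_weightedXray_smul (τ := τ) (ν := ν) hc₂ hM₂ hd₂ hM₂' x
  have hP := (integrable_weightedXray (τ := τ) (ν := ν) hh.norm hMh x).const_mul
    (exp (M * ν.real Set.univ) * (M * ν.real Set.univ))
  have hQ := (integrable_weightedXray (τ := τ) (ν := ν) hh'.norm hMh'' x).const_mul
    (exp (M * ν.real Set.univ) - 1)
  rw [(hasFDerivAt_weightedPixel h₁ hM₁ hM₁' x).fderiv,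
    (hasFDerivAt_weightedPixel h₂ hM₂ hM₂' x).fderiv]
  refine (norm_le_add_norm_add _
    (translateAverage (rayMeasure τ ν) (fun y => fderiv ℝ f₁ y - fderiv ℝ f₂ y) x)).trans
    (add_le_add_left ?_ _)
  rw [← integral_weightedXray hh' hMh', ← integral_weightedXray hh.norm hMh,
    ← integral_weightedXray hh'.norm hMh'', ← integral_const_mul, ← integral_const_mul,
    ← integral_add hP hQ, ← integral_sub' hI₁ hI₂,
    ← integral_add (hI₁.sub hI₂) (integrable_weightedXray hh' hMh' x)]
  exact norm_integral_le_of_norm_le (hP.add hQ) (ae_of_all _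
    (norm_exp_neg_weightedXray_smul_sub_add_le hc₁ hM₁ hc₂ hM₂ hd₁ hM₁' hd₂ hM₂' x))

end PointwiseEstimates

section SphereDecay

section toSphere

variable {E : Type*} [NormedAddCommGroup E] [NormedSpace ℝ E]

open scoped Pointwise in
theorem Ioo_smul_eq_normalize_preimage {s : Set E} (hs : s ⊆ sphere 0 1) :
    Set.Ioo (0 : ℝ) 1 • s = NormedSpace.normalize ⁻¹' s ∩ (ball 0 1 \ {0}) := by
  ext x
  simp only [Set.mem_smul, Set.mem_inter_iff, Set.mem_preimage, Set.mem_sdiff, mem_ball_zero_iff,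
    Set.mem_singleton_iff]
  constructor
  · rintro ⟨r, ⟨hr0, hr1⟩, θ, hθ, rfl⟩
    have hθ1 : ‖θ‖ = 1 := mem_sphere_zero_iff_norm.1 (hs hθ)
    rw [NormedSpace.normalize_smul_of_pos hr0, NormedSpace.normalize_eq_self_of_norm_eq_one hθ1,
      ← norm_eq_zero, norm_smul, hθ1, mul_one, norm_of_nonneg hr0.le]
    exact ⟨hθ, hr1, hr0.ne'⟩
  · rintro ⟨hxs, hx1, hx0⟩
    exact ⟨‖x‖, ⟨norm_pos_iff.2 hx0, hx1⟩, NormedSpace.normalize x, hxs,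
      NormedSpace.norm_smul_normalize x⟩

variable [MeasurableSpace E] [BorelSpace E]

theorem measurable_normalize : Measurable (NormedSpace.normalize : E → E) :=
  measurable_norm.inv.smul measurable_id

theorem map_coe_toSphere (μ : Measure E) :
    μ.toSphere.map (↑) = Module.finrank ℝ E •
      (μ.restrict (ball 0 1 \ {0})).map NormedSpace.normalize := by
  ext s hs
  have hsphere : NormedSpace.normalize ⁻¹' (sphere (0 : E) 1 ∩ s) ∩ (ball 0 1 \ {0})
      = NormedSpace.normalize ⁻¹' s ∩ (ball 0 1 \ {0}) := by
    ext x
    simp +contextual [NormedSpace.norm_normalize_eq_one_iff]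
  rw [Measure.map_apply measurable_subtype_coe hs,
    Measure.toSphere_apply' _ (measurable_subtype_coe hs), Subtype.image_preimage_coe,
    Ioo_smul_eq_normalize_preimage Set.inter_subset_left, hsphere, Measure.smul_apply,
    Measure.map_apply measurable_normalize hs, Measure.restrict_apply (measurable_normalize hs),
    nsmul_eq_mul]

theorem integral_toSphere_le {μ : Measure E} {f : E → ℝ} (hf : Measurable f) (hf0 : 0 ≤ f)
    (hint : IntegrableOn f (ball 0 1) μ) (hle : ∀ x ∈ ball 0 1, f (NormedSpace.normalize x) ≤ f x) :
    ∫ θ : sphere (0 : E) 1, f θ ∂μ.toSphere ≤ Module.finrank ℝ E * ∫ x in ball 0 1, f x ∂μ := by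
  have hball : MeasurableSet (ball (0 : E) 1 \ {0}) :=
    measurableSet_ball.diff (measurableSet_singleton 0)
  calc ∫ θ : sphere (0 : E) 1, f θ ∂μ.toSphere
      = ∫ x, f x ∂μ.toSphere.map (↑) :=
        (integral_map measurable_subtype_coe.aemeasurable hf.aestronglyMeasurable).symm
    _ = Module.finrank ℝ E * ∫ x in ball 0 1 \ {0}, f (NormedSpace.normalize x) ∂μ := by
        rw [map_coe_toSphere, ← Nat.cast_smul_eq_nsmul ℝ≥0∞, integral_smul_measure,
          ENNReal.toReal_natCast, smul_eq_mul,
          integral_map measurable_normalize.aemeasurable hf.aestronglyMeasurable]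
    _ ≤ Module.finrank ℝ E * ∫ x in ball 0 1 \ {0}, f x ∂μ := by
        refine mul_le_mul_of_nonneg_left ?_ (Nat.cast_nonneg _)
        exact integral_mono_of_nonneg (ae_of_all _ fun x => hf0 (NormedSpace.normalize x))
          (hint.mono_set Set.sdiff_subset)
          ((ae_restrict_iff' hball).2 (ae_of_all _ fun x hx => hle x hx.1))
    _ ≤ Module.finrank ℝ E * ∫ x in ball 0 1, f x ∂μ := by
        refine mul_le_mul_of_nonneg_left ?_ (Nat.cast_nonneg _)
        exact setIntegral_mono_set hint (ae_of_all _ hf0) Set.sdiff_subset.eventuallyLE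

end toSphere

theorem integral_inv_one_add_mul_sq (a : ℝ) : ∫ t : ℝ, (1 + (a * t) ^ 2)⁻¹ = |a|⁻¹ * π := by
  rw [Measure.integral_comp_mul_left (fun t : ℝ => (1 + t ^ 2)⁻¹), integral_univ_inv_one_add_sq,
    abs_inv, smul_eq_mul]

variable {E : Type*} [NormedAddCommGroup E] [InnerProductSpace ℝ E] [FiniteDimensional ℝ E]

theorem exists_orthonormalBasis_norm_smul_eq {ξ : E} (hξ : ξ ≠ 0) :
    ∃ (b : OrthonormalBasis (Fin (Module.finrank ℝ E)) ℝ E) (i : Fin (Module.finrank ℝ E)),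
      ‖ξ‖ • b i = ξ := by
  let i : Fin (Module.finrank ℝ E) := ⟨0, Module.finrank_pos_iff_exists_ne_zero.2 ⟨ξ, hξ⟩⟩
  have hunit : Orthonormal ℝ (({i} : Set _).domRestrict fun _ => NormedSpace.normalize ξ) :=
    ⟨fun _ => NormedSpace.norm_normalize_eq_one_iff.2 hξ,
      fun _ _ hne => absurd (Subsingleton.elim _ _) hne⟩
  obtain ⟨b, hb⟩ := hunit.exists_orthonormalBasis_extension_of_card_eq (by simp)
  exact ⟨b, i, by rw [hb i rfl, NormedSpace.norm_smul_normalize]⟩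

variable [MeasurableSpace E] [BorelSpace E]

theorem measurePreserving_orthonormalBasis_coord {ι : Type*} [Fintype ι]
    (b : OrthonormalBasis ι ℝ E) :
    MeasurePreserving (fun x i => inner ℝ (b i) x) volume volume := by
  have h := (EuclideanSpace.volume_preserving_symm_measurableEquiv_toLp ι).comp
    b.measurePreserving_repr
  convert! h using 1
  exact funext fun x => funext fun i => (b.repr_apply_apply x i).symm

theorem integrable_prod_inner {ι : Type*} [Fintype ι] (b : OrthonormalBasis ι ℝ E)
    {φ : ι → ℝ → ℝ} (hφ : ∀ j, Integrable (φ j)) :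
    Integrable fun x => ∏ j, φ j (inner ℝ (b j) x) :=
  (measurePreserving_orthonormalBasis_coord b).integrable_comp_of_integrable (.fintype_prod hφ)

theorem integral_prod_inner {ι : Type*} [Fintype ι] (b : OrthonormalBasis ι ℝ E)
    {φ : ι → ℝ → ℝ} (hφ : ∀ j, Integrable (φ j)) :
    ∫ x, ∏ j, φ j (inner ℝ (b j) x) = ∏ j, ∫ t, φ j t := by
  have hcoord := measurePreserving_orthonormalBasis_coord b
  have hint : Integrable fun t : ι → ℝ => ∏ j, φ j (t j) := .fintype_prod hφ
  rw [← integral_fintype_prod_volume_eq_prod, ← hcoord.map_eq,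
    integral_map hcoord.aemeasurable (hcoord.map_eq ▸ hint.aestronglyMeasurable)]

theorem setIntegral_ball_comp_inner_le {ι : Type*} [Fintype ι] (b : OrthonormalBasis ι ℝ E)
    (i : ι) {g : ℝ → ℝ} (hg : Integrable g) (hg0 : ∀ t, 0 ≤ g t) :
    ∫ x in ball (0 : E) 1, g (inner ℝ (b i) x) ≤ 2 ^ (Fintype.card ι - 1) * ∫ t, g t := by
  classical
  let χ : ℝ → ℝ := (Set.Icc (-1) 1).indicator 1
  have hχ : Integrable χ :=
    (integrable_indicator_iff measurableSet_Icc).2 (integrableOn_const (by simp))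
  let φ : ι → ℝ → ℝ := fun j => if j = i then g else χ
  have hφi : φ i = g := if_pos rfl
  have hφne : ∀ j ∈ ({i}ᶜ : Finset ι), φ j = χ := fun j hj => if_neg (by simpa using hj)
  have hφ : ∀ j, Integrable (φ j) := fun j => by
    dsimp only [φ]
    split_ifs
    exacts [hg, hχ]
  have hφ0 : ∀ j t, 0 ≤ φ j t := fun j t => by
    dsimp only [φ]
    split_ifs
    exacts [hg0 t, Set.indicator_nonneg (fun _ _ => zero_le_one) t]
  have hball : ∀ x ∈ ball (0 : E) 1, g (inner ℝ (b i) x) = ∏ j, φ j (inner ℝ (b j) x) :=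
      fun x hx => by
    have hcoord : ∀ j, inner ℝ (b j) x ∈ Set.Icc (-1 : ℝ) 1 := fun j => abs_le.1 <| by
      simpa using (abs_real_inner_le_norm (b j) x).trans
        (by simpa using (mem_ball_zero_iff.1 hx).le)
    rw [Fintype.prod_eq_mul_prod_compl i, hφi, Finset.prod_eq_one, mul_one]
    intro j hj
    rw [hφne j hj]
    exact Set.indicator_of_mem (hcoord j) 1
  calc ∫ x in ball (0 : E) 1, g (inner ℝ (b i) x)
      = ∫ x in ball (0 : E) 1, ∏ j, φ j (inner ℝ (b j) x) :=
        setIntegral_congr_fun measurableSet_ball hball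
    _ ≤ ∫ x, ∏ j, φ j (inner ℝ (b j) x) :=
        setIntegral_le_integral (integrable_prod_inner b hφ)
          (ae_of_all _ fun x => Finset.prod_nonneg fun j _ => hφ0 j _)
    _ = 2 ^ (Fintype.card ι - 1) * ∫ t, g t := by
        rw [integral_prod_inner b hφ, Fintype.prod_eq_mul_prod_compl i, hφi, mul_comm,
          Finset.prod_congr rfl fun j hj => by
            rw [hφne j hj, integral_indicator_one measurableSet_Icc]]
        norm_num [Finset.card_compl]

theorem setIntegral_ball_inv_one_add_inner_sq_le {ξ : E} (hξ : ξ ≠ 0) :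
    ∫ x in ball (0 : E) 1, (1 + inner ℝ x ξ ^ 2)⁻¹ ≤
      2 ^ (Module.finrank ℝ E - 1) * (‖ξ‖⁻¹ * π) := by
  obtain ⟨b, i, hb⟩ := exists_orthonormalBasis_norm_smul_eq hξ
  have hinner : ∀ x, inner ℝ x ξ = ‖ξ‖ * inner ℝ (b i) x := fun x => by
    rw [← real_inner_smul_left, hb, real_inner_comm]
  have hball := setIntegral_ball_comp_inner_le b i (g := fun t => (1 + (‖ξ‖ * t) ^ 2)⁻¹)
    (integrable_inv_one_add_sq.comp_mul_left' (norm_ne_zero_iff.2 hξ)) fun t => by positivity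
  simpa only [hinner, integral_inv_one_add_mul_sq, abs_norm, Fintype.card_fin] using hball

theorem norm_mul_integral_toSphere_inv_one_add_inner_sq_le (ξ : E) :
    ‖ξ‖ * ∫ θ : sphere (0 : E) 1, (1 + inner ℝ (θ : E) ξ ^ 2)⁻¹ ∂volume.toSphere ≤
      Module.finrank ℝ E * (2 ^ (Module.finrank ℝ E - 1) * π) := by
  rcases eq_or_ne ξ 0 with rfl | hξ
  · rw [norm_zero, zero_mul]
    positivity
  have hcont : Continuous fun x : E => (1 + inner ℝ x ξ ^ 2)⁻¹ :=
    Continuous.inv₀ (by fun_prop) fun x => by positivity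
  have hnormalize : ∀ x ∈ ball (0 : E) 1,
      (1 + inner ℝ (NormedSpace.normalize x) ξ ^ 2)⁻¹ ≤ (1 + inner ℝ x ξ ^ 2)⁻¹ := fun x hx => by
    have hx1 : ‖x‖ ^ 2 ≤ 1 := pow_le_one₀ (norm_nonneg x) (mem_ball_zero_iff.1 hx).le
    conv_rhs => rw [← NormedSpace.norm_smul_normalize x, real_inner_smul_left, mul_pow]
    gcongr
    exact mul_le_of_le_one_left (sq_nonneg _) hx1
  have hsphere := integral_toSphere_le hcont.measurable (fun x => by positivity)
    ((hcont.continuousOn.integrableOn_compact (μ := volume)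
      (isCompact_closedBall 0 1)).mono_set ball_subset_closedBall) hnormalize
  calc _ ≤ ‖ξ‖ * (Module.finrank ℝ E * (2 ^ (Module.finrank ℝ E - 1) * (‖ξ‖⁻¹ * π))) := by
        gcongr
        exact hsphere.trans (mul_le_mul_of_nonneg_left
          (setIntegral_ball_inv_one_add_inner_sq_le hξ) (Nat.cast_nonneg _))
    _ = _ := by field_simp [norm_ne_zero_iff.2 hξ]

end SphereDecay

section RaySymbol

variable {E : Type*} [NormedAddCommGroup E] [InnerProductSpace ℝ E] [MeasurableSpace E]
  [BorelSpace E] [SecondCountableTopology E] {ν : Measure ℝ} [IsFiniteMeasure ν]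

theorem charFun_rayMeasure (τ : Measure E) [IsFiniteMeasure τ] (ξ : E) :
    charFun (rayMeasure τ ν) ξ = ∫ θ, charFun ν (inner ℝ θ ξ) ∂τ := by
  have hexp : Continuous fun x : E => Complex.exp (inner ℝ x ξ * Complex.I) := by fun_prop
  have hray : Continuous fun p : E × ℝ => Complex.exp (inner ℝ (p.2 • p.1) ξ * Complex.I) := by
    fun_prop
  rw [charFun_apply, rayMeasure, integral_map (by fun_prop) hexp.aestronglyMeasurable,
    integral_prod _ (.of_bound hray.aestronglyMeasurable 1
      (ae_of_all _ fun p => (Complex.norm_exp_ofReal_mul_I _).le))]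
  simp only [charFun_apply_real, real_inner_smul_left, Complex.ofReal_mul, mul_comm]

end RaySymbol

section SphereDirections

variable {E : Type*} [NormedAddCommGroup E] [InnerProductSpace ℝ E] [FiniteDimensional ℝ E]
  [MeasurableSpace E] [BorelSpace E] {ν : Measure ℝ} [IsFiniteMeasure ν]

/-- The surface measure of the unit sphere, viewed as a measure on the ambient space so that it can
serve as the distribution of directions of `rayMeasure` and `weightedPixel`. -/
noncomputable def sphereDirections (E : Type*) [NormedAddCommGroup E] [InnerProductSpace ℝ E]
    [FiniteDimensional ℝ E] [MeasurableSpace E] [BorelSpace E] : Measure E :=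
  (volume : Measure E).toSphere.map (↑)

instance : IsFiniteMeasure (sphereDirections E) :=
  Measure.isFiniteMeasure_map _ _

theorem integral_sphereDirections {F : Type*} [NormedAddCommGroup F] [NormedSpace ℝ F] {f : E → F}
    (hf : Continuous f) :
    ∫ θ, f θ ∂sphereDirections E = ∫ θ : sphere (0 : E) 1, f θ ∂volume.toSphere :=
  integral_map measurable_subtype_coe.aemeasurable hf.aestronglyMeasurable

theorem norm_mul_norm_charFun_rayMeasure_sphereDirections_le {A : ℝ}
    (hν : ∀ t, ‖charFun ν t‖ ≤ A * (1 + t ^ 2)⁻¹) (ξ : E) :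
    ‖ξ‖ * ‖charFun (rayMeasure (sphereDirections E) ν) ξ‖ ≤
      A * (Module.finrank ℝ E * (2 ^ (Module.finrank ℝ E - 1) * π)) := by
  have hA : 0 ≤ A := by simpa using (norm_nonneg _).trans (hν 0)
  have hcont : Continuous fun θ : E => (1 + inner ℝ θ ξ ^ 2)⁻¹ :=
    Continuous.inv₀ (by fun_prop) fun θ => by positivity
  have hint : Integrable (fun θ : E => A * (1 + inner ℝ θ ξ ^ 2)⁻¹) (sphereDirections E) :=
    .of_bound (hcont.const_mul A).aestronglyMeasurable A (ae_of_all _ fun θ => by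
      rw [norm_of_nonneg (by positivity)]
      exact mul_le_of_le_one_right hA
        (inv_le_one_of_one_le₀ (le_add_of_nonneg_right (sq_nonneg _))))
  calc ‖ξ‖ * ‖charFun (rayMeasure (sphereDirections E) ν) ξ‖
      ≤ ‖ξ‖ * ∫ θ, A * (1 + inner ℝ θ ξ ^ 2)⁻¹ ∂sphereDirections E := by
        rw [charFun_rayMeasure]
        gcongr
        exact norm_integral_le_of_norm_le hint (ae_of_all _ fun θ => hν _)
    _ = A * (‖ξ‖ * ∫ θ : sphere (0 : E) 1, (1 + inner ℝ (θ : E) ξ ^ 2)⁻¹ ∂volume.toSphere) := by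
        rw [integral_const_mul, integral_sphereDirections hcont, mul_left_comm]
    _ ≤ A * (Module.finrank ℝ E * (2 ^ (Module.finrank ℝ E - 1) * π)) :=
        mul_le_mul_of_nonneg_left (norm_mul_integral_toSphere_inv_one_add_inner_sq_le ξ) hA

end SphereDirections

section SquareIntegral

variable {α F : Type*} [MeasurableSpace α] {μ : Measure α} [NormedAddCommGroup F]

theorem lpNorm_two_eq_integral_sq_norm_rpow {f : α → F} (hf : AEStronglyMeasurable f μ) :
    lpNorm f 2 μ = (∫ x, ‖f x‖ ^ 2 ∂μ) ^ ((1 : ℝ) / 2) := by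
  simp [lpNorm_eq_integral_norm_rpow_toReal two_ne_zero ENNReal.ofNat_ne_top hf]

theorem setIntegral_sq_norm_rpow_le_lpNorm {u : α → F} {g : α → ℝ} (hg : MemLp g 2 μ)
    (hug : ∀ x, ‖u x‖ ≤ g x) (U : Set α) :
    (∫ x in U, ‖u x‖ ^ 2 ∂μ) ^ ((1 : ℝ) / 2) ≤ lpNorm g 2 μ := by
  rw [lpNorm_two_eq_integral_sq_norm_rpow hg.1]
  refine rpow_le_rpow (integral_nonneg fun x => by positivity) ?_ one_half_pos.le
  have hint : Integrable (fun x => ‖g x‖ ^ 2) μ := hg.norm.integrable_sq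
  calc ∫ x in U, ‖u x‖ ^ 2 ∂μ
      ≤ ∫ x in U, ‖g x‖ ^ 2 ∂μ :=
        integral_mono_of_nonneg (ae_of_all _ fun x => by positivity) hint.integrableOn
          (ae_of_all _ fun x => pow_le_pow_left₀ (norm_nonneg _)
            ((hug x).trans (le_norm_self (g x))) 2)
    _ ≤ ∫ x, ‖g x‖ ^ 2 ∂μ := setIntegral_le_integral hint (ae_of_all _ fun x => by positivity)

end SquareIntegral

theorem norm_le_and_norm_fderiv_le_of_iSup_add_iSup_le {E F : Type*} [NormedAddCommGroup E]
    [NormedSpace ℝ E] [NormedAddCommGroup F] [NormedSpace ℝ F] {f : E → F} {M : ℝ}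
    (hf : ContDiff ℝ 1 f) (hs : HasCompactSupport f)
    (hM : (⨆ x, ‖f x‖) + (⨆ x, ‖fderiv ℝ f x‖) ≤ M) :
    (∀ x, ‖f x‖ ≤ M) ∧ ∀ x, ‖fderiv ℝ f x‖ ≤ M := by
  obtain ⟨C, hC⟩ := hf.continuous.bounded_above_of_compact_support hs
  obtain ⟨C', hC'⟩ := (hf.continuous_fderiv one_ne_zero).bounded_above_of_compact_support
    (hs.fderiv ℝ)
  have hvalue : ∀ x, ‖f x‖ ≤ ⨆ x, ‖f x‖ := le_ciSup ⟨C, Set.forall_mem_range.2 hC⟩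
  have hgrad : ∀ x, ‖fderiv ℝ f x‖ ≤ ⨆ x, ‖fderiv ℝ f x‖ :=
    le_ciSup ⟨C', Set.forall_mem_range.2 hC'⟩
  exact ⟨fun x => by linarith [hvalue x, (norm_nonneg _).trans (hgrad x)],
    fun x => by linarith [hgrad x, (norm_nonneg _).trans (hvalue x)]⟩

section SobolevEstimates

variable {E : Type*} [NormedAddCommGroup E] [InnerProductSpace ℝ E]

theorem norm_le_sum_abs_apply_orthonormalBasis {ι : Type*} [Fintype ι] (b : OrthonormalBasis ι ℝ E)
    (L : E →L[ℝ] ℝ) : ‖L‖ ≤ ∑ i, |L (b i)| := by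
  refine abs_le_of_sq_le_sq' ?_ (Finset.sum_nonneg fun i _ => abs_nonneg _) |>.2
  rw [b.norm_dual]
  simpa only [sq_abs] using Finset.sum_sq_le_sq_sum_of_nonneg fun i _ => abs_nonneg (L (b i))

variable [FiniteDimensional ℝ E] [MeasurableSpace E] [BorelSpace E]

theorem lpNorm_translateAverage_fderiv_le {σ : Measure E} [IsFiniteMeasure σ] {D : ℝ}
    (hD : ∀ ξ, ‖ξ‖ * ‖charFun σ ξ‖ ≤ D) {h : E → ℝ} (hh : ContDiff ℝ 1 h)
    (hs : HasCompactSupport h) :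
    lpNorm (translateAverage σ (fderiv ℝ h)) 2 volume
      ≤ Module.finrank ℝ E * D * lpNorm h 2 volume := by
  let b := stdOrthonormalBasis ℝ E
  have hdc := hh.continuous_fderiv one_ne_zero
  let g := fun i => translateAverage σ fun y => fderiv ℝ h y (b i)
  have hg : ∀ i, MemLp (g i) 2 := fun i => memLp_translateAverage one_le_two ENNReal.ofNat_ne_top
    (Continuous.memLp_of_hasCompactSupport (by fun_prop) (hs.fderiv_apply ℝ (b i)))
  have hbound : ∀ x, ‖translateAverage σ (fderiv ℝ h) x‖ ≤ (∑ i, fun x => |g i x|) x := fun x => by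
    obtain ⟨C, hC⟩ := hdc.bounded_above_of_compact_support (hs.fderiv ℝ)
    have hint : Integrable (fun y => fderiv ℝ h (x + y)) σ :=
      .of_bound (hdc.comp (by fun_prop)).aestronglyMeasurable C (ae_of_all _ fun y => hC _)
    simpa only [Finset.sum_apply, g, translateAverage, ContinuousLinearMap.integral_apply hint]
      using norm_le_sum_abs_apply_orthonormalBasis b (translateAverage σ (fderiv ℝ h) x)
  calc lpNorm (translateAverage σ (fderiv ℝ h)) 2 volume
      ≤ lpNorm (∑ i, fun x => |g i x|) 2 volume :=
        lpNorm_mono_real (memLp_finsetSum' _ fun i _ => (hg i).abs) hbound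
    _ ≤ ∑ i, lpNorm (fun x => |g i x|) 2 volume :=
        lpNorm_sum_le (fun i _ => (hg i).abs) one_le_two
    _ = ∑ i, lpNorm (g i) 2 volume :=
        Finset.sum_congr rfl fun i _ => lpNorm_fun_abs (hg i).1 2
    _ ≤ ∑ i, ‖b i‖ * D * lpNorm h 2 volume := Finset.sum_le_sum fun i _ =>
        lpNorm_translateAverage_fderiv_apply_le_real hD hh hs (b i)
    _ = Module.finrank ℝ E * D * lpNorm h 2 volume := by simp [mul_assoc]

theorem lpNorm_const_mul_translateAverage_norm_le {F : Type*} [NormedAddCommGroup F]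
    {σ : Measure E} [IsFiniteMeasure σ] {a : ℝ} (ha : 0 ≤ a) {h : E → F} (hh : MemLp h 2) :
    lpNorm (fun x => a * translateAverage σ (fun y => ‖h y‖) x) 2 volume
      ≤ a * (σ.real Set.univ * lpNorm h 2 volume) := by
  have hsmul := lpNorm_const_smul (p := 2) a (translateAverage σ fun y => ‖h y‖) volume
  rw [coe_nnnorm, norm_of_nonneg ha] at hsmul
  refine hsmul.trans_le (mul_le_mul_of_nonneg_left ?_ ha)
  simpa only [lpNorm_norm hh.1] using
    lpNorm_translateAverage_le (σ := σ) one_le_two ENNReal.ofNat_ne_top hh.norm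

/-- A pointwise majorant for the gradient of a difference of `weightedPixel`s: here `h` is the
difference of the arguments, and only the last term, in which the norm is taken after averaging,
comes without a small coefficient. -/
noncomputable def gradientMajorant (σ : Measure E) (a b : ℝ) (h : E → ℝ) (x : E) : ℝ :=
  a * translateAverage σ (fun y => ‖h y‖) x + b * translateAverage σ (fun y => ‖fderiv ℝ h y‖) x
    + ‖translateAverage σ (fderiv ℝ h) x‖

theorem memLp_gradientMajorant {σ : Measure E} [IsFiniteMeasure σ] {h : E → ℝ}
    (hLp : MemLp h 2) (hLp' : MemLp (fderiv ℝ h) 2) (a b : ℝ) :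
    MemLp (gradientMajorant σ a b h) 2 := by
  have hT : MemLp (translateAverage σ fun y => ‖h y‖) 2 :=
    memLp_translateAverage one_le_two ENNReal.ofNat_ne_top hLp.norm
  have hT' : MemLp (translateAverage σ fun y => ‖fderiv ℝ h y‖) 2 :=
    memLp_translateAverage one_le_two ENNReal.ofNat_ne_top hLp'.norm
  exact ((hT.const_mul a).add (hT'.const_mul b)).add
    (memLp_translateAverage one_le_two ENNReal.ofNat_ne_top hLp').norm

theorem lpNorm_gradientMajorant_le {σ : Measure E} [IsFiniteMeasure σ] {D : ℝ}
    (hD : ∀ ξ, ‖ξ‖ * ‖charFun σ ξ‖ ≤ D) {h : E → ℝ} (hh : ContDiff ℝ 1 h)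
    (hs : HasCompactSupport h) {a b : ℝ} (ha : 0 ≤ a) (hb : 0 ≤ b) :
    lpNorm (gradientMajorant σ a b h) 2 volume ≤
      (a * σ.real Set.univ + Module.finrank ℝ E * D) * lpNorm h 2 volume
        + b * σ.real Set.univ * lpNorm (fderiv ℝ h) 2 volume := by
  have hLp : MemLp h 2 := hh.continuous.memLp_of_hasCompactSupport hs
  have hLp' : MemLp (fderiv ℝ h) 2 :=
    (hh.continuous_fderiv one_ne_zero).memLp_of_hasCompactSupport (hs.fderiv ℝ)
  let u := fun x => a * translateAverage σ (fun y => ‖h y‖) x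
  let v := fun x => b * translateAverage σ (fun y => ‖fderiv ℝ h y‖) x
  have hu : MemLp u 2 :=
    (memLp_translateAverage one_le_two ENNReal.ofNat_ne_top hLp.norm).const_mul a
  have hv : MemLp v 2 :=
    (memLp_translateAverage one_le_two ENNReal.ofNat_ne_top hLp'.norm).const_mul b
  have hw : MemLp (translateAverage σ (fderiv ℝ h)) 2 :=
    memLp_translateAverage one_le_two ENNReal.ofNat_ne_top hLp'
  calc lpNorm (gradientMajorant σ a b h) 2 volume
      ≤ lpNorm (u + v) 2 volume + lpNorm (fun x => ‖translateAverage σ (fderiv ℝ h) x‖) 2 volume :=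
        lpNorm_add_le (hu.add hv) one_le_two
    _ ≤ lpNorm u 2 volume + lpNorm v 2 volume
          + lpNorm (translateAverage σ (fderiv ℝ h)) 2 volume :=
        add_le_add (lpNorm_add_le hu one_le_two) (lpNorm_norm hw.1 _).le
    _ ≤ a * (σ.real Set.univ * lpNorm h 2 volume)
          + b * (σ.real Set.univ * lpNorm (fderiv ℝ h) 2 volume)
          + Module.finrank ℝ E * D * lpNorm h 2 volume :=
        add_le_add (add_le_add (lpNorm_const_mul_translateAverage_norm_le ha hLp)
          (lpNorm_const_mul_translateAverage_norm_le hb hLp'))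
          (lpNorm_translateAverage_fderiv_le hD hh hs)
    _ = _ := by ring

end SobolevEstimates

section SinglePixel

variable {n : ℕ}

theorem L2norm_eq_lpNorm {f : Euc n → ℝ} (hf : AEStronglyMeasurable f) :
    L2norm f = lpNorm f 2 volume := by
  simp only [lpNorm_two_eq_integral_sq_norm_rpow hf, L2norm, norm_eq_abs, sq_abs]

theorem H1norm_congr {U V : Set (Euc n)} (hV : IsOpen V) (hUV : U ⊆ V) {u v : Euc n → ℝ}
    (huv : Set.EqOn u v V) : H1norm U u = H1norm U v := by
  have hae : ∀ᵐ x ∂volume.restrict U, x ∈ V :=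
    ae_restrict_of_ae_restrict_of_subset hUV (ae_restrict_mem hV.measurableSet)
  rw [H1norm, H1norm]
  congr 2
  · exact integral_congr_ae (hae.mono fun x hx => congrArg (· ^ 2) (huv hx))
  · exact integral_congr_ae (hae.mono fun x hx => congrArg (‖·‖ ^ 2)
      (huv.eventuallyEq_of_mem (hV.mem_nhds hx)).fderiv_eq)

theorem H1norm_le_lpNorm_add_lpNorm {u g g' : Euc n → ℝ} (hg : MemLp g 2) (hu : ∀ x, |u x| ≤ g x)
    (hg' : MemLp g' 2) (hu' : ∀ x, ‖fderiv ℝ u x‖ ≤ g' x) (U : Set (Euc n)) :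
    H1norm U u ≤ lpNorm g 2 volume + lpNorm g' 2 volume := by
  have hvalue := setIntegral_sq_norm_rpow_le_lpNorm (u := u) hg hu U
  simp only [norm_eq_abs, sq_abs] at hvalue
  exact add_le_add hvalue (setIntegral_sq_norm_rpow_le_lpNorm hg' hu' U)

theorem H1norm_weightedPixel_sub_le {τ : Measure (Euc n)} [IsFiniteMeasure τ] {ν : Measure ℝ}
    [IsFiniteMeasure ν] {D : ℝ} (hD : ∀ ξ, ‖ξ‖ * ‖charFun (rayMeasure τ ν) ξ‖ ≤ D)
    {f₁ f₂ : Euc n → ℝ} {M : ℝ}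
    (h₁ : ContDiff ℝ 1 f₁) (hs₁ : HasCompactSupport f₁) (hM₁ : ∀ x, ‖f₁ x‖ ≤ M)
    (hM₁' : ∀ x, ‖fderiv ℝ f₁ x‖ ≤ M) (h₂ : ContDiff ℝ 1 f₂) (hs₂ : HasCompactSupport f₂)
    (hM₂ : ∀ x, ‖f₂ x‖ ≤ M) (U : Set (Euc n)) :
    H1norm U (fun x => weightedPixel τ ν f₁ x - weightedPixel τ ν f₂ x) ≤
      (exp (M * ν.real Set.univ) * (1 + M * ν.real Set.univ) * (rayMeasure τ ν).real Set.univ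
          + n * D) * lpNorm (fun x => f₁ x - f₂ x) 2 volume
        + (exp (M * ν.real Set.univ) - 1) * (rayMeasure τ ν).real Set.univ
          * lpNorm (fderiv ℝ fun x => f₁ x - f₂ x) 2 volume := by
  let h := fun x => f₁ x - f₂ x
  let m := M * ν.real Set.univ
  have hm : 0 ≤ m := mul_nonneg ((norm_nonneg _).trans (hM₁ 0)) measureReal_nonneg
  have hh : ContDiff ℝ 1 h := h₁.sub h₂
  have hs : HasCompactSupport h := hs₁.sub hs₂
  have hLp : MemLp h 2 := hh.continuous.memLp_of_hasCompactSupport hs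
  have hLp' : MemLp (fderiv ℝ h) 2 :=
    (hh.continuous_fderiv one_ne_zero).memLp_of_hasCompactSupport (hs.fderiv ℝ)
  have hT : MemLp (translateAverage (rayMeasure τ ν) fun y => ‖h y‖) 2 :=
    memLp_translateAverage one_le_two ENNReal.ofNat_ne_top hLp.norm
  have hGle := lpNorm_gradientMajorant_le hD hh hs
    (mul_nonneg (exp_pos m).le hm) (sub_nonneg.2 (one_le_exp hm))
  obtain ⟨M', hM₂'⟩ := (h₂.continuous_fderiv one_ne_zero).bounded_above_of_compact_support
    (hs₂.fderiv ℝ)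
  have hdK : ∀ x, ‖fderiv ℝ (fun x => weightedPixel τ ν f₁ x - weightedPixel τ ν f₂ x) x‖ ≤
      gradientMajorant (rayMeasure τ ν) (exp m * m) (exp m - 1) h x := fun x => by
    have hdh : fderiv ℝ h = fun y => fderiv ℝ f₁ y - fderiv ℝ f₂ y := funext fun y =>
      fderiv_fun_sub (h₁.differentiable one_ne_zero y) (h₂.differentiable one_ne_zero y)
    rw [fderiv_fun_sub (hasFDerivAt_weightedPixel h₁ hM₁ hM₁' x).differentiableAt
      (hasFDerivAt_weightedPixel h₂ hM₂ hM₂' x).differentiableAt, gradientMajorant, hdh]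
    exact norm_fderiv_weightedPixel_sub_le h₁ hM₁ hM₁' h₂ hM₂ hM₂' x
  have hH := H1norm_le_lpNorm_add_lpNorm (hT.const_mul (exp m))
    (abs_weightedPixel_sub_le h₁.continuous hM₁ h₂.continuous hM₂)
    (memLp_gradientMajorant hLp hLp' _ _) hdK U
  have hTle := lpNorm_const_mul_translateAverage_norm_le (σ := rayMeasure τ ν) (exp_pos m).le hLp
  rw [finrank_euclideanSpace_fin] at hGle
  linarith

theorem singlePixel_eq_weightedPixel {ν : Measure ℝ} [IsFiniteMeasure ν] {R : ℝ}
    (hν : ν.restrict (Set.Icc (-(2 * R)) (2 * R)) = volume.restrict (Set.Icc (-(2 * R)) (2 * R)))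
    {f : Euc n → ℝ} (hf : Continuous f) (hfR : Function.support f ⊆ ball 0 R)
    {x : Euc n} (hx : x ∈ ball 0 R) :
    singlePixel f x = weightedPixel (sphereDirections (Euc n)) ν f x := by
  obtain ⟨C, hC⟩ := hf.bounded_above_of_compact_support
    (.of_support_subset_isCompact (isCompact_closedBall 0 R)
      (hfR.trans ball_subset_closedBall))
  rw [weightedPixel, integral_sphereDirections (f := fun θ => exp (-weightedXray ν f x θ))
    (continuous_weightedXray hf hC x).neg.rexp]
  refine integral_congr_ae (ae_of_all _ fun θ => congrArg (fun t => exp (-t)) ?_)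
  have hvanish : ∀ s ∉ Set.Icc (-(2 * R)) (2 * R), f (x + s • (θ : Euc n)) = 0 := fun s hs => by
    contrapose! hs
    have hs' : ‖s • (θ : Euc n)‖ ≤ ‖x + s • (θ : Euc n)‖ + ‖x‖ := by
      simpa using norm_sub_le (x + s • (θ : Euc n)) x
    rw [norm_smul, norm_eq_of_mem_sphere, mul_one, norm_eq_abs] at hs'
    exact abs_le.1 (by linarith [mem_ball_zero_iff.1 (hfR hs), mem_ball_zero_iff.1 hx])
  rw [Xray, weightedXray, ← setIntegral_eq_integral_of_forall_compl_eq_zero hvanish, ← hν,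
    setIntegral_eq_integral_of_forall_compl_eq_zero hvanish]

theorem exists_stability_constant {c B N : ℝ} (hc : 0 ≤ c) (hB : 0 ≤ B) (hN : 0 ≤ N) :
    ∃ C > 0, ∀ M ≥ 0,
      exp (M * c) * (1 + M * c) * B + N ≤ C * (1 + exp (C * M) + M * exp (C * M)) ∧
      (exp (M * c) - 1) * B ≤ C * (exp (C * M) - 1) := by
  have hcB : 0 ≤ c * B := mul_nonneg hc hB
  obtain ⟨C, hC⟩ : ∃ C, C = 1 + c + B + c * B + N := ⟨_, rfl⟩
  have hC0 : 0 < C := hC ▸ by positivity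
  refine ⟨C, hC0, fun M hM => ?_⟩
  have hexp : exp (M * c) ≤ exp (C * M) := by
    rw [mul_comm M c]
    gcongr
    linarith
  constructor
  · calc exp (M * c) * (1 + M * c) * B + N
        = N + B * exp (M * c) + c * B * (M * exp (M * c)) := by ring
      _ ≤ C + C * exp (C * M) + C * (M * exp (C * M)) := by
          gcongr <;> linarith
      _ = C * (1 + exp (C * M) + M * exp (C * M)) := by ring
  · rw [mul_comm]
    exact mul_le_mul (by linarith) (by linarith) (sub_nonneg.2 (one_le_exp (by positivity))) hC0.le

theorem singlePixel_lipschitz_stability_general {K U : Set (Euc n)} (hK : Bornology.IsBounded K)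
    (hU : Bornology.IsBounded U) :
    ∃ C > 0, ∀ (M : ℝ) (f₁ f₂ : Euc n → ℝ), ContDiff ℝ 1 f₁ → ContDiff ℝ 1 f₂ →
      Function.support f₁ ⊆ K → Function.support f₂ ⊆ K → (∀ x, |f₁ x| ≤ M) →
      (∀ x, ‖fderiv ℝ f₁ x‖ ≤ M) → (∀ x, |f₂ x| ≤ M) →
      H1norm U (fun x => singlePixel f₁ x - singlePixel f₂ x) ≤
        C * (1 + exp (C * M) + M * exp (C * M)) * L2norm (fun y => f₁ y - f₂ y) +
          C * (exp (C * M) - 1) *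
            (∫ x, ‖fderiv ℝ (fun y => f₁ y - f₂ y) x‖ ^ 2) ^ ((1 : ℝ) / 2) := by
  obtain ⟨R, hR⟩ := (hK.union hU).subset_ball 0
  obtain ⟨hKR, hUR⟩ := Set.union_subset_iff.1 hR
  obtain ⟨ν, _, hν, A, hcharFun⟩ := exists_cutoff_measure (2 * R)
  have hD := norm_mul_norm_charFun_rayMeasure_sphereDirections_le (E := Euc n) hcharFun
  obtain ⟨C, hC, hconst⟩ := exists_stability_constant (c := ν.real Set.univ)
    (B := (rayMeasure (sphereDirections (Euc n)) ν).real Set.univ) measureReal_nonneg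
    measureReal_nonneg (mul_nonneg n.cast_nonneg
      ((mul_nonneg (norm_nonneg _) (norm_nonneg _)).trans (hD 0)))
  refine ⟨C, hC, fun M f₁ f₂ h₁ h₂ hf₁ hf₂ hM₁ hM₁' hM₂ => ?_⟩
  have hs₁ : HasCompactSupport f₁ :=
    .of_support_subset_isCompact hK.isCompact_closure (hf₁.trans subset_closure)
  have hs₂ : HasCompactSupport f₂ :=
    .of_support_subset_isCompact hK.isCompact_closure (hf₂.trans subset_closure)
  obtain ⟨hvalue, hgrad⟩ := hconst M ((abs_nonneg _).trans (hM₁ 0))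
  rw [H1norm_congr isOpen_ball hUR fun x hx => congrArg₂ (· - ·)
      (singlePixel_eq_weightedPixel hν h₁.continuous (hf₁.trans hKR) hx)
      (singlePixel_eq_weightedPixel hν h₂.continuous (hf₂.trans hKR) hx),
    L2norm_eq_lpNorm (h₁.sub h₂).continuous.aestronglyMeasurable,
    ← lpNorm_two_eq_integral_sq_norm_rpow
      ((h₁.sub h₂).continuous_fderiv one_ne_zero).aestronglyMeasurable]
  exact (H1norm_weightedPixel_sub_le hD h₁ hs₁ hM₁ hM₁' h₂ hs₂ hM₂ U).trans (add_le_add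
    (mul_le_mul_of_nonneg_right hvalue lpNorm_nonneg)
    (mul_le_mul_of_nonneg_right hgrad lpNorm_nonneg))

end SinglePixel

/-- For `n ≥ 3` and open bounded `Ω, Ω₁` with `closure Ω ⊂ Ω₁`, there is a
constant `C > 0`, independent of `M`, such that for every `M > 0` and all `C¹` functions
`f₁, f₂` supported in `closure Ω` with `‖f_j‖_{C¹} ≤ M`,
`‖Kf₁ − Kf₂‖_{H¹(Ω₁)} ≤ C(1 + e^{CM} + Me^{CM})‖f₁ − f₂‖_{L²} + C(e^{CM} − 1)‖∇(f₁ − f₂)‖_{L²}`. -/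
theorem singlePixel_lipschitz_stability (n : ℕ) (hn : 3 ≤ n) (Ω Ω₁ : Set (Euc n))
    (hΩo : IsOpen Ω) (hΩb : Bornology.IsBounded Ω)
    (hΩ₁o : IsOpen Ω₁) (hΩ₁b : Bornology.IsBounded Ω₁) (hΩΩ₁ : closure Ω ⊆ Ω₁) :
    ∃ C > 0, ∀ M : ℝ, 0 < M → ∀ f₁ f₂ : Euc n → ℝ,
      ContDiff ℝ 1 f₁ → ContDiff ℝ 1 f₂ →
      Function.support f₁ ⊆ closure Ω → Function.support f₂ ⊆ closure Ω →
      (⨆ x : Euc n, |f₁ x|) + (⨆ x : Euc n, ‖fderiv ℝ f₁ x‖) ≤ M →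
      (⨆ x : Euc n, |f₂ x|) + (⨆ x : Euc n, ‖fderiv ℝ f₂ x‖) ≤ M →
      H1norm Ω₁ (fun x => singlePixel f₁ x - singlePixel f₂ x) ≤
        C * (1 + Real.exp (C * M) + M * Real.exp (C * M)) * L2norm (fun y => f₁ y - f₂ y) +
          C * (Real.exp (C * M) - 1) *
            (∫ x : Euc n, ‖fderiv ℝ (fun y => f₁ y - f₂ y) x‖ ^ 2) ^ ((1 : ℝ) / 2) := by
  obtain ⟨C, hC, hstable⟩ := singlePixel_lipschitz_stability_general hΩb.closure hΩ₁b
  refine ⟨C, hC, fun M _ f₁ f₂ h₁ h₂ hf₁ hf₂ hM₁ hM₂ => ?_⟩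
  have hs₁ := HasCompactSupport.of_support_subset_isCompact hΩb.isCompact_closure hf₁
  have hs₂ := HasCompactSupport.of_support_subset_isCompact hΩb.isCompact_closure hf₂
  obtain ⟨hvalue₁, hgrad₁⟩ := norm_le_and_norm_fderiv_le_of_iSup_add_iSup_le h₁ hs₁ hM₁
  obtain ⟨hvalue₂, -⟩ := norm_le_and_norm_fderiv_le_of_iSup_add_iSup_le h₂ hs₂ hM₂
  exact hstable M f₁ f₂ h₁ h₂ hf₁ hf₂ hvalue₁ hgrad₁ hvalue₂
end

section
/- Let n ≥ 3, let Ω ⊂ ℝⁿ be an open bounded set and let Ω₁ ⊂ ℝⁿ be an open bounded set with closure(Ω) ⊂ Ω₁, and fix a constant c > 0. Then there exist constants M₀ > 0 and C̃ > 0 (depending on c, n, Ω, Ω₁) such that for every 0 < M ≤ M₀ and all continuously differentiable f₁, f₂ : ℝⁿ → ℝ supported in the closure of Ω with ‖f_j‖_{C¹(ℝⁿ)} ≤ M for j = 1,2 and satisfying ‖f₁ − f₂‖_{L²(ℝⁿ)} ≥ c ‖∇(f₁ − f₂)‖_{L²(ℝⁿ)}, one has the stability estimate C̃ ‖f₁ −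 f₂‖_{L²(ℝⁿ)} ≤ ‖Kf₁ − Kf₂‖_{H¹(Ω₁)}. -/
open MeasureTheory Metric Real

/-!
For small attenuations, `K` is close to its linearization at zero: `Kf₁ - Kf₂ = -N(f₁ - f₂)` up to
an error of size `O(M) ‖f₁ - f₂‖` in `L²`, where `N` is the normal operator. Pairing with
`h = f₁ - f₂`, the question becomes whether `⟨h, Nh⟩` controls `‖h‖²`.

In polar coordinates `⟨h, Nh⟩` is twice the Riesz energy `∬ h(x) h(y) |x - y|^{1-n} dx dy`. The
Fefferman–de la Llave formula writes `|x - y|^{-j}` as a constant times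
`∬ 𝟙[x ∈ B(z, r)] 𝟙[y ∈ B(z, r)] r^{-(n+1+j)} dz dr`, so this energy is an average over all balls
of the square of the integral of `h` over the ball. The hypothesis `‖h‖ ≥ c ‖∇h‖` says that `h`
barely oscillates at scales `r ≤ c / 2`: there its mean over `B(z, r)` is close to `h(z)`, and the
average is at least a constant times `‖h‖²`. Hence already the `L²` norm of `Kf₁ - Kf₂` suffices.
-/

open Module (finrank)

section CauchySchwarz

variable {α : Type*} [MeasurableSpace α] {μ : Measure α} {f g : α → ℝ}

theorem abs_integral_mul_le_sqrt_mul_sqrt (hf : MemLp f 2 μ) (hg : MemLp g 2 μ) :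
    |∫ a, f a * g a ∂μ| ≤ √(∫ a, f a ^ 2 ∂μ) * √(∫ a, g a ^ 2 ∂μ) := by
  have hölder := integral_mul_norm_le_Lp_mul_Lq Real.HolderConjugate.two_two
    (by simpa using hf) (by simpa using hg)
  calc |∫ a, f a * g a ∂μ| ≤ ∫ a, ‖f a‖ * ‖g a‖ ∂μ := by
        simpa only [Real.norm_eq_abs, abs_mul] using
          norm_integral_le_integral_norm (μ := μ) fun a => f a * g a
    _ ≤ _ := by simpa [Real.sqrt_eq_rpow] using hölder

theorem sq_integral_le_measureReal_univ_mul [IsFiniteMeasure μ] (hf : MemLp f 2 μ) :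
    (∫ a, f a ∂μ) ^ 2 ≤ μ.real Set.univ * ∫ a, f a ^ 2 ∂μ := by
  have h := pow_le_pow_left₀ (abs_nonneg _)
    (abs_integral_mul_le_sqrt_mul_sqrt hf (memLp_const (1 : ℝ))) 2
  rw [sq_abs, mul_pow, Real.sq_sqrt (integral_nonneg fun a => sq_nonneg _),
    Real.sq_sqrt (integral_nonneg fun a => sq_nonneg _)] at h
  simpa [mul_comm] using h

end CauchySchwarz

section Translation

variable {G : Type*} [AddGroup G] [MeasurableSpace G] [MeasurableAdd₂ G]
  {μ : Measure G} [SFinite μ] [μ.IsAddRightInvariant]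
  {β : Type*} [MeasurableSpace β] {ν : Measure β} [IsFiniteMeasure ν]
  {g : G → ℝ} {φ : β → G}

theorem map_add_comp_prod (hφ : Measurable φ) :
    (μ.prod ν).map (fun p : G × β => p.1 + φ p.2) = ν Set.univ • μ := by
  have hm : Measurable fun p : G × β => p.1 + φ p.2 := by fun_prop
  ext s hs
  rw [Measure.map_apply hm hs, Measure.prod_apply_symm (hm hs)]
  simp only [Set.preimage_preimage, measure_preimage_add_right, lintegral_const,
    Measure.smul_apply, smul_eq_mul, mul_comm]

theorem memLp_comp_add_prod {p : ENNReal} (hg : MemLp g p μ) (hφ : Measurable φ) :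
    MemLp (fun q : G × β => g (q.1 + φ q.2)) p (μ.prod ν) := by
  refine MemLp.comp_of_map (f := fun q : G × β => q.1 + φ q.2) ?_ (by fun_prop)
  rw [map_add_comp_prod hφ]
  exact hg.smul_measure (measure_ne_top ν _)

theorem integral_integral_comp_add (hg : Integrable g μ) (hφ : Measurable φ) :
    ∫ z, ∫ b, g (z + φ b) ∂ν ∂μ = ν.real Set.univ * ∫ z, g z ∂μ := by
  have hint : Integrable (fun q : G × β => g (q.1 + φ q.2)) (μ.prod ν) :=
    memLp_one_iff_integrable.1 (memLp_comp_add_prod (memLp_one_iff_integrable.2 hg) hφ)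
  rw [integral_integral_swap hint]
  simp [integral_add_right_eq_self g]

theorem ae_sq_integral_comp_add_le (hg : MemLp g 2 μ) (hφ : Measurable φ) :
    ∀ᵐ z ∂μ, (∫ b, g (z + φ b) ∂ν) ^ 2 ≤ ν.real Set.univ * ∫ b, g (z + φ b) ^ 2 ∂ν := by
  have hprod := memLp_comp_add_prod (ν := ν) hg hφ
  filter_upwards [hprod.aestronglyMeasurable.prodMk_left, hprod.integrable_sq.prod_right_ae]
    with z hm hz
  exact sq_integral_le_measureReal_univ_mul ((memLp_two_iff_integrable_sq hm).2 hz)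

theorem memLp_integral_comp_add (hg : MemLp g 2 μ) (hφ : Measurable φ) :
    MemLp (fun z => ∫ b, g (z + φ b) ∂ν) 2 μ := by
  have hprod := memLp_comp_add_prod (ν := ν) hg hφ
  have hm := hprod.aestronglyMeasurable.integral_prod_right'
  refine (memLp_two_iff_integrable_sq hm).2 ?_
  refine (hprod.integrable_sq.integral_prod_left.const_mul (ν.real Set.univ)).mono' (hm.pow 2) ?_
  filter_upwards [ae_sq_integral_comp_add_le (ν := ν) hg hφ] with z hz
  rwa [Real.norm_of_nonneg (sq_nonneg _)]

theorem integral_sq_integral_comp_add_le (hg : MemLp g 2 μ) (hφ : Measurable φ) :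
    ∫ z, (∫ b, g (z + φ b) ∂ν) ^ 2 ∂μ ≤ ν.real Set.univ ^ 2 * ∫ z, g z ^ 2 ∂μ :=
  calc ∫ z, (∫ b, g (z + φ b) ∂ν) ^ 2 ∂μ
      ≤ ∫ z, ν.real Set.univ * ∫ b, g (z + φ b) ^ 2 ∂ν ∂μ :=
        integral_mono_ae (memLp_integral_comp_add hg hφ).integrable_sq
          ((memLp_comp_add_prod hg hφ).integrable_sq.integral_prod_left.const_mul _)
          (ae_sq_integral_comp_add_le hg hφ)
    _ = ν.real Set.univ ^ 2 * ∫ z, g z ^ 2 ∂μ := by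
        rw [integral_const_mul, integral_integral_comp_add hg.integrable_sq hφ]
        ring

end Translation

section Poincare

theorem sub_eq_setIntegral_fderiv {E F : Type*} [NormedAddCommGroup E] [NormedSpace ℝ E]
    [NormedAddCommGroup F] [NormedSpace ℝ F] [CompleteSpace F] {f : E → F}
    (hf : ContDiff ℝ 1 f) (z y : E) :
    f (z + y) - f z = ∫ t in Set.Ioc (0 : ℝ) 1, fderiv ℝ f (z + t • y) y := by
  have hderiv (t : ℝ) :
      HasDerivAt (fun t : ℝ => f (z + t • y)) (fderiv ℝ f (z + t • y) y) t :=
    (hf.differentiable one_ne_zero _).hasFDerivAt.comp_hasDerivAt t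
      (by simpa using ((hasDerivAt_id t).smul_const y).const_add z)
  have hcont : Continuous fun t : ℝ => fderiv ℝ f (z + t • y) y := by fun_prop
  simpa [intervalIntegral.integral_of_le] using (intervalIntegral.integral_eq_sub_of_hasDerivAt
    (fun t _ => hderiv t) (hcont.intervalIntegrable 0 1)).symm

theorem setIntegral_ball_eq_setIntegral_ball_zero {E : Type*} [SeminormedAddCommGroup E]
    [MeasurableSpace E] [BorelSpace E] {μ : Measure E} [μ.IsAddLeftInvariant] (h : E → ℝ) (z : E)
    (r : ℝ) :
    ∫ x in ball z r, h x ∂μ = ∫ y in ball 0 r, h (z + y) ∂μ := by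
  rw [← integral_indicator measurableSet_ball, ← integral_indicator measurableSet_ball,
    ← integral_add_left_eq_self _ z]
  congr with y
  simp [Set.indicator, dist_eq_norm]

variable {E : Type*} [NormedAddCommGroup E] [NormedSpace ℝ E] {h : E → ℝ}

theorem sq_sub_le_sq_norm_mul_setIntegral (hh : ContDiff ℝ 1 h) (z y : E) :
    (h (z + y) - h z) ^ 2 ≤
      ‖y‖ ^ 2 * ∫ t in Set.Ioc (0 : ℝ) 1, ‖fderiv ℝ h (z + t • y)‖ ^ 2 := by
  have memLp_of_continuous {g : ℝ → ℝ} (hg : Continuous g) :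
      MemLp g 2 (volume.restrict (Set.Ioc (0 : ℝ) 1)) :=
    (memLp_two_iff_integrable_sq hg.aestronglyMeasurable).2 (hg.pow 2).integrableOn_Ioc
  have hderiv := memLp_of_continuous (g := fun t => fderiv ℝ h (z + t • y) y) (by fun_prop)
  have hnorm := memLp_of_continuous (g := fun t => ‖fderiv ℝ h (z + t • y)‖) (by fun_prop)
  calc (h (z + y) - h z) ^ 2
      ≤ ∫ t in Set.Ioc (0 : ℝ) 1, fderiv ℝ h (z + t • y) y ^ 2 := by
        rw [sub_eq_setIntegral_fderiv hh]
        simpa using sq_integral_le_measureReal_univ_mul hderiv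
    _ ≤ ∫ t in Set.Ioc (0 : ℝ) 1, ‖y‖ ^ 2 * ‖fderiv ℝ h (z + t • y)‖ ^ 2 := by
        refine integral_mono hderiv.integrable_sq (hnorm.integrable_sq.const_mul _) fun t => ?_
        rw [← sq_abs, ← mul_pow, mul_comm ‖y‖]
        exact pow_le_pow_left₀ (abs_nonneg _) ((fderiv ℝ h (z + t • y)).le_opNorm y) 2
    _ = _ := integral_const_mul _ _

variable [FiniteDimensional ℝ E] [MeasurableSpace E] [BorelSpace E]
  {μ : Measure E} [μ.IsAddHaarMeasure]

theorem integral_sq_sub_le_sq_norm_mul (hh : ContDiff ℝ 1 h) (hd : MemLp (fderiv ℝ h) 2 μ)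
    (y : E) :
    ∫ z, (h (z + y) - h z) ^ 2 ∂μ ≤ ‖y‖ ^ 2 * ∫ z, ‖fderiv ℝ h z‖ ^ 2 ∂μ := by
  have hφ : Measurable fun t : ℝ => t • y := by fun_prop
  have hint := (memLp_comp_add_prod (ν := volume.restrict (Set.Ioc (0 : ℝ) 1)) hd.norm
    hφ).integrable_sq.integral_prod_left
  calc ∫ z, (h (z + y) - h z) ^ 2 ∂μ
      ≤ ∫ z, ‖y‖ ^ 2 * (∫ t in Set.Ioc (0 : ℝ) 1, ‖fderiv ℝ h (z + t • y)‖ ^ 2) ∂μ :=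
        integral_mono_of_nonneg (.of_forall fun z => sq_nonneg _) (hint.const_mul _)
          (.of_forall fun z => sq_sub_le_sq_norm_mul_setIntegral hh z y)
    _ = ‖y‖ ^ 2 * ∫ z, ‖fderiv ℝ h z‖ ^ 2 ∂μ := by
        rw [integral_const_mul, integral_integral_comp_add hd.norm.integrable_sq hφ]
        simp

theorem memLp_sub_prod_ball (hh : MemLp h 2 μ) (r : ℝ) :
    MemLp (fun p : E × E => h (p.1 + p.2) - h p.1) 2 (μ.prod (μ.restrict (ball 0 r))) :=
  have : IsFiniteMeasure (μ.restrict (ball (0 : E) r)) :=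
    isFiniteMeasure_restrict.2 measure_ball_lt_top.ne
  (memLp_comp_add_prod hh measurable_id).sub (hh.comp_fst _)

theorem integral_integral_ball_sq_sub_le (hh : ContDiff ℝ 1 h) (hL : MemLp h 2 μ)
    (hd : MemLp (fderiv ℝ h) 2 μ) (r : ℝ) :
    ∫ z, ∫ y in ball 0 r, (h (z + y) - h z) ^ 2 ∂μ ∂μ ≤
      μ.real (ball 0 r) * (r ^ 2 * ∫ z, ‖fderiv ℝ h z‖ ^ 2 ∂μ) := by
  have hprod := (memLp_sub_prod_ball hL r).integrable_sq
  calc ∫ z, ∫ y in ball 0 r, (h (z + y) - h z) ^ 2 ∂μ ∂μ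
      = ∫ y in ball 0 r, ∫ z, (h (z + y) - h z) ^ 2 ∂μ ∂μ := integral_integral_swap hprod
    _ ≤ ∫ y in ball (0 : E) r, r ^ 2 * ∫ z, ‖fderiv ℝ h z‖ ^ 2 ∂μ ∂μ := by
        refine setIntegral_mono_on hprod.integral_prod_right
          (integrableOn_const measure_ball_lt_top.ne) measurableSet_ball fun y hy => ?_
        refine (integral_sq_sub_le_sq_norm_mul hh hd y).trans ?_
        have : ‖y‖ ≤ r := (mem_ball_zero_iff.1 hy).le
        gcongr
    _ = _ := by simp

theorem memLp_setIntegral_ball (hh : MemLp h 2 μ) (r : ℝ) :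
    MemLp (fun z => ∫ x in ball z r, h x ∂μ) 2 μ := by
  have : IsFiniteMeasure (μ.restrict (ball (0 : E) r)) :=
    isFiniteMeasure_restrict.2 measure_ball_lt_top.ne
  simp only [setIntegral_ball_eq_setIntegral_ball_zero h]
  exact memLp_integral_comp_add hh measurable_id

theorem sq_measureReal_ball_mul_sq_le (hh : Continuous h) (z : E) (r : ℝ) :
    μ.real (ball 0 r) ^ 2 * h z ^ 2 ≤ 2 * (∫ x in ball z r, h x ∂μ) ^ 2 +
      2 * μ.real (ball 0 r) * ∫ y in ball 0 r, (h (z + y) - h z) ^ 2 ∂μ := by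
  have : IsFiniteMeasure (μ.restrict (ball (0 : E) r)) :=
    isFiniteMeasure_restrict.2 measure_ball_lt_top.ne
  have integrable_of_continuous {g : E → ℝ} (hg : Continuous g) :
      Integrable g (μ.restrict (ball 0 r)) :=
    (hg.continuousOn.integrableOn_compact (isCompact_closedBall 0 r)).mono_set
      ball_subset_closedBall
  have hdiff : ∫ y in ball 0 r, (h (z + y) - h z) ∂μ =
      ∫ x in ball z r, h x ∂μ - μ.real (ball 0 r) * h z := by
    rw [integral_sub (integrable_of_continuous (by fun_prop))
      (integrable_of_continuous (by fun_prop)), setIntegral_ball_eq_setIntegral_ball_zero h]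
    simp
  have hsq : (∫ y in ball 0 r, (h (z + y) - h z) ∂μ) ^ 2 ≤
      μ.real (ball 0 r) * ∫ y in ball 0 r, (h (z + y) - h z) ^ 2 ∂μ := by
    simpa using sq_integral_le_measureReal_univ_mul (f := fun y => h (z + y) - h z)
      ((memLp_two_iff_integrable_sq (by fun_prop)).2 (integrable_of_continuous (by fun_prop)))
  rw [hdiff] at hsq
  linarith [sq_nonneg (2 * ∫ x in ball z r, h x ∂μ - μ.real (ball 0 r) * h z)]

theorem sq_measureReal_ball_mul_integral_sq_le (hh : ContDiff ℝ 1 h) (hL : MemLp h 2 μ)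
    (hd : MemLp (fderiv ℝ h) 2 μ) (r : ℝ) :
    μ.real (ball 0 r) ^ 2 * ∫ z, h z ^ 2 ∂μ ≤
      2 * ∫ z, (∫ x in ball z r, h x ∂μ) ^ 2 ∂μ +
        2 * (μ.real (ball 0 r) * r) ^ 2 * ∫ z, ‖fderiv ℝ h z‖ ^ 2 ∂μ := by
  have havg := (memLp_setIntegral_ball hL r).integrable_sq.const_mul 2
  have hosc := (memLp_sub_prod_ball hL r).integrable_sq.integral_prod_left.const_mul
    (2 * μ.real (ball 0 r))
  calc μ.real (ball 0 r) ^ 2 * ∫ z, h z ^ 2 ∂μ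
      = ∫ z, μ.real (ball 0 r) ^ 2 * h z ^ 2 ∂μ := (integral_const_mul _ _).symm
    _ ≤ ∫ z, (2 * (∫ x in ball z r, h x ∂μ) ^ 2 +
          2 * μ.real (ball 0 r) * ∫ y in ball 0 r, (h (z + y) - h z) ^ 2 ∂μ) ∂μ :=
        integral_mono (hL.integrable_sq.const_mul _) (havg.add hosc)
          fun z => sq_measureReal_ball_mul_sq_le hh.continuous z r
    _ = 2 * ∫ z, (∫ x in ball z r, h x ∂μ) ^ 2 ∂μ + 2 * μ.real (ball 0 r) *
          ∫ z, ∫ y in ball 0 r, (h (z + y) - h z) ^ 2 ∂μ ∂μ := by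
        rw [integral_add havg hosc, integral_const_mul, integral_const_mul]
    _ ≤ 2 * ∫ z, (∫ x in ball z r, h x ∂μ) ^ 2 ∂μ + 2 * μ.real (ball 0 r) *
          (μ.real (ball 0 r) * (r ^ 2 * ∫ z, ‖fderiv ℝ h z‖ ^ 2 ∂μ)) := by
        gcongr
        exact integral_integral_ball_sq_sub_le hh hL hd r
    _ = _ := by ring

theorem sq_measureReal_ball_mul_integral_sq_le_four_mul (hh : ContDiff ℝ 1 h)
    (hL : MemLp h 2 μ) (hd : MemLp (fderiv ℝ h) 2 μ) {c r : ℝ}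
    (hc : c ^ 2 * ∫ z, ‖fderiv ℝ h z‖ ^ 2 ∂μ ≤ ∫ z, h z ^ 2 ∂μ) (hr : 0 ≤ r) (hrc : r ≤ c / 2) :
    μ.real (ball 0 r) ^ 2 * ∫ z, h z ^ 2 ∂μ ≤ 4 * ∫ z, (∫ x in ball z r, h x ∂μ) ^ 2 ∂μ := by
  have : 0 ≤ ∫ z, ‖fderiv ℝ h z‖ ^ 2 ∂μ := integral_nonneg fun z => by positivity
  have hgrad : 4 * (r ^ 2 * ∫ z, ‖fderiv ℝ h z‖ ^ 2 ∂μ) ≤ ∫ z, h z ^ 2 ∂μ :=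
    calc 4 * (r ^ 2 * ∫ z, ‖fderiv ℝ h z‖ ^ 2 ∂μ)
        ≤ 4 * ((c / 2) ^ 2 * ∫ z, ‖fderiv ℝ h z‖ ^ 2 ∂μ) := by gcongr
      _ = c ^ 2 * ∫ z, ‖fderiv ℝ h z‖ ^ 2 ∂μ := by ring
      _ ≤ _ := hc
  have hscaled := mul_le_mul_of_nonneg_left hgrad (sq_nonneg (μ.real (ball (0 : E) r)))
  linarith [sq_measureReal_ball_mul_integral_sq_le hh hL hd r]

theorem pow_mul_integral_sq_le_integral_inv_pow_mul_sq (hh : ContDiff ℝ 1 h)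
    (hL : MemLp h 2 μ) (hd : MemLp (fderiv ℝ h) 2 μ) {c r : ℝ}
    (hc : c ^ 2 * ∫ z, ‖fderiv ℝ h z‖ ^ 2 ∂μ ≤ ∫ z, h z ^ 2 ∂μ) (hr : 0 < r) (hrc : r ≤ c / 2)
    {j : ℕ} (hj : j < finrank ℝ E) :
    r ^ (finrank ℝ E - 1 - j) * (μ.real (ball 0 1) ^ 2 / 4 * ∫ z, h z ^ 2 ∂μ) ≤
      ∫ z, (r ^ (finrank ℝ E + 1 + j))⁻¹ * (∫ x in ball z r, h x ∂μ) ^ 2 ∂μ := by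
  have : Nontrivial E := Module.nontrivial_of_finrank_pos (Nat.zero_lt_of_lt hj)
  have hball := sq_measureReal_ball_mul_integral_sq_le_four_mul hh hL hd hc hr.le hrc
  have hpow : r ^ (finrank ℝ E - 1 - j) * r ^ (finrank ℝ E + 1 + j) =
      (r ^ finrank ℝ E) ^ 2 := by
    rw [← pow_add, ← pow_mul]
    congr 1
    omega
  rw [← Measure.addHaar_real_closedBall_eq_addHaar_real_ball,
    Measure.addHaar_real_closedBall μ 0 hr.le, mul_pow, ← hpow] at hball
  rw [integral_const_mul, le_inv_mul_iff₀ (by positivity)]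
  linarith

theorem setIntegral_pow_mul_le_integral_inv_pow_mul_sq (hh : ContDiff ℝ 1 h) (hL : MemLp h 2 μ)
    (hd : MemLp (fderiv ℝ h) 2 μ) {c : ℝ}
    (hc : c ^ 2 * ∫ z, ‖fderiv ℝ h z‖ ^ 2 ∂μ ≤ ∫ z, h z ^ 2 ∂μ) {j : ℕ} (hj : j < finrank ℝ E)
    (hint : Integrable (fun p : E × ℝ =>
      (p.2 ^ (finrank ℝ E + 1 + j))⁻¹ * (∫ x in ball p.1 p.2, h x ∂μ) ^ 2) (μ.prod volume)) :
    (∫ r in Set.Ioc 0 (c / 2), r ^ (finrank ℝ E - 1 - j)) *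
        (μ.real (ball 0 1) ^ 2 / 4 * ∫ z, h z ^ 2 ∂μ) ≤
      ∫ p : E × ℝ, (p.2 ^ (finrank ℝ E + 1 + j))⁻¹ * (∫ x in ball p.1 p.2, h x ∂μ) ^ 2
        ∂μ.prod volume := by
  rw [integral_prod_symm _ hint, ← integral_mul_const]
  refine (setIntegral_mono_on ?_ hint.integral_prod_right.integrableOn measurableSet_Ioc fun r hr =>
    pow_mul_integral_sq_le_integral_inv_pow_mul_sq hh hL hd hc hr.1 hr.2 hj).trans
    (setIntegral_le_integral hint.integral_prod_right (.of_forall fun r => ?_))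
  · exact (continuous_pow _).integrableOn_Ioc.integrable.mul_const _
  · refine integral_nonneg fun z => ?_
    obtain hr | hr := le_or_gt r 0
    · simp [ball_eq_empty.2 hr]
    · positivity

end Poincare

section PolarCoordinates

variable {E F : Type*} [NormedAddCommGroup E] [NormedSpace ℝ E]
  [NormedAddCommGroup F] [NormedSpace ℝ F]

theorem smul_homeomorphUnitSphereProd (y : ({0}ᶜ : Set E)) :
    ((homeomorphUnitSphereProd E y).2 : ℝ) • ((homeomorphUnitSphereProd E y).1 : E) = y := by
  have hy : ‖(y : E)‖ ≠ 0 := norm_ne_zero_iff.2 y.2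
  simp [smul_smul, hy]

theorem integral_volumeIoiPow (m : ℕ) (g : ℝ → F) :
    ∫ r, g r ∂Measure.volumeIoiPow m = ∫ r in Set.Ioi (0 : ℝ), r ^ m • g r := by
  simp only [Measure.volumeIoiPow, ENNReal.ofReal]
  rw [integral_withDensity_eq_integral_smul (by fun_prop),
    integral_subtype_comap measurableSet_Ioi fun r : ℝ => (r ^ m).toNNReal • g r]
  refine setIntegral_congr_fun measurableSet_Ioi fun r (hr : 0 < r) => ?_
  rw [NNReal.smul_def, Real.coe_toNNReal _ (by positivity)]

theorem integral_eq_integral_toSphere [FiniteDimensional ℝ E] [Nontrivial E] [MeasurableSpace E]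
    [BorelSpace E] {μ : Measure E} [μ.IsAddHaarMeasure] {g : E → F}
    (hg : Integrable g μ) :
    ∫ y, g y ∂μ = ∫ θ : sphere (0 : E) 1, (∫ r in Set.Ioi (0 : ℝ),
      r ^ (finrank ℝ E - 1) • g (r • (θ : E))) ∂μ.toSphere := by
  have hemb := (homeomorphUnitSphereProd E).measurableEmbedding
  have hmp := μ.measurePreserving_homeomorphUnitSphereProd
  have hint : Integrable (fun p : sphere (0 : E) 1 × Set.Ioi (0 : ℝ) => g ((p.2 : ℝ) • (p.1 : E)))
      (μ.toSphere.prod (.volumeIoiPow (finrank ℝ E - 1))) := by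
    rw [← hmp.integrable_comp_emb hemb]
    simpa only [Function.comp_def, smul_homeomorphUnitSphereProd] using
      (integrableOn_iff_comap_subtypeVal (measurableSet_singleton _).compl).1
        (hg.integrableOn (s := ({0}ᶜ : Set E)))
  calc ∫ y, g y ∂μ = ∫ y : ({0}ᶜ : Set E), g y ∂(μ.comap (↑)) := by
        rw [integral_subtype_comap (measurableSet_singleton _).compl g, restrict_compl_singleton]
    _ = ∫ p, g ((p.2 : ℝ) • (p.1 : E))
          ∂μ.toSphere.prod (.volumeIoiPow (finrank ℝ E - 1)) := by
        rw [← hmp.integral_comp hemb]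
        simp only [smul_homeomorphUnitSphereProd]
    _ = _ := by
        rw [integral_prod _ hint]
        congr with θ
        exact integral_volumeIoiPow _ fun r => g (r • (θ : E))

end PolarCoordinates

section RieszDensity

variable {E : Type*} [NormedAddCommGroup E] [NormedSpace ℝ E] [FiniteDimensional ℝ E]
  [MeasurableSpace E] [BorelSpace E] {μ : Measure E} [μ.IsAddHaarMeasure]
  {h : E → ℝ} {B : ℝ} {j : ℕ}

theorem integrableOn_inv_norm_pow (hj : j < finrank ℝ E) (R : ℝ) :
    IntegrableOn (fun y : E => (‖y‖ ^ j)⁻¹) (ball 0 R) μ := by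
  have : Nontrivial E := Module.nontrivial_of_finrank_pos (Nat.zero_lt_of_lt hj)
  rw [integrableOn_fun_norm_addHaar μ (f := fun t => (t ^ j)⁻¹)]
  have hpow : IntegrableOn (fun t : ℝ => t ^ (finrank ℝ E - 1 - j)) (Set.Ioo 0 R) :=
    (continuous_pow _).integrableOn_Icc.mono_set Set.Ioo_subset_Icc_self
  refine hpow.congr_fun (fun t ht => ?_) measurableSet_Ioo
  exact pow_sub₀ t ht.1.ne' (by omega)

theorem integrable_indicator_ball_inv_norm_pow (hj : j < finrank ℝ E) (R : ℝ) :
    Integrable ((ball (0 : E) R).indicator fun y => (‖y‖ ^ j)⁻¹) μ :=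
  (integrableOn_inv_norm_pow hj R).integrable_indicator measurableSet_ball

theorem inv_dist_pow_le_indicator_add_one {E : Type*} [SeminormedAddCommGroup E] (j : ℕ)
    (x y : E) :
    (dist x y ^ j)⁻¹ ≤ (ball (0 : E) 1).indicator (fun w => (‖w‖ ^ j)⁻¹) (y - x) + 1 := by
  rw [dist_eq_norm']
  by_cases hxy : y - x ∈ ball (0 : E) 1
  · simp [hxy]
  · rw [Set.indicator_of_notMem hxy, zero_add]
    exact inv_le_one_of_one_le₀ (one_le_pow₀ (by simpa using hxy))

theorem norm_mul_inv_dist_pow_le {E : Type*} [SeminormedAddCommGroup E] {h : E → ℝ} {B : ℝ}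
    (hb : ∀ x, |h x| ≤ B) (j : ℕ) (x y : E) :
    ‖h y * (dist x y ^ j)⁻¹‖ ≤
      B * (ball (0 : E) 1).indicator (fun w => (‖w‖ ^ j)⁻¹) (y - x) + |h y| := by
  have hk : 0 ≤ (ball (0 : E) 1).indicator (fun w => (‖w‖ ^ j)⁻¹) (y - x) :=
    Set.indicator_nonneg (fun w _ => by positivity) _
  calc ‖h y * (dist x y ^ j)⁻¹‖ = |h y| * (dist x y ^ j)⁻¹ := by
        rw [norm_mul, Real.norm_eq_abs, Real.norm_of_nonneg (by positivity)]
    _ ≤ |h y| * ((ball (0 : E) 1).indicator (fun w => (‖w‖ ^ j)⁻¹) (y - x) + 1) := by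
        gcongr
        exact inv_dist_pow_le_indicator_add_one j x y
    _ ≤ _ := by
        rw [mul_add_one]
        gcongr
        exact hb y

theorem integrable_mul_inv_dist_pow (hj : j < finrank ℝ E) (hh : Integrable h μ)
    (hb : ∀ x, |h x| ≤ B) (x : E) :
    Integrable (fun y => h y * (dist x y ^ j)⁻¹) μ :=
  ((((integrable_indicator_ball_inv_norm_pow hj 1).comp_sub_right x).const_mul B).add hh.abs).mono'
    (hh.aestronglyMeasurable.mul (by fun_prop)) (.of_forall (norm_mul_inv_dist_pow_le hb j x))

theorem integrable_mul_mul_inv_dist_pow (hj : j < finrank ℝ E) (hh : Integrable h μ)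
    (hb : ∀ x, |h x| ≤ B) :
    Integrable (fun q : E × E => h q.1 * h q.2 * (dist q.1 q.2 ^ j)⁻¹) (μ.prod μ) := by
  have hnear := (hh.abs.convolution_integrand (ContinuousLinearMap.mul ℝ ℝ)
    (integrable_indicator_ball_inv_norm_pow (μ := μ) hj 1)).const_mul B
  refine (hnear.add (hh.abs.mul_prod hh.abs)).mono'
    ((hh.aestronglyMeasurable.comp_fst.mul hh.aestronglyMeasurable.comp_snd).mul
      (by fun_prop)) (.of_forall fun q => ?_)
  calc ‖h q.1 * h q.2 * (dist q.1 q.2 ^ j)⁻¹‖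
      = |h q.2| * ‖h q.1 * (dist q.2 q.1 ^ j)⁻¹‖ := by
        rw [dist_comm, mul_right_comm, norm_mul, mul_comm, Real.norm_eq_abs]
    _ ≤ |h q.2| *
          (B * (ball (0 : E) 1).indicator (fun w => (‖w‖ ^ j)⁻¹) (q.1 - q.2) + |h q.1|) := by
        gcongr
        exact norm_mul_inv_dist_pow_le hb j q.2 q.1
    _ = _ := by
        simp only [Pi.add_apply, ContinuousLinearMap.mul_apply']
        ring

end RieszDensity

section BallKernel

variable {E : Type*} [NormedAddCommGroup E] {k : ℕ}

/-- The Fefferman–de la Llave kernel `r⁻ᵏ 𝟙[x ∈ B(z, r)] 𝟙[y ∈ B(z, r)]` as a function of the ball,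
encoded by `p = (z, r)`. Its integral over all balls is a power of `dist x y`, so it turns Riesz
energies into averages of squared integrals over balls. -/
noncomputable def ballKernel (k : ℕ) (x y : E) (p : E × ℝ) : ℝ :=
  open Classical in if x ∈ ball p.1 p.2 ∧ y ∈ ball p.1 p.2 then (p.2 ^ k)⁻¹ else 0

theorem ballKernel_nonneg (k : ℕ) (x y : E) (p : E × ℝ) : 0 ≤ ballKernel k x y p := by
  unfold ballKernel
  split_ifs with hp
  · have := pos_of_mem_ball hp.1
    positivity
  · rfl

theorem ballKernel_isometryEquiv (U : E ≃ᵢ E) (k : ℕ) (x y : E) (p : E × ℝ) :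
    ballKernel k (U x) (U y) (U p.1, p.2) = ballKernel k x y p := by
  simp [ballKernel, U.dist_eq]

theorem ballKernel_smul [NormedSpace ℝ E] {t : ℝ} (ht : 0 < t) (k : ℕ) (x y : E) (p : E × ℝ) :
    ballKernel k (t • x) (t • y) (t • p) = (t ^ k)⁻¹ * ballKernel k x y p := by
  simp [ballKernel, dist_smul₀, abs_of_pos ht, ht, mul_pow, mul_comm]

theorem ballKernel_le (k : ℕ) {x y : E} (hxy : x ≠ y) (p : E × ℝ) :
    ballKernel k x y p ≤ (2 / dist x y + 1) ^ k * ((1 + ‖p - (x, 0)‖) ^ k)⁻¹ := by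
  have hd : 0 < dist x y := dist_pos.2 hxy
  unfold ballKernel
  split_ifs with hp
  · have hr : 0 < p.2 := pos_of_mem_ball hp.1
    have hnorm : ‖p - (x, 0)‖ = p.2 := by
      have : ‖p.1 - x‖ ≤ p.2 := by rw [← dist_eq_norm']; exact (mem_ball.1 hp.1).le
      simp [Prod.norm_def, abs_of_pos hr, this]
    have hdr : dist x y ≤ 2 * p.2 := by
      linarith [dist_triangle_right x y p.1, mem_ball.1 hp.1, mem_ball.1 hp.2]
    have hone : 1 ≤ 2 / dist x y * p.2 := by
      rwa [div_mul_eq_mul_div, one_le_div hd]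
    rw [hnorm, ← div_eq_mul_inv, le_div_iff₀ (by positivity), inv_mul_le_iff₀ (by positivity),
      ← mul_pow]
    gcongr
    linarith
  · positivity

variable [NormedSpace ℝ E] [FiniteDimensional ℝ E] [MeasurableSpace E] [BorelSpace E]

theorem measurable_ballKernel (k : ℕ) :
    Measurable fun s : (E × E) × (E × ℝ) => ballKernel k s.1.1 s.1.2 s.2 := by
  unfold ballKernel
  refine Measurable.ite ?_ (by fun_prop) measurable_const
  exact (measurableSet_lt (by fun_prop) (by fun_prop)).inter
    (measurableSet_lt (by fun_prop) (by fun_prop))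

variable {μ : Measure E} [μ.IsAddHaarMeasure]

theorem integrable_ballKernel (hk : finrank ℝ E + 1 < k) {x y : E} (hxy : x ≠ y) :
    Integrable (ballKernel k x y) (μ.prod volume) := by
  have hdim : (finrank ℝ (E × ℝ) : ℝ) < k := by
    simpa using mod_cast hk
  have hmeas : Measurable (ballKernel k x y) :=
    (measurable_ballKernel k).comp (measurable_prodMk_left (x := (x, y)))
  refine (((integrable_one_add_norm hdim).comp_sub_right (x, 0)).const_mul
    ((2 / dist x y + 1) ^ k)).mono' hmeas.aestronglyMeasurable (.of_forall fun p => ?_)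
  rw [Real.norm_of_nonneg (ballKernel_nonneg k x y p), Real.rpow_neg (by positivity),
    Real.rpow_natCast]
  exact ballKernel_le k hxy p

theorem integral_ballKernel_pos (hk : finrank ℝ E + 1 < k) {x y : E} (hxy : x ≠ y) :
    0 < ∫ p, ballKernel k x y p ∂μ.prod volume := by
  rw [integral_pos_iff_support_of_nonneg (ballKernel_nonneg k x y) (integrable_ballKernel hk hxy)]
  have hopen : IsOpen {p : E × ℝ | dist x p.1 < p.2 ∧ dist y p.1 < p.2} :=
    (isOpen_lt (f := fun p : E × ℝ => dist x p.1) (by fun_prop) continuous_snd).inter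
      (isOpen_lt (f := fun p : E × ℝ => dist y p.1) (by fun_prop) continuous_snd)
  refine (hopen.measure_pos _ ⟨(x, dist x y + 1), ?_⟩).trans_le (measure_mono fun p hp => ?_)
  · simp [dist_comm y, add_pos_of_nonneg_of_pos]
  · have := dist_nonneg.trans_lt hp.1
    simp [ballKernel, hp.1, hp.2, this.ne']

theorem integral_ballKernel_smul {t : ℝ} (ht : 0 < t) (j : ℕ) (x y : E) :
    ∫ p, ballKernel (finrank ℝ E + 1 + j) (t • x) (t • y) p ∂μ.prod volume =
      (t ^ j)⁻¹ * ∫ p, ballKernel (finrank ℝ E + 1 + j) x y p ∂μ.prod volume := by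
  have hscale := Measure.integral_comp_smul (μ.prod volume)
    (ballKernel (finrank ℝ E + 1 + j) (t • x) (t • y)) t
  simp only [ballKernel_smul ht, integral_const_mul, Module.finrank_prod, Module.finrank_self,
    smul_eq_mul, abs_of_pos (inv_pos.2 (pow_pos ht _))] at hscale
  rw [pow_add, mul_inv, mul_assoc] at hscale
  exact (mul_left_cancel₀ (by positivity) hscale).symm

end BallKernel

section BallKernelVolume

theorem exists_isometryEquiv_apply_eq {E : Type*} [NormedAddCommGroup E]
    [InnerProductSpace ℝ E] {x y x' y' : E} (h : dist x y = dist x' y') :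
    ∃ U : E ≃ᵢ E, U x = x' ∧ U y = y' := by
  let V : E ≃ₗᵢ[ℝ] E := (ℝ ∙ ((y - x) - (y' - x')))ᗮ.reflection
  have hV : V (y - x) = y' - x' := Submodule.reflection_sub (by
    rw [← dist_eq_norm', ← dist_eq_norm', h])
  refine ⟨(IsometryEquiv.subRight x).trans (V.toIsometryEquiv.trans (IsometryEquiv.addRight x')),
    ?_, ?_⟩ <;> simp [hV]

variable {E : Type*} [NormedAddCommGroup E] [InnerProductSpace ℝ E] [FiniteDimensional ℝ E]
  [MeasurableSpace E] [BorelSpace E]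

theorem measurePreserving_isometryEquiv (U : E ≃ᵢ E) : MeasurePreserving U := by
  simpa only [InnerProductSpace.euclideanHausdorffMeasure_eq_volume] using
    U.measurePreserving_euclideanHausdorffMeasure (finrank ℝ E)

theorem integral_ballKernel_isometryEquiv (U : E ≃ᵢ E) (k : ℕ) (x y : E) :
    ∫ p, ballKernel k (U x) (U y) p ∂volume.prod volume =
      ∫ p, ballKernel k x y p ∂volume.prod volume := by
  rw [← ((measurePreserving_isometryEquiv U).prod (.id volume)).integral_comp
    (U.toHomeomorph.prodCongr (Homeomorph.refl ℝ)).measurableEmbedding]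
  exact integral_congr_ae (.of_forall fun p => ballKernel_isometryEquiv U k x y p)

theorem exists_pos_integral_ballKernel_eq [Nontrivial E] {j : ℕ} (hj : 0 < j) :
    ∃ κ > 0, ∀ x y : E, x ≠ y →
      ∫ p, ballKernel (finrank ℝ E + 1 + j) x y p ∂volume.prod volume = κ * (dist x y ^ j)⁻¹ := by
  obtain ⟨e, he⟩ := exists_norm_eq E zero_le_one
  have he0 : (0 : E) ≠ e := by rintro rfl; simp at he
  refine ⟨∫ p, ballKernel (finrank ℝ E + 1 + j) 0 e p ∂volume.prod volume,
    integral_ballKernel_pos (by omega) he0, fun x y hxy => ?_⟩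
  obtain ⟨U, hUx, hUy⟩ : ∃ U : E ≃ᵢ E, U (dist x y • 0) = x ∧ U (dist x y • e) = y :=
    exists_isometryEquiv_apply_eq (by simp [norm_smul, he])
  calc _ = ∫ p, ballKernel (finrank ℝ E + 1 + j) (dist x y • 0) (dist x y • e) p
          ∂volume.prod volume := by
        rw [← integral_ballKernel_isometryEquiv U _ (dist x y • 0), hUx, hUy]
    _ = _ := by rw [integral_ballKernel_smul (dist_pos.2 hxy), mul_comm]

end BallKernelVolume

section RieszEnergy

theorem ae_fst_ne_snd {α : Type*} [MeasurableSpace α] [MeasurableEq α] {μ ν : Measure α}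
    [SFinite ν] [NullSingletonClass ν] : ∀ᵐ q ∂μ.prod ν, q.1 ≠ q.2 := by
  have hdiag : μ.prod ν (Set.diagonal α) = 0 := by
    rw [Measure.measure_prod_null measurableSet_diagonal]
    refine .of_forall fun x => ?_
    have : Prod.mk x ⁻¹' Set.diagonal α = {x} := by ext y; simp [eq_comm]
    simp [this]
  exact measure_eq_zero_iff_ae_notMem.1 hdiag

/-- The Riesz energy `∬ h(x) h(y) |x - y|⁻ʲ dx dy` of the density `h`. -/
noncomputable def rieszEnergy {E : Type*} [PseudoMetricSpace E] [MeasureSpace E] (j : ℕ)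
    (h : E → ℝ) : ℝ :=
  ∫ q : E × E, h q.1 * h q.2 * (dist q.1 q.2 ^ j)⁻¹ ∂volume.prod volume

theorem integral_mul_mul_ballKernel {E : Type*} [NormedAddCommGroup E] [MeasurableSpace E]
    [BorelSpace E] {μ : Measure E} [SFinite μ] (h : E → ℝ) (k : ℕ) (p : E × ℝ) :
    ∫ q : E × E, h q.1 * h q.2 * ballKernel k q.1 q.2 p ∂μ.prod μ =
      (p.2 ^ k)⁻¹ * (∫ x in ball p.1 p.2, h x ∂μ) ^ 2 := by
  let g := (ball p.1 p.2).indicator h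
  have hfactor (q : E × E) :
      h q.1 * h q.2 * ballKernel k q.1 q.2 p = (p.2 ^ k)⁻¹ * (g q.1 * g q.2) := by
    by_cases hx : q.1 ∈ ball p.1 p.2 <;> by_cases hy : q.2 ∈ ball p.1 p.2 <;>
      simp [ballKernel, g, hx, hy, mul_comm]
  simp only [hfactor, integral_const_mul, integral_prod_mul, g,
    integral_indicator measurableSet_ball, sq]

variable {E : Type*} [NormedAddCommGroup E] [InnerProductSpace ℝ E] [FiniteDimensional ℝ E]
  [MeasurableSpace E] [BorelSpace E] {h : E → ℝ} {j : ℕ}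

theorem integrable_mul_mul_ballKernel [Nontrivial E] (hj : 0 < j)
    (hm : AEStronglyMeasurable h volume)
    (hint : Integrable (fun q : E × E => h q.1 * h q.2 * (dist q.1 q.2 ^ j)⁻¹)
      (volume.prod volume)) :
    Integrable (fun s : (E × E) × (E × ℝ) =>
        h s.1.1 * h s.1.2 * ballKernel (finrank ℝ E + 1 + j) s.1.1 s.1.2 s.2)
      ((volume.prod volume).prod (volume.prod volume)) := by
  obtain ⟨κ, -, hκ⟩ := exists_pos_integral_ballKernel_eq (E := E) hj
  have hmeas : AEStronglyMeasurable (fun s : (E × E) × (E × ℝ) =>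
      h s.1.1 * h s.1.2 * ballKernel (finrank ℝ E + 1 + j) s.1.1 s.1.2 s.2)
      ((volume.prod volume).prod (volume.prod volume)) :=
    (hm.comp_fst.comp_fst.mul hm.comp_snd.comp_fst).mul
      (measurable_ballKernel _).aestronglyMeasurable
  refine (integrable_prod_iff hmeas).2 ⟨?_, ?_⟩
  · filter_upwards [ae_fst_ne_snd] with q hq
    exact (integrable_ballKernel (by omega) hq).const_mul _
  · refine (hint.norm.const_mul κ).congr ?_
    filter_upwards [ae_fst_ne_snd] with q hq
    simp only [norm_mul, Real.norm_of_nonneg (ballKernel_nonneg _ _ _ _), integral_const_mul,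
      hκ _ _ hq, Real.norm_of_nonneg (show 0 ≤ (dist q.1 q.2 ^ j)⁻¹ by positivity)]
    ring

theorem integrable_inv_pow_mul_sq_setIntegral_ball [Nontrivial E] (hj : 0 < j)
    (hm : AEStronglyMeasurable h volume)
    (hint : Integrable (fun q : E × E => h q.1 * h q.2 * (dist q.1 q.2 ^ j)⁻¹)
      (volume.prod volume)) :
    Integrable (fun p : E × ℝ =>
        (p.2 ^ (finrank ℝ E + 1 + j))⁻¹ * (∫ x in ball p.1 p.2, h x) ^ 2)
      (volume.prod volume) :=
  (integrable_mul_mul_ballKernel hj hm hint).integral_prod_right.congr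
    (.of_forall fun p => integral_mul_mul_ballKernel h _ p)

theorem exists_pos_mul_rieszEnergy_eq [Nontrivial E] (hj : 0 < j) :
    ∃ κ > 0, ∀ h : E → ℝ, AEStronglyMeasurable h volume →
      Integrable (fun q : E × E => h q.1 * h q.2 * (dist q.1 q.2 ^ j)⁻¹) (volume.prod volume) →
      κ * rieszEnergy j h = ∫ p : E × ℝ,
        (p.2 ^ (finrank ℝ E + 1 + j))⁻¹ * (∫ x in ball p.1 p.2, h x) ^ 2 ∂volume.prod volume := by
  obtain ⟨κ, hκ0, hκ⟩ := exists_pos_integral_ballKernel_eq (E := E) hj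
  refine ⟨κ, hκ0, fun h hm hint => ?_⟩
  calc κ * rieszEnergy j h
      = ∫ q : E × E, ∫ p, h q.1 * h q.2 * ballKernel (finrank ℝ E + 1 + j) q.1 q.2 p
          ∂volume.prod volume ∂volume.prod volume := by
        rw [rieszEnergy, ← integral_const_mul]
        refine integral_congr_ae ?_
        filter_upwards [ae_fst_ne_snd] with q hq
        rw [integral_const_mul, hκ _ _ hq]
        ring
    _ = _ := by
        rw [integral_integral_swap (integrable_mul_mul_ballKernel hj hm hint)]
        simp only [integral_mul_mul_ballKernel]

theorem exists_pos_mul_integral_sq_le_rieszEnergy (hj0 : 0 < j) (hj : j < finrank ℝ E) {c : ℝ}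
    (hc : 0 < c) :
    ∃ A > 0, ∀ h : E → ℝ, ContDiff ℝ 1 h → HasCompactSupport h →
      c ^ 2 * ∫ z, ‖fderiv ℝ h z‖ ^ 2 ≤ ∫ z, h z ^ 2 → A * ∫ z, h z ^ 2 ≤ rieszEnergy j h := by
  have : Nontrivial E := Module.nontrivial_of_finrank_pos (Nat.zero_lt_of_lt hj)
  obtain ⟨κ, hκ0, hκ⟩ := exists_pos_mul_rieszEnergy_eq (E := E) hj0
  have hball : 0 < volume.real (ball (0 : E) 1) :=
    ENNReal.toReal_pos (measure_ball_pos _ _ one_pos).ne' measure_ball_lt_top.ne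
  have hradius : 0 < ∫ r in Set.Ioc 0 (c / 2), r ^ (finrank ℝ E - 1 - j) := by
    rw [← intervalIntegral.integral_of_le (by positivity), integral_pow,
      zero_pow (Nat.succ_ne_zero _), sub_zero]
    positivity
  refine ⟨κ⁻¹ * ((∫ r in Set.Ioc 0 (c / 2), r ^ (finrank ℝ E - 1 - j)) *
    (volume.real (ball (0 : E) 1) ^ 2 / 4)), by positivity, fun h hh hsupp hgrad => ?_⟩
  obtain ⟨B, hB⟩ := hh.continuous.bounded_above_of_compact_support hsupp
  have hdensity := integrable_mul_mul_inv_dist_pow hj (hh.continuous.integrable_of_hasCompactSupport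
    hsupp) hB (μ := volume)
  have hL : MemLp h 2 volume := hh.continuous.memLp_of_hasCompactSupport hsupp
  have hd : MemLp (fderiv ℝ h) 2 volume :=
    (hh.continuous_fderiv one_ne_zero).memLp_of_hasCompactSupport (hsupp.fderiv ℝ)
  have hint := integrable_inv_pow_mul_sq_setIntegral_ball hj0 hh.continuous.aestronglyMeasurable
    hdensity
  rw [mul_assoc, mul_assoc, inv_mul_le_iff₀ hκ0,
    hκ h hh.continuous.aestronglyMeasurable hdensity]
  exact setIntegral_pow_mul_le_integral_inv_pow_mul_sq hh hL hd hgrad hj hint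

end RieszEnergy

section XrayTransform

variable {n : ℕ} {R M M₁ M₂ L : ℝ} {f f₁ f₂ : Euc n → ℝ} {x θ : Euc n}

/-- An attenuation coefficient: a measurable function supported in the open ball of radius `R` about
the origin and bounded pointwise by `M`. This is all the regularity that linearizing the single
pixel transform requires. -/
structure IsAttenuation (R M : ℝ) (f : Euc n → ℝ) : Prop where
  measurable : Measurable f
  support_subset : Function.support f ⊆ ball 0 R
  abs_le : ∀ x, |f x| ≤ M

namespace IsAttenuation

theorem sub (h₁ : IsAttenuation R M₁ f₁) (h₂ : IsAttenuation R M₂ f₂) :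
    IsAttenuation R (M₁ + M₂) fun y => f₁ y - f₂ y where
  measurable := h₁.measurable.sub h₂.measurable
  support_subset := (Function.support_sub f₁ f₂).trans
    (Set.union_subset h₁.support_subset h₂.support_subset)
  abs_le x := (abs_sub _ _).trans (add_le_add (h₁.abs_le x) (h₂.abs_le x))

theorem hasCompactSupport (hf : IsAttenuation R M f) : HasCompactSupport f :=
  .of_support_subset_isCompact (isCompact_closedBall 0 R)
    (hf.support_subset.trans ball_subset_closedBall)

theorem memLp (hf : IsAttenuation R M f) (p : ENNReal) : MemLp f p volume := by
  have : IsFiniteMeasure (volume.restrict (ball (0 : Euc n) R)) :=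
    isFiniteMeasure_restrict.2 measure_ball_lt_top.ne
  rw [← Set.indicator_eq_self.2 hf.support_subset, memLp_indicator_iff_restrict measurableSet_ball]
  exact .of_bound hf.measurable.aestronglyMeasurable M (.of_forall hf.abs_le)

theorem integrable (hf : IsAttenuation R M f) : Integrable f :=
  memLp_one_iff_integrable.1 (hf.memLp 1)

theorem support_comp_line_subset (hf : IsAttenuation R M f) (hθ : ‖θ‖ = 1) (hL : R + ‖x‖ ≤ L) :
    Function.support (fun s : ℝ => f (x + s • θ)) ⊆ Set.Icc (-L) L := by
  intro s hs
  have hball := mem_ball_zero_iff.1 (hf.support_subset hs)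
  have htri := norm_sub_le (x + s • θ) x
  rw [add_sub_cancel_left, norm_smul, hθ, mul_one, Real.norm_eq_abs] at htri
  exact _root_.abs_le.1 (by linarith)

theorem integrable_comp_line (hf : IsAttenuation R M f) (x : Euc n) (hθ : ‖θ‖ = 1) :
    Integrable fun s : ℝ => f (x + s • θ) := by
  rw [← integrableOn_iff_integrable_of_support_subset (hf.support_comp_line_subset hθ le_rfl)]
  exact .of_bound measure_Icc_lt_top
    (hf.measurable.comp (by fun_prop)).aestronglyMeasurable M (.of_forall fun s => hf.abs_le _)

theorem Xray_sub (h₁ : IsAttenuation R M₁ f₁) (h₂ : IsAttenuation R M₂ f₂) (x : Euc n)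
    (hθ : ‖θ‖ = 1) : Xray (fun y => f₁ y - f₂ y) x θ = Xray f₁ x θ - Xray f₂ x θ :=
  integral_sub (h₁.integrable_comp_line x hθ) (h₂.integrable_comp_line x hθ)

theorem Xray_eq_setIntegral (hf : IsAttenuation R M f) (hx : x ∈ ball 0 R) (hθ : ‖θ‖ = 1) :
    Xray f x θ = ∫ s in Set.Icc (-(2 * R)) (2 * R), f (x + s • θ) :=
  (setIntegral_eq_integral_of_forall_compl_eq_zero fun _ hs => Function.notMem_support.1 fun hne =>
    hs (hf.support_comp_line_subset hθ (by linarith [mem_ball_zero_iff.1 hx]) hne)).symm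

theorem abs_Xray_le_setIntegral_abs (hf : IsAttenuation R M f) (hx : x ∈ ball 0 R)
    (hθ : ‖θ‖ = 1) :
    |Xray f x θ| ≤ ∫ s in Set.Icc (-(2 * R)) (2 * R), |f (x + s • θ)| := by
  rw [hf.Xray_eq_setIntegral hx hθ]
  exact abs_integral_le_integral_abs

theorem abs_Xray_le (hf : IsAttenuation R M f) (hx : x ∈ ball 0 R) (hθ : ‖θ‖ = 1) :
    |Xray f x θ| ≤ 4 * R * M := by
  have hR : 0 < R := pos_of_mem_ball hx
  rw [hf.Xray_eq_setIntegral hx hθ, ← Real.norm_eq_abs]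
  refine (norm_setIntegral_le_of_norm_le_const measure_Icc_lt_top fun s _ =>
    hf.abs_le _).trans_eq ?_
  rw [Real.volume_real_Icc_of_le (by linarith)]
  ring

end IsAttenuation

theorem stronglyMeasurable_Xray (hf : Measurable f) :
    StronglyMeasurable fun q : Euc n × sphere (0 : Euc n) 1 => Xray f q.1 q.2 :=
  StronglyMeasurable.integral_prod_right
    (f := fun (q : Euc n × sphere (0 : Euc n) 1) (s : ℝ) => f (q.1 + s • (q.2 : Euc n)))
    (hf.comp (by fun_prop)).stronglyMeasurable

instance : IsFiniteMeasure (sphereMeasure n) :=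
  inferInstanceAs (IsFiniteMeasure (volume : Measure (Euc n)).toSphere)

namespace IsAttenuation

variable {Φ : ℝ → ℝ}

theorem exists_norm_comp_Xray_le (hf : IsAttenuation R M f) (hΦ : Continuous Φ) :
    ∃ C, ∀ x ∈ ball 0 R, ∀ θ : sphere (0 : Euc n) 1, ‖Φ (Xray f x θ)‖ ≤ C := by
  obtain ⟨C, hC⟩ :=
    (isCompact_Icc (a := -(4 * R * M)) (b := 4 * R * M)).exists_bound_of_continuousOn
      hΦ.continuousOn
  exact ⟨C, fun x hx θ => hC _ (_root_.abs_le.1 (hf.abs_Xray_le hx (norm_eq_of_mem_sphere θ)))⟩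

theorem integrable_comp_Xray (hf : IsAttenuation R M f) (hΦ : Continuous Φ) (hx : x ∈ ball 0 R) :
    Integrable (fun θ : sphere (0 : Euc n) 1 => Φ (Xray f x θ)) (sphereMeasure n) := by
  obtain ⟨C, hC⟩ := hf.exists_norm_comp_Xray_le hΦ
  have hX := (stronglyMeasurable_Xray hf.measurable).comp_measurable
    (measurable_prodMk_left (x := x))
  exact .of_bound (hΦ.comp_stronglyMeasurable hX).aestronglyMeasurable C (.of_forall (hC x hx))

theorem memLp_integral_comp_Xray (hf : IsAttenuation R M f) (hΦ : Continuous Φ) (p : ENNReal) :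
    MemLp (fun x => ∫ θ : sphere (0 : Euc n) 1, Φ (Xray f x θ) ∂sphereMeasure n) p
      (volume.restrict (ball 0 R)) := by
  have : IsFiniteMeasure (volume.restrict (ball (0 : Euc n) R)) :=
    isFiniteMeasure_restrict.2 measure_ball_lt_top.ne
  obtain ⟨C, hC⟩ := hf.exists_norm_comp_Xray_le hΦ
  refine .of_bound (hΦ.comp_stronglyMeasurable
    (stronglyMeasurable_Xray hf.measurable)).integral_prod_right'.aestronglyMeasurable
    (C * (sphereMeasure n).real Set.univ) ?_
  filter_upwards [ae_restrict_mem measurableSet_ball] with x hx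
  exact norm_integral_le_of_norm_le_const (.of_forall (hC x hx))

theorem memLp_singlePixel (hf : IsAttenuation R M f) (p : ENNReal) :
    MemLp (singlePixel f) p (volume.restrict (ball 0 R)) :=
  hf.memLp_integral_comp_Xray (Φ := fun t => exp (-t)) (by fun_prop) p

theorem memLp_normalOp (hf : IsAttenuation R M f) (p : ENNReal) :
    MemLp (normalOp f) p (volume.restrict (ball 0 R)) :=
  hf.memLp_integral_comp_Xray continuous_id p

end IsAttenuation

end XrayTransform

section NormalOperator

variable {n : ℕ} {R M : ℝ} {f : Euc n → ℝ}

theorem integral_eq_setIntegral_Ioi_add_comp_neg {F : Type*} [NormedAddCommGroup F]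
    [NormedSpace ℝ F] {g : ℝ → F} (hg : Integrable g) :
    ∫ s, g s = ∫ s in Set.Ioi (0 : ℝ), (g s + g (-s)) := by
  have hneg := integral_comp_neg_Ioi (0 : ℝ) g
  rw [neg_zero] at hneg
  rw [integral_add hg.integrableOn hg.comp_neg.integrableOn, hneg,
    ← integral_add_compl measurableSet_Ioi hg (s := Set.Ioi 0), Set.compl_Ioi]

theorem IsAttenuation.normalOp_eq_integral_inv_dist_pow (hf : IsAttenuation R M f) (hn : 0 < n)
    (x : Euc n) : normalOp f x = 2 * ∫ y, f y * (dist x y ^ (n - 1))⁻¹ := by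
  have : NeZero n := ⟨hn.ne'⟩
  let P (y : Euc n) : ℝ := f (x + y) * (‖y‖ ^ (n - 1))⁻¹
  have hshift : (fun y => f (x + y) * (dist x (x + y) ^ (n - 1))⁻¹) = P := by simp [P]
  have hP : Integrable P := by
    rw [← hshift]
    exact (integrable_mul_inv_dist_pow (μ := volume) (by simp [hn]) hf.integrable
      hf.abs_le x).comp_add_left x
  have hline (θ : sphere (0 : Euc n) 1) : Xray f x θ =
      ∫ s in Set.Ioi (0 : ℝ), s ^ (finrank ℝ (Euc n) - 1) •
        (P (s • (θ : Euc n)) + P (-(s • (θ : Euc n)))) := by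
    have hθ := norm_eq_of_mem_sphere θ
    rw [Xray, integral_eq_setIntegral_Ioi_add_comp_neg (hf.integrable_comp_line x hθ)]
    refine setIntegral_congr_fun measurableSet_Ioi fun s (hs : 0 < s) => ?_
    simp only [P, finrank_euclideanSpace_fin, norm_neg, norm_smul, hθ, Real.norm_of_nonneg hs.le,
      neg_smul, smul_eq_mul]
    field_simp
  calc normalOp f x = ∫ y, (P y + P (-y)) := by
        rw [integral_eq_integral_toSphere (g := fun y => P y + P (-y)) (hP.add hP.comp_neg)]
        exact integral_congr_ae (.of_forall hline)
    _ = 2 * ∫ y, P y := by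
        rw [integral_add hP hP.comp_neg, integral_neg_eq_self, two_mul]
    _ = _ := by
        rw [← hshift, integral_add_left_eq_self fun y => f y * (dist x y ^ (n - 1))⁻¹]

theorem IsAttenuation.integral_mul_normalOp (hf : IsAttenuation R M f) (hn : 0 < n) :
    ∫ x, f x * normalOp f x = 2 * rieszEnergy (n - 1) f := by
  have hint := integrable_mul_mul_inv_dist_pow (j := n - 1) (μ := volume) (by simp [hn])
    hf.integrable hf.abs_le
  rw [rieszEnergy, integral_prod _ hint, ← integral_const_mul]
  congr with x
  simp only [hf.normalOp_eq_integral_inv_dist_pow hn, mul_assoc, integral_const_mul]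
  ring

theorem exists_pos_mul_integral_sq_le_integral_mul_normalOp (hn : 2 ≤ n) {c : ℝ} (hc : 0 < c) :
    ∃ A > 0, ∀ (R M : ℝ) (h : Euc n → ℝ), ContDiff ℝ 1 h → IsAttenuation R M h →
      c ^ 2 * ∫ z, ‖fderiv ℝ h z‖ ^ 2 ≤ ∫ z, h z ^ 2 →
      A * ∫ z, h z ^ 2 ≤ ∫ x, h x * normalOp h x := by
  obtain ⟨A, hA, henergy⟩ := exists_pos_mul_integral_sq_le_rieszEnergy (E := Euc n) (j := n - 1)
    (by omega) (by rw [finrank_euclideanSpace_fin]; omega) hc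
  refine ⟨2 * A, by positivity, fun R M h hh hatt hgrad => ?_⟩
  rw [hatt.integral_mul_normalOp (by omega), mul_assoc]
  have := henergy h hh hatt.hasCompactSupport hgrad
  gcongr

end NormalOperator

section Linearization

variable {n : ℕ} {R M : ℝ} {f f₁ f₂ : Euc n → ℝ} {x : Euc n} {U : Set (Euc n)}

theorem abs_exp_neg_sub_add_le {a b m : ℝ} (ha : |a| ≤ m) (hb : |b| ≤ m) (hm : m ≤ 1) :
    |exp (-a) - exp (-b) + (a - b)| ≤ 2 * m * |a - b| := by
  have hderiv (t : ℝ) : HasDerivAt (fun t : ℝ => exp (-t) + t) (-exp (-t) + 1) t :=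
    ((hasDerivAt_neg t).exp.add (hasDerivAt_id t)).congr_deriv (by rw [mul_neg_one])
  have hbound (t : ℝ) (ht : t ∈ Set.Icc (-m) m) : ‖-exp (-t) + 1‖ ≤ 2 * m := by
    have ht' : |-t| ≤ m := by rw [abs_neg]; exact abs_le.2 ht
    rw [Real.norm_eq_abs, neg_add_eq_sub, abs_sub_comm]
    linarith [Real.abs_exp_sub_one_le (ht'.trans hm)]
  have hmvt := (convex_Icc (-m) m).norm_image_sub_le_of_norm_hasDerivWithin_le
    (fun t _ => (hderiv t).hasDerivWithinAt) hbound (abs_le.1 hb) (abs_le.1 ha)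
  rwa [Real.norm_eq_abs, Real.norm_eq_abs, add_sub_add_comm] at hmvt

/-- The measure `dθ ds` on pairs of a direction `θ` and a parameter `s ∈ [-2R, 2R]`. Pushed forward
along `(θ, s) ↦ x + sθ` for a point `x` of the ball of radius `R`, it covers the intersections of
all lines through `x` with that ball. -/
noncomputable def segmentMeasure (n : ℕ) (R : ℝ) : Measure (sphere (0 : Euc n) 1 × ℝ) :=
  (sphereMeasure n).prod (volume.restrict (Set.Icc (-(2 * R)) (2 * R)))

instance : IsFiniteMeasure (segmentMeasure n R) :=
  inferInstanceAs (IsFiniteMeasure ((sphereMeasure n).prod _))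

theorem IsAttenuation.integrable_comp_segment (hf : IsAttenuation R M f) (x : Euc n) :
    Integrable (fun b => f (x + b.2 • (b.1 : Euc n))) (segmentMeasure n R) :=
  .of_bound (hf.measurable.comp (by fun_prop)).aestronglyMeasurable M
    (.of_forall fun _ => hf.abs_le _)

/-- The error `Kf₁ - Kf₂ + N(f₁ - f₂)` made in replacing the single pixel transform by its
linearization at zero, which is minus the normal operator. -/
noncomputable def linearizationRemainder (f₁ f₂ : Euc n → ℝ) (x : Euc n) : ℝ :=
  singlePixel f₁ x - singlePixel f₂ x + normalOp (fun y => f₁ y - f₂ y) x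

theorem linearizationRemainder_eq (h₁ : IsAttenuation R M f₁) (h₂ : IsAttenuation R M f₂)
    (hx : x ∈ ball 0 R) :
    linearizationRemainder f₁ f₂ x = ∫ θ : sphere (0 : Euc n) 1,
      (exp (-Xray f₁ x θ) - exp (-Xray f₂ x θ) + (Xray f₁ x θ - Xray f₂ x θ))
        ∂sphereMeasure n := by
  have hexp {f : Euc n → ℝ} (hf : IsAttenuation R M f) :=
    hf.integrable_comp_Xray (Φ := fun t => exp (-t)) (by fun_prop) hx
  have hX {f : Euc n → ℝ} (hf : IsAttenuation R M f) := hf.integrable_comp_Xray continuous_id hx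
  calc linearizationRemainder f₁ f₂ x
      = ∫ θ : sphere (0 : Euc n) 1, (exp (-Xray f₁ x θ) - exp (-Xray f₂ x θ)) ∂sphereMeasure n +
          ∫ θ : sphere (0 : Euc n) 1, (Xray f₁ x θ - Xray f₂ x θ) ∂sphereMeasure n := by
        rw [integral_sub (hexp h₁) (hexp h₂), linearizationRemainder, normalOp]
        congr 1
        exact integral_congr_ae (.of_forall fun θ => h₁.Xray_sub h₂ x (norm_eq_of_mem_sphere θ))
    _ = _ := (integral_add ((hexp h₁).sub (hexp h₂)) ((hX h₁).sub (hX h₂))).symm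

theorem abs_linearizationRemainder_le (h₁ : IsAttenuation R M f₁) (h₂ : IsAttenuation R M f₂)
    (hRM : 4 * R * M ≤ 1) (hx : x ∈ ball 0 R) :
    |linearizationRemainder f₁ f₂ x| ≤ 8 * R * M *
      ∫ b, |f₁ (x + b.2 • (b.1 : Euc n)) - f₂ (x + b.2 • (b.1 : Euc n))| ∂segmentMeasure n R := by
  have hR : 0 < R := pos_of_mem_ball hx
  have hM : 0 ≤ M := (abs_nonneg _).trans (h₁.abs_le 0)
  have hint := ((h₁.sub h₂).integrable_comp_segment x).abs
  have hpointwise (θ : sphere (0 : Euc n) 1) :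
      ‖exp (-Xray f₁ x θ) - exp (-Xray f₂ x θ) + (Xray f₁ x θ - Xray f₂ x θ)‖ ≤
        8 * R * M * ∫ s in Set.Icc (-(2 * R)) (2 * R),
          |f₁ (x + s • (θ : Euc n)) - f₂ (x + s • (θ : Euc n))| := by
    have hθ := norm_eq_of_mem_sphere θ
    refine (abs_exp_neg_sub_add_le (h₁.abs_Xray_le hx hθ) (h₂.abs_Xray_le hx hθ) hRM).trans ?_
    rw [← h₁.Xray_sub h₂ x hθ, show 2 * (4 * R * M) = 8 * R * M by ring]
    gcongr
    exact (h₁.sub h₂).abs_Xray_le_setIntegral_abs hx hθ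
  rw [linearizationRemainder_eq h₁ h₂ hx, segmentMeasure, integral_prod _ hint,
    ← integral_const_mul]
  exact norm_integral_le_of_norm_le (hint.integral_prod_left.const_mul _) (.of_forall hpointwise)

theorem memLp_linearizationRemainder (h₁ : IsAttenuation R M f₁) (h₂ : IsAttenuation R M f₂)
    (p : ENNReal) :
    MemLp (linearizationRemainder f₁ f₂) p (volume.restrict (ball 0 R)) :=
  ((h₁.memLp_singlePixel p).sub (h₂.memLp_singlePixel p)).add ((h₁.sub h₂).memLp_normalOp p)

theorem setIntegral_sq_linearizationRemainder_le (h₁ : IsAttenuation R M f₁)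
    (h₂ : IsAttenuation R M f₂) (hRM : 4 * R * M ≤ 1) :
    ∫ x in ball 0 R, linearizationRemainder f₁ f₂ x ^ 2 ≤
      (8 * R * M * (segmentMeasure n R).real Set.univ) ^ 2 * ∫ x, (f₁ x - f₂ x) ^ 2 := by
  let W (x : Euc n) : ℝ :=
    ∫ b, |f₁ (x + b.2 • (b.1 : Euc n)) - f₂ (x + b.2 • (b.1 : Euc n))| ∂segmentMeasure n R
  have habs := ((h₁.sub h₂).memLp 2).abs
  have hφ : Measurable fun b : sphere (0 : Euc n) 1 × ℝ => b.2 • (b.1 : Euc n) := by fun_prop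
  have hW : Integrable (fun x => (8 * R * M) ^ 2 * W x ^ 2) :=
    (memLp_integral_comp_add habs hφ).integrable_sq.const_mul _
  calc ∫ x in ball 0 R, linearizationRemainder f₁ f₂ x ^ 2
      ≤ ∫ x in ball 0 R, (8 * R * M) ^ 2 * W x ^ 2 := by
        refine setIntegral_mono_on (memLp_linearizationRemainder h₁ h₂ 2).integrable_sq
          hW.integrableOn measurableSet_ball fun x hx => ?_
        rw [← sq_abs, ← mul_pow]
        exact pow_le_pow_left₀ (abs_nonneg _) (abs_linearizationRemainder_le h₁ h₂ hRM hx) 2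
    _ ≤ ∫ x, (8 * R * M) ^ 2 * W x ^ 2 :=
        setIntegral_le_integral hW (.of_forall fun x => by positivity)
    _ ≤ (8 * R * M) ^ 2 * ((segmentMeasure n R).real Set.univ ^ 2 *
          ∫ x, |f₁ x - f₂ x| ^ 2) := by
        rw [integral_const_mul]
        gcongr
        exact integral_sq_integral_comp_add_le habs hφ
    _ = _ := by
        simp only [sq_abs]
        ring

theorem sqrt_setIntegral_sq_linearizationRemainder_le (h₁ : IsAttenuation R M f₁)
    (h₂ : IsAttenuation R M f₂) (hR : 0 ≤ R) (hRM : 4 * R * M ≤ 1) (hU : U ⊆ ball 0 R) :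
    √(∫ x in U, linearizationRemainder f₁ f₂ x ^ 2) ≤
      8 * R * M * (segmentMeasure n R).real Set.univ * √(∫ x, (f₁ x - f₂ x) ^ 2) := by
  have hM : 0 ≤ M := (abs_nonneg _).trans (h₁.abs_le 0)
  rw [← Real.sqrt_sq (show 0 ≤ 8 * R * M * (segmentMeasure n R).real Set.univ by positivity),
    ← Real.sqrt_mul (sq_nonneg _)]
  exact sqrt_le_sqrt ((setIntegral_mono_set (memLp_linearizationRemainder h₁ h₂ 2).integrable_sq
    (.of_forall fun x => sq_nonneg _) hU.eventuallyLE).trans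
    (setIntegral_sq_linearizationRemainder_le h₁ h₂ hRM))

theorem integral_mul_normalOp_eq_sub (h₁ : IsAttenuation R M f₁) (h₂ : IsAttenuation R M f₂)
    (hU : U ⊆ ball 0 R) (hs : Function.support (fun x => f₁ x - f₂ x) ⊆ U) :
    ∫ x, (f₁ x - f₂ x) * normalOp (fun y => f₁ y - f₂ y) x =
      (∫ x in U, (f₁ x - f₂ x) * linearizationRemainder f₁ f₂ x) -
        ∫ x in U, (f₁ x - f₂ x) * (singlePixel f₁ x - singlePixel f₂ x) := by
  have hle := Measure.restrict_mono_set volume hU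
  have hh := ((h₁.sub h₂).memLp 2).restrict U
  have hρ := (memLp_linearizationRemainder h₁ h₂ 2).mono_measure hle
  have hK := ((h₁.memLp_singlePixel 2).sub (h₂.memLp_singlePixel 2)).mono_measure hle
  refine Eq.trans ?_ (integral_sub (hh.integrable_mul hρ) (hh.integrable_mul hK))
  rw [← setIntegral_eq_integral_of_forall_compl_eq_zero (s := U) fun x hx => by
    rw [Function.notMem_support.1 fun hx' => hx (hs hx'), zero_mul]]
  simp only [linearizationRemainder, ← mul_sub, add_sub_cancel_left]

theorem integral_mul_normalOp_le (h₁ : IsAttenuation R M f₁) (h₂ : IsAttenuation R M f₂)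
    (hR : 0 ≤ R) (hRM : 4 * R * M ≤ 1) (hU : U ⊆ ball 0 R)
    (hs : Function.support (fun x => f₁ x - f₂ x) ⊆ U) :
    ∫ x, (f₁ x - f₂ x) * normalOp (fun y => f₁ y - f₂ y) x ≤
      √(∫ x, (f₁ x - f₂ x) ^ 2) *
        (8 * R * M * (segmentMeasure n R).real Set.univ * √(∫ x, (f₁ x - f₂ x) ^ 2) +
          √(∫ x in U, (singlePixel f₁ x - singlePixel f₂ x) ^ 2)) := by
  have hle := Measure.restrict_mono_set volume hU
  have hh := (h₁.sub h₂).memLp 2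
  have hρ := (memLp_linearizationRemainder h₁ h₂ 2).mono_measure hle
  have hK : MemLp (fun x => singlePixel f₁ x - singlePixel f₂ x) 2 (volume.restrict U) :=
    ((h₁.memLp_singlePixel 2).sub (h₂.memLp_singlePixel 2)).mono_measure hle
  have hpairρ := le_of_abs_le (abs_integral_mul_le_sqrt_mul_sqrt (hh.restrict U) hρ)
  have hpairK := neg_le_of_abs_le (abs_integral_mul_le_sqrt_mul_sqrt (hh.restrict U) hK)
  calc _ ≤ √(∫ x in U, (f₁ x - f₂ x) ^ 2) * (√(∫ x in U, linearizationRemainder f₁ f₂ x ^ 2) +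
          √(∫ x in U, (singlePixel f₁ x - singlePixel f₂ x) ^ 2)) := by
        rw [integral_mul_normalOp_eq_sub h₁ h₂ hU hs]
        linarith
    _ ≤ _ := mul_le_mul
        (sqrt_le_sqrt (setIntegral_le_integral hh.integrable_sq (.of_forall fun x => sq_nonneg _)))
        (add_le_add (sqrt_setIntegral_sq_linearizationRemainder_le h₁ h₂ hR hRM hU) le_rfl)
        (by positivity) (sqrt_nonneg _)

end Linearization

section Stability

variable {n : ℕ}

theorem L2norm_eq_sqrt (f : Euc n → ℝ) : L2norm f = √(∫ x, f x ^ 2) :=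
  (Real.sqrt_eq_rpow _).symm

theorem L2norm_nonneg (f : Euc n → ℝ) : 0 ≤ L2norm f := by
  rw [L2norm_eq_sqrt]
  positivity

theorem sq_L2norm (f : Euc n → ℝ) : L2norm f ^ 2 = ∫ x, f x ^ 2 := by
  rw [L2norm_eq_sqrt, Real.sq_sqrt (integral_nonneg fun x => sq_nonneg _)]

theorem sq_mul_integral_sq_norm_fderiv_le {c : ℝ} (hc : 0 ≤ c) {h : Euc n → ℝ}
    (hgrad : c * (∫ x, ‖fderiv ℝ h x‖ ^ 2) ^ ((1 : ℝ) / 2) ≤ L2norm h) :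
    c ^ 2 * ∫ x, ‖fderiv ℝ h x‖ ^ 2 ≤ ∫ x, h x ^ 2 := by
  have hD : 0 ≤ ∫ x, ‖fderiv ℝ h x‖ ^ 2 := integral_nonneg fun x => sq_nonneg _
  have hsq := pow_le_pow_left₀ (by positivity) hgrad 2
  rwa [← Real.sqrt_eq_rpow, mul_pow, Real.sq_sqrt hD, sq_L2norm] at hsq

theorem exists_pos_mul_le_one_and_mul_le {a b A : ℝ} (ha : 0 < a) (hb : 0 ≤ b) (hA : 0 < A) :
    ∃ M > 0, a * M ≤ 1 ∧ b * M ≤ A := by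
  refine ⟨min a⁻¹ (A / (b + 1)), by positivity, ?_, ?_⟩
  · calc a * min a⁻¹ (A / (b + 1)) ≤ a * a⁻¹ := by gcongr; exact min_le_left _ _
      _ = 1 := mul_inv_cancel₀ ha.ne'
  · calc b * min a⁻¹ (A / (b + 1)) ≤ (b + 1) * (A / (b + 1)) := by
          gcongr
          exacts [by linarith, min_le_right _ _]
      _ = A := mul_div_cancel₀ A (by positivity)

theorem abs_le_of_iSup_add_iSup_le {E : Type*} [NormedAddCommGroup E] [NormedSpace ℝ E] {f : E → ℝ}
    (hf : Continuous f) {S : Set E} (hS : IsCompact S) (hs : Function.support f ⊆ S) {M : ℝ}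
    (hM : (⨆ x, |f x|) + (⨆ x, ‖fderiv ℝ f x‖) ≤ M) (x : E) : |f x| ≤ M := by
  obtain ⟨B, hB⟩ :=
    (HasCompactSupport.of_support_subset_isCompact hS hs).exists_bound_of_continuous hf
  have hle : |f x| ≤ ⨆ x, |f x| := le_ciSup (f := fun x => |f x|) ⟨B, Set.forall_mem_range.2 hB⟩ x
  linarith [Real.iSup_nonneg fun x => norm_nonneg (fderiv ℝ f x)]

theorem singlePixel_lower_stability_general (hn : 2 ≤ n) {U : Set (Euc n)}
    (hU : Bornology.IsBounded U) {c : ℝ} (hc : 0 < c) :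
    ∃ M₀ > 0, ∃ C > 0, ∀ f₁ f₂ : Euc n → ℝ,
      Measurable f₁ → Measurable f₂ → ContDiff ℝ 1 (fun x => f₁ x - f₂ x) →
      Function.support f₁ ⊆ U → Function.support f₂ ⊆ U →
      (∀ x, |f₁ x| ≤ M₀) → (∀ x, |f₂ x| ≤ M₀) →
      c * (∫ x, ‖fderiv ℝ (fun y => f₁ y - f₂ y) x‖ ^ 2) ^ ((1 : ℝ) / 2) ≤
        L2norm (fun x => f₁ x - f₂ x) →
      C * L2norm (fun x => f₁ x - f₂ x) ≤
        (∫ x in U, (singlePixel f₁ x - singlePixel f₂ x) ^ 2) ^ ((1 : ℝ) / 2) := by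
  obtain ⟨R, hR, hUR⟩ := hU.subset_ball_lt 0 0
  obtain ⟨A, hA, hcoercive⟩ := exists_pos_mul_integral_sq_le_integral_mul_normalOp hn hc
  obtain ⟨M₀, hM₀, hsmall, hremainder⟩ := exists_pos_mul_le_one_and_mul_le (a := 4 * R)
    (b := 8 * R * (segmentMeasure n R).real Set.univ) (by positivity) (by positivity) (half_pos hA)
  refine ⟨M₀, hM₀, A / 2, by positivity, fun f₁ f₂ hf₁ hf₂ hdiff hs₁ hs₂ hb₁ hb₂ hgrad => ?_⟩
  have h₁ : IsAttenuation R M₀ f₁ := ⟨hf₁, hs₁.trans hUR, hb₁⟩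
  have h₂ : IsAttenuation R M₀ f₂ := ⟨hf₂, hs₂.trans hUR, hb₂⟩
  have hlower := hcoercive _ _ _ hdiff (h₁.sub h₂) (sq_mul_integral_sq_norm_fderiv_le hc.le hgrad)
  have hupper := integral_mul_normalOp_le h₁ h₂ hR.le hsmall hUR
    ((Function.support_sub f₁ f₂).trans (Set.union_subset hs₁ hs₂))
  rw [← sq_L2norm] at hlower
  rw [← L2norm_eq_sqrt, Real.sqrt_eq_rpow (∫ x in U, _)] at hupper
  obtain hL | hL := (L2norm_nonneg fun x => f₁ x - f₂ x).eq_or_lt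
  · rw [← hL, mul_zero]
    positivity
  · rw [sq, mul_left_comm] at hlower
    have hcancel := le_of_mul_le_mul_left (hlower.trans hupper) hL
    have habsorb := mul_le_mul_of_nonneg_right hremainder hL.le
    linarith

end Stability

/-- For `n ≥ 3`, open bounded `Ω, Ω₁` with `closure Ω ⊂ Ω₁`, and a fixed `c > 0`,
there exist `M₀ > 0` and `C̃ > 0` such that for every `0 < M ≤ M₀` and all `C¹` functions
`f₁, f₂` supported in `closure Ω` with `‖f_j‖_{C¹} ≤ M` and
`‖f₁ − f₂‖_{L²} ≥ c‖∇(f₁ − f₂)‖_{L²}`, one has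
`C̃ ‖f₁ − f₂‖_{L²(ℝⁿ)} ≤ ‖Kf₁ − Kf₂‖_{H¹(Ω₁)}`. -/
theorem singlePixel_lower_stability (n : ℕ) (hn : 3 ≤ n) (Ω Ω₁ : Set (Euc n))
    (hΩo : IsOpen Ω) (hΩb : Bornology.IsBounded Ω)
    (hΩ₁o : IsOpen Ω₁) (hΩ₁b : Bornology.IsBounded Ω₁) (hΩΩ₁ : closure Ω ⊆ Ω₁)
    (c : ℝ) (hc : 0 < c) :
    ∃ M₀ > 0, ∃ C' > 0, ∀ M : ℝ, 0 < M → M ≤ M₀ → ∀ f₁ f₂ : Euc n → ℝ,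
      ContDiff ℝ 1 f₁ → ContDiff ℝ 1 f₂ →
      Function.support f₁ ⊆ closure Ω → Function.support f₂ ⊆ closure Ω →
      (⨆ x : Euc n, |f₁ x|) + (⨆ x : Euc n, ‖fderiv ℝ f₁ x‖) ≤ M →
      (⨆ x : Euc n, |f₂ x|) + (⨆ x : Euc n, ‖fderiv ℝ f₂ x‖) ≤ M →
      c * (∫ x : Euc n, ‖fderiv ℝ (fun y => f₁ y - f₂ y) x‖ ^ 2) ^ ((1 : ℝ) / 2) ≤
        L2norm (fun y => f₁ y - f₂ y) →
      C' * L2norm (fun y => f₁ y - f₂ y) ≤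
        H1norm Ω₁ (fun x => singlePixel f₁ x - singlePixel f₂ x) := by
  obtain ⟨M₀, hM₀, C, hC, hstable⟩ :=
    singlePixel_lower_stability_general (n := n) (by omega) hΩ₁b hc
  have hΩc := hΩb.isCompact_closure
  exact ⟨M₀, hM₀, C, hC, fun M _ hMM₀ f₁ f₂ h₁ h₂ hs₁ hs₂ hM₁ hM₂ hgrad =>
    (hstable f₁ f₂ h₁.continuous.measurable h₂.continuous.measurable (h₁.sub h₂)
      (hs₁.trans hΩΩ₁) (hs₂.trans hΩΩ₁)
      (abs_le_of_iSup_add_iSup_le h₁.continuous hΩc hs₁ (hM₁.trans hMM₀))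
      (abs_le_of_iSup_add_iSup_le h₂.continuous hΩc hs₂ (hM₂.trans hMM₀)) hgrad).trans
      (le_add_of_nonneg_right (by positivity))⟩
end

section
/- Let n ≥ 2 and let f, h : ℝⁿ → ℝ be continuous and compactly supported. Then the single pixel X-ray transform is a monotone operator in the sense that ∫_{ℝⁿ} ( Kf(x) − Kh(x) ) ( f(x) − h(x) ) dx ≤ 0. -/
/-!
Exchanging the integrals over `x` and `θ`, it suffices to treat one direction `θ`. There the factor
`G = e^{-Xf} - e^{-Xh}` is constant along lines, so the X-ray transform of `G (f - h)` is
`G (Xf - Xh)`, which is nonpositive because `t ↦ e^{-t}` is decreasing. Finally, a function whose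
integrals over all lines parallel to `θ` are nonpositive has nonpositive integral over the space.
For this last step a probability weight `φ` on `ℝ` and a functional `ℓ` with `ℓ θ = 1` replace the
choice of coordinates adapted to `θ`: `∫ φ (ℓ x) Xu(x, θ) dx = ∫ u`.
-/

open MeasureTheory Metric Real

open Function ProbabilityTheory

/-- The integral of `f` over the line through `x` in direction `θ`, with respect to the parameter
`s` of `x + s • θ`. This is the X-ray transform over an arbitrary real vector space: on `Euc n` it
is definitionally `Xray`, and like the latter it takes the junk value `0` on lines along which `f`
is not integrable. -/
noncomputable def lineIntegral {E : Type*} [AddCommGroup E] [Module ℝ E]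
    (f : E → ℝ) (x θ : E) : ℝ :=
  ∫ s : ℝ, f (x + s • θ)

theorem lineIntegral_add_smul {E : Type*} [AddCommGroup E] [Module ℝ E]
    (f : E → ℝ) (x θ : E) (t : ℝ) : lineIntegral f (x + t • θ) θ = lineIntegral f x θ := by
  simpa only [lineIntegral, add_smul, add_assoc] using
    integral_add_left_eq_self (μ := volume) (fun s : ℝ ↦ f (x + s • θ)) t

theorem norm_lineIntegral_le_mul_diam_support {E : Type*} [NormedAddCommGroup E]
    [NormedSpace ℝ E] {f : E → ℝ} {M : ℝ} (hM : ∀ x, ‖f x‖ ≤ M)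
    (hf : Bornology.IsBounded (support f)) (x : E) {θ : E} (hθ : ‖θ‖ = 1) :
    ‖lineIntegral f x θ‖ ≤ M * diam (support f) := by
  set A : Set ℝ := (fun s : ℝ ↦ x + s • θ) ⁻¹' support f
  have line_isometry : Isometry fun s : ℝ ↦ x + s • θ :=
    Isometry.of_dist_eq fun s t ↦ by simp [dist_eq_norm, ← sub_smul, norm_smul, hθ]
  have volume_A_le : volume A ≤ ediam (support f) :=
    calc volume A ≤ ediam A := Real.volume_le_diam A
      _ = ediam ((fun s : ℝ ↦ x + s • θ) '' A) := (line_isometry.ediam_image A).symm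
      _ ≤ ediam (support f) := ediam_mono (Set.image_preimage_subset _ _)
  calc ‖lineIntegral f x θ‖ = ‖∫ s in A, f (x + s • θ)‖ := by
        rw [lineIntegral, setIntegral_eq_integral_of_forall_compl_eq_zero]
        exact fun s hs ↦ notMem_support.1 hs
    _ ≤ M * volume.real A :=
        norm_setIntegral_le_of_norm_le_const (volume_A_le.trans_lt hf.ediam_ne_top.lt_top)
          fun s _ ↦ hM _
    _ ≤ M * diam (support f) := by
        gcongr
        · exact (norm_nonneg _).trans (hM x)
        · exact ENNReal.toReal_mono hf.ediam_ne_top volume_A_le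

section LineIntegral

variable {E : Type*} [NormedAddCommGroup E] [NormedSpace ℝ E] [MeasurableSpace E] [BorelSpace E]
  [SecondCountableTopology E] {μ : Measure E} [SFinite μ] [μ.IsAddLeftInvariant]

theorem aestronglyMeasurable_lineIntegral {Θ : Type*} [MeasurableSpace Θ] {ν : Measure Θ}
    [SFinite ν] {f : E → ℝ} (hf : AEStronglyMeasurable f μ) {d : Θ → E} (hd : Measurable d) :
    AEStronglyMeasurable (fun p : E × Θ ↦ lineIntegral f p.1 (d p.2)) (μ.prod ν) := by
  have quasi : Measure.QuasiMeasurePreserving (fun q : E × Θ × ℝ ↦ q.1 + q.2.2 • d q.2.1)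
      (μ.prod (ν.prod volume)) μ :=
    QuasiMeasurePreserving.prod_of_left (by fun_prop)
      (.of_forall fun q ↦ quasiMeasurePreserving_add_right μ (q.2 • d q.1))
  exact (hf.comp_quasiMeasurePreserving <| quasi.comp
    (measurePreserving_prodAssoc μ ν volume).quasiMeasurePreserving).integral_prod_right'

theorem measurePreserving_dual_add_smul {θ : E} {ℓ : StrongDual ℝ E} (hℓ : ℓ θ = 1) :
    MeasurePreserving (fun p : ℝ × E ↦ (ℓ p.2, p.2 + p.1 • θ))
      (volume.prod μ) (volume.prod μ) := by
  have shear : MeasurePreserving (fun p : ℝ × E ↦ (p.1, p.2 + p.1 • θ))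
      (volume.prod μ) (volume.prod μ) :=
    (MeasurePreserving.id volume).skew_product (g := fun s x ↦ x + s • θ) (by fun_prop)
      (.of_forall fun s ↦ map_add_right_eq_self μ (s • θ))
  have reflect : MeasurePreserving (fun p : E × ℝ ↦ (p.1, ℓ p.1 - p.2))
      (μ.prod volume) (μ.prod volume) :=
    (MeasurePreserving.id μ).skew_product (g := fun x s ↦ ℓ x - s) (by fun_prop)
      (.of_forall fun x ↦ (Measure.measurePreserving_sub_left volume (ℓ x)).map_eq)
  have := Measure.measurePreserving_swap.comp
    (reflect.comp (Measure.measurePreserving_swap.comp shear))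
  simpa [comp_def, hℓ] using this

variable {θ : E} {ℓ : StrongDual ℝ E} {φ : ℝ → ℝ} {u : E → ℝ}

theorem integrable_dual_mul_add_smul (hℓ : ℓ θ = 1) (hφ : Integrable φ) (hu : Integrable u μ) :
    Integrable (fun p : ℝ × E ↦ φ (ℓ p.2) * u (p.2 + p.1 • θ)) (volume.prod μ) :=
  (measurePreserving_dual_add_smul hℓ).integrable_comp_of_integrable (hφ.mul_prod hu)

theorem integral_dual_mul_lineIntegral (hℓ : ℓ θ = 1) (hφ : Integrable φ)
    (hu : Integrable u μ) :
    ∫ x, φ (ℓ x) * lineIntegral u x θ ∂μ = (∫ s, φ s) * ∫ x, u x ∂μ := by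
  have mp := measurePreserving_dual_add_smul (μ := μ) hℓ
  calc ∫ x, φ (ℓ x) * lineIntegral u x θ ∂μ
      = ∫ p : ℝ × E, φ (ℓ p.2) * u (p.2 + p.1 • θ) ∂volume.prod μ := by
        rw [integral_prod_symm _ (integrable_dual_mul_add_smul hℓ hφ hu)]
        simp only [integral_const_mul, lineIntegral]
    _ = ∫ p : ℝ × E, φ p.1 * u p.2 ∂volume.prod μ := by
        have meas := (hφ.mul_prod hu).aestronglyMeasurable
        rw [← mp.map_eq] at meas
        rw [← integral_map mp.aemeasurable meas, mp.map_eq]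
    _ = (∫ s, φ s) * ∫ x, u x ∂μ := integral_prod_mul φ u

theorem ae_integrable_add_smul (hθ : θ ≠ 0) (hu : Integrable u μ) :
    ∀ᵐ x ∂μ, Integrable fun s : ℝ ↦ u (x + s • θ) := by
  obtain ⟨ℓ, hℓ⟩ := SeparatingDual.exists_eq_one (R := ℝ) hθ
  have int_weighted := integrable_dual_mul_add_smul hℓ (integrable_gaussianPDFReal 0 1) hu
  filter_upwards [int_weighted.prod_left_ae] with x hx
  exact (integrable_const_mul_iff (gaussianPDFReal_pos 0 1 (ℓ x) one_ne_zero).ne'.isUnit _).1 hx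

theorem integral_nonpos_of_lineIntegral_nonpos (hθ : θ ≠ 0) (hu : Integrable u μ)
    (h : ∀ᵐ x ∂μ, lineIntegral u x θ ≤ 0) : ∫ x, u x ∂μ ≤ 0 := by
  obtain ⟨ℓ, hℓ⟩ := SeparatingDual.exists_eq_one (R := ℝ) hθ
  rw [← one_mul (∫ x, u x ∂μ), ← integral_gaussianPDFReal_eq_one 0 one_ne_zero,
    ← integral_dual_mul_lineIntegral hℓ (integrable_gaussianPDFReal 0 1) hu]
  refine integral_nonpos_of_ae ?_
  filter_upwards [h] with x hx
  exact mul_nonpos_of_nonneg_of_nonpos (gaussianPDFReal_nonneg 0 1 _) hx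

variable {Φ : ℝ → ℝ} {f h : E → ℝ}

theorem integral_antitone_lineIntegral_sub_mul_sub_nonpos (hΦ : Antitone Φ) (hθ : θ ≠ 0)
    (hf : Integrable f μ) (hh : Integrable h μ)
    (hfh : Integrable
      (fun x ↦ (Φ (lineIntegral f x θ) - Φ (lineIntegral h x θ)) * (f x - h x)) μ) :
    ∫ x, (Φ (lineIntegral f x θ) - Φ (lineIntegral h x θ)) * (f x - h x) ∂μ ≤ 0 := by
  refine integral_nonpos_of_lineIntegral_nonpos hθ hfh ?_
  filter_upwards [ae_integrable_add_smul hθ hf, ae_integrable_add_smul hθ hh] with x hfx hhx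
  calc lineIntegral
        (fun y ↦ (Φ (lineIntegral f y θ) - Φ (lineIntegral h y θ)) * (f y - h y)) x θ
      = (Φ (lineIntegral f x θ) - Φ (lineIntegral h x θ)) *
          (lineIntegral f x θ - lineIntegral h x θ) := by
        rw [lineIntegral]
        simp only [lineIntegral_add_smul, integral_const_mul]
        rw [integral_sub hfx hhx, lineIntegral, lineIntegral]
    _ ≤ 0 := antivary_iff_forall_mul_nonpos.1 (antivary_id_iff.2 hΦ) _ _

variable {Θ : Type*} [MeasurableSpace Θ] {ν : Measure Θ} {d : Θ → E}

theorem integrable_prod_comp_lineIntegral_mul [IsFiniteMeasure ν] (hd : Measurable d)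
    (hΦ : Measurable Φ) (hf : AEStronglyMeasurable f μ) (hu : Integrable u μ) {C : ℝ}
    (hC : ∀ x θ, ‖Φ (lineIntegral f x (d θ))‖ ≤ C) :
    Integrable (fun p : E × Θ ↦ Φ (lineIntegral f p.1 (d p.2)) * u p.1) (μ.prod ν) :=
  (hu.comp_fst ν).bdd_mul
    (hΦ.comp_aemeasurable
      (aestronglyMeasurable_lineIntegral hf hd).aemeasurable).aestronglyMeasurable
    (.of_forall fun p ↦ hC p.1 p.2)

theorem integral_integral_antitone_lineIntegral_sub_mul_sub_nonpos [IsFiniteMeasure ν]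
    (hd : Measurable d) (hd₀ : ∀ θ, d θ ≠ 0) (hΦ : Antitone Φ)
    (hf : Integrable f μ) (hh : Integrable h μ) {C C' : ℝ}
    (hC : ∀ x θ, ‖Φ (lineIntegral f x (d θ))‖ ≤ C)
    (hC' : ∀ x θ, ‖Φ (lineIntegral h x (d θ))‖ ≤ C') :
    ∫ x, ((∫ θ, Φ (lineIntegral f x (d θ)) ∂ν) - ∫ θ, Φ (lineIntegral h x (d θ)) ∂ν) *
      (f x - h x) ∂μ ≤ 0 := by
  have int_f := integrable_prod_comp_lineIntegral_mul (ν := ν) hd hΦ.measurable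
    hf.aestronglyMeasurable (hf.sub hh) hC
  have int_h := integrable_prod_comp_lineIntegral_mul (ν := ν) hd hΦ.measurable
    hh.aestronglyMeasurable (hf.sub hh) hC'
  have int_sub : Integrable (fun p : E × Θ ↦ (Φ (lineIntegral f p.1 (d p.2)) -
      Φ (lineIntegral h p.1 (d p.2))) * (f p.1 - h p.1)) (μ.prod ν) := by
    simpa only [sub_mul, Pi.sub_def] using int_f.sub int_h
  calc ∫ x, ((∫ θ, Φ (lineIntegral f x (d θ)) ∂ν) - ∫ θ, Φ (lineIntegral h x (d θ)) ∂ν) *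
        (f x - h x) ∂μ
      = ∫ x, ∫ θ, (Φ (lineIntegral f x (d θ)) - Φ (lineIntegral h x (d θ))) *
          (f x - h x) ∂ν ∂μ := by
        simp only [sub_mul, ← integral_mul_const]
        refine integral_congr_ae ?_
        filter_upwards [int_f.prod_right_ae, int_h.prod_right_ae] with x hfx hhx
        exact (integral_sub hfx hhx).symm
    _ = ∫ θ, ∫ x, (Φ (lineIntegral f x (d θ)) - Φ (lineIntegral h x (d θ))) *
          (f x - h x) ∂μ ∂ν := integral_integral_swap int_sub
    _ ≤ 0 := by
        refine integral_nonpos_of_ae ?_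
        filter_upwards [int_sub.prod_left_ae] with θ hθ
        exact integral_antitone_lineIntegral_sub_mul_sub_nonpos hΦ (hd₀ θ) hf hh hθ

end LineIntegral

instance sphereMeasure.isFiniteMeasure (n : ℕ) : IsFiniteMeasure (sphereMeasure n) :=
  inferInstanceAs (IsFiniteMeasure (volume : Measure (Euc n)).toSphere)

theorem bddBelow_range_Xray {n : ℕ} {f : Euc n → ℝ} (hf : Continuous f)
    (hfc : HasCompactSupport f) :
    BddBelow (Set.range fun p : Euc n × sphere (0 : Euc n) 1 ↦ Xray f p.1 p.2) := by
  obtain ⟨M, hM⟩ := hfc.exists_bound_of_continuous hf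
  refine ⟨-(M * diam (support f)), Set.forall_mem_range.2 fun p ↦ ?_⟩
  exact (abs_le.1 (norm_lineIntegral_le_mul_diam_support hM
    (hfc.isCompact.isBounded.subset (subset_tsupport f)) p.1 (norm_eq_of_mem_sphere p.2))).1

theorem singlePixel_monotone_general {n : ℕ} {f h : Euc n → ℝ}
    (hf : Integrable f) (hh : Integrable h)
    (hXf : BddBelow (Set.range fun p : Euc n × sphere (0 : Euc n) 1 ↦ Xray f p.1 p.2))
    (hXh : BddBelow (Set.range fun p : Euc n × sphere (0 : Euc n) 1 ↦ Xray h p.1 p.2)) :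
    ∫ x : Euc n, (singlePixel f x - singlePixel h x) * (f x - h x) ≤ 0 := by
  obtain ⟨c, hc⟩ := hXf
  obtain ⟨c', hc'⟩ := hXh
  have norm_exp_neg_Xray_le {u : Euc n → ℝ} {b : ℝ}
      (hb : b ∈ lowerBounds (Set.range fun p : Euc n × sphere (0 : Euc n) 1 ↦ Xray u p.1 p.2))
      (x : Euc n) (θ : sphere (0 : Euc n) 1) : ‖exp (-Xray u x θ)‖ ≤ exp (-b) := by
    rw [norm_of_nonneg (exp_nonneg _)]
    exact exp_le_exp.2 (neg_le_neg (hb ⟨(x, θ), rfl⟩))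
  exact integral_integral_antitone_lineIntegral_sub_mul_sub_nonpos (Φ := fun t ↦ exp (-t))
    measurable_subtype_coe ne_zero_of_mem_unit_sphere
    (exp_monotone.comp_antitone fun _ _ ↦ neg_le_neg) hf hh
    (norm_exp_neg_Xray_le hc) (norm_exp_neg_Xray_le hc')

/-- For `n ≥ 2` and `f, h` continuous with compact support, the single pixel X-ray
transform is monotone: `∫ (Kf(x) − Kh(x))(f(x) − h(x)) dx ≤ 0`. -/
theorem singlePixel_monotone (n : ℕ) (hn : 2 ≤ n) (f h : Euc n → ℝ)
    (hf : Continuous f) (hfc : HasCompactSupport f)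
    (hh : Continuous h) (hhc : HasCompactSupport h) :
    ∫ x : Euc n, (singlePixel f x - singlePixel h x) * (f x - h x) ≤ 0 :=
  singlePixel_monotone_general (hf.integrable_of_hasCompactSupport hfc)
    (hh.integrable_of_hasCompactSupport hhc) (bddBelow_range_Xray hf hfc)
    (bddBelow_range_Xray hh hhc)
end

section
/- Let n ≥ 2 and let f, h : ℝⁿ → ℝ be continuous and compactly supported. If Kf(x) = Kh(x) for every x ∈ ℝⁿ, then the X-ray transforms agree: Xf(x,θ) = Xh(x,θ) for every x ∈ ℝⁿ and every θ ∈ S^{n-1}. In particular, if in addition the X-ray transform X is injective on continuous compactly supported functions (i.e., Xg ≡ 0 implies g ≡ 0), then f = h. -/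
open MeasureTheory Metric Real

/-! Put `g = f - h`, `a = Xf(x, θ)`, `b = Xh(x, θ)`. Multiplying `Kf(x) - Kh(x) = 0` by `g(x)` and
integrating over `x` gives `∫∫ g(x) (e^{-a} - e^{-b}) dx dθ = 0`. The second factor is constant
along lines, so integrating over each line first replaces `g(x)` by `Xg(x, θ) = a - b`: the integral
of `(a - b) (e^{-a} - e^{-b})` over the space of lines vanishes. This product is never positive and
vanishes only if `a = b`. All that matters about the exponential is that it is continuous and
injective, hence strictly monotone. -/

lemma integrable_prod_mul_of_hasCompactSupport_snd {K X : Type*}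
    [TopologicalSpace K] [CompactSpace K] [MeasurableSpace K] [OpensMeasurableSpace K]
    [TopologicalSpace X] [MeasurableSpace X] [OpensMeasurableSpace X]
    [SecondCountableTopologyEither K X] {μ : Measure K} [IsFiniteMeasure μ]
    {ν : Measure X} [IsFiniteMeasureOnCompacts ν] {f : X → ℝ} {Q : K × X → ℝ}
    (hf : Continuous f) (hfc : HasCompactSupport f) (hQ : Continuous Q) :
    Integrable (fun p => f p.2 * Q p) (μ.prod ν) := by
  refine Continuous.integrable_of_hasCompactSupport (by fun_prop) <|
    .intro' (isCompact_univ.prod hfc) (isClosed_univ.prod (isClosed_tsupport f)) fun p hp => ?_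
  have hp2 : p.2 ∉ tsupport f := fun hmem => hp ⟨Set.mem_univ _, hmem⟩
  rw [image_eq_zero_of_notMem_tsupport hp2, zero_mul]

lemma integrable_comp_add_smul {E F : Type*} [NormedAddCommGroup E] [NormedSpace ℝ E]
    [NormedAddCommGroup F] {f : E → F} (hf : Continuous f) (hfc : HasCompactSupport f) (x : E)
    {θ : E} (hθ : θ ≠ 0) : Integrable fun s : ℝ => f (x + s • θ) :=
  (hf.comp (by fun_prop)).integrable_of_hasCompactSupport <| hfc.comp_isClosedEmbedding <|
    (Homeomorph.addLeft x).isClosedEmbedding.comp (isClosedEmbedding_smul_left hθ)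

lemma measurePreserving_prodMk_add_smul {α E : Type*} [MeasurableSpace α] [AddCommGroup E]
    [Module ℝ E] [MeasurableSpace E] [MeasurableAdd₂ E] [MeasurableSMul₂ ℝ E]
    (μ : Measure α) [SFinite μ] (ν : Measure E) [SFinite ν] [ν.IsAddRightInvariant]
    {v : α → E} (hv : Measurable v) :
    MeasurePreserving (fun p : (α × E) × ℝ => ((p.1.1, p.1.2 + p.2 • v p.1.1), p.2))
      ((μ.prod ν).prod volume) ((μ.prod ν).prod volume) := by
  have translate (s : ℝ) : MeasurePreserving (fun p : α × E => (p.1, p.2 + s • v p.1))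
      (μ.prod ν) (μ.prod ν) :=
    (MeasurePreserving.id μ).skew_product (g := fun a x => x + s • v a)
      (by unfold Function.uncurry; fun_prop)
      (.of_forall fun a => (measurePreserving_add_right ν (s • v a)).map_eq)
  have shear_swap : MeasurePreserving
      (fun p : ℝ × (α × E) => (p.1, (p.2.1, p.2.2 + p.1 • v p.2.1)))
      (volume.prod (μ.prod ν)) (volume.prod (μ.prod ν)) :=
    (MeasurePreserving.id volume).skew_product
      (g := fun s (p : α × E) => (p.1, p.2 + s • v p.1))
      (by unfold Function.uncurry; fun_prop) (.of_forall fun s => (translate s).map_eq)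
  exact Measure.measurePreserving_swap.comp (shear_swap.comp Measure.measurePreserving_swap)

section LineCoordinates

variable {E : Type*} [NormedAddCommGroup E] [InnerProductSpace ℝ E] [MeasurableSpace E]
  [BorelSpace E] [SecondCountableTopology E]

/-- The change of variables `((θ, x), s) ↦ ((θ, y), t)` with `y = x + sθ` and `t = ⟪θ, x⟫`: the
line `x + ℝθ` is described once by a base point `x` and a parameter `s`, and once by a point `y`
on it and the position `t` of the base point. -/
def lineCoord (p : (sphere (0 : E) 1 × E) × ℝ) : (sphere (0 : E) 1 × E) × ℝ :=
  ((p.1.1, p.1.2 + p.2 • (p.1.1 : E)), inner ℝ (p.1.1 : E) p.1.2)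

variable (μ : Measure (sphere (0 : E) 1)) [SFinite μ]
  (ν : Measure E) [SFinite ν] [ν.IsAddRightInvariant]

lemma measurePreserving_lineCoord :
    MeasurePreserving lineCoord ((μ.prod ν).prod volume) ((μ.prod ν).prod volume) := by
  have reflect : MeasurePreserving
      (fun p : (sphere (0 : E) 1 × E) × ℝ => (p.1, inner ℝ (p.1.1 : E) p.1.2 - p.2))
      ((μ.prod ν).prod volume) ((μ.prod ν).prod volume) :=
    (MeasurePreserving.id (μ.prod ν)).skew_product
      (g := fun (p : sphere (0 : E) 1 × E) s => inner ℝ (p.1 : E) p.2 - s)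
      (by unfold Function.uncurry; fun_prop)
      (.of_forall fun p =>
        (Measure.measurePreserving_sub_left volume (inner ℝ (p.1 : E) p.2)).map_eq)
  convert reflect.comp (measurePreserving_prodMk_add_smul μ ν measurable_subtype_coe) using 1
  ext1 p
  simp [lineCoord, inner_add_right, real_inner_smul_right]

variable {μ ν} {ψ : ℝ → ℝ} {G : sphere (0 : E) 1 × E → ℝ}

lemma integrable_mul_comp_lineCoord (hG : Integrable G (μ.prod ν)) (hψ : Integrable ψ) :
    Integrable (fun p => G (lineCoord p).1 * ψ (lineCoord p).2) ((μ.prod ν).prod volume) :=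
  (measurePreserving_lineCoord μ ν).integrable_comp_of_integrable (hG.mul_prod hψ)

lemma integrable_integral_line_mul (hG : Integrable G (μ.prod ν)) (hψ : Integrable ψ) :
    Integrable (fun p : sphere (0 : E) 1 × E =>
      (∫ s : ℝ, G (p.1, p.2 + s • (p.1 : E))) * ψ (inner ℝ (p.1 : E) p.2)) (μ.prod ν) := by
  simpa only [lineCoord, integral_mul_const] using
    (integrable_mul_comp_lineCoord hG hψ).integral_prod_left

/-- On the left every line is met once for each of its points: without the weight `ψ` the integral
would be infinite. -/
lemma integral_integral_line_mul (hG : Integrable G (μ.prod ν)) (hψ : Integrable ψ) :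
    ∫ p : sphere (0 : E) 1 × E,
        (∫ s : ℝ, G (p.1, p.2 + s • (p.1 : E))) * ψ (inner ℝ (p.1 : E) p.2) ∂(μ.prod ν) =
      (∫ p, G p ∂(μ.prod ν)) * ∫ t, ψ t := by
  have hpres := measurePreserving_lineCoord μ ν
  have hmeas := (hG.mul_prod hψ).aestronglyMeasurable
  calc _ = ∫ p, G (lineCoord p).1 * ψ (lineCoord p).2 ∂((μ.prod ν).prod volume) := by
        rw [integral_prod _ (integrable_mul_comp_lineCoord hG hψ)]
        simp only [lineCoord, integral_mul_const]
    _ = ∫ q, G q.1 * ψ q.2 ∂((μ.prod ν).prod volume) := by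
        rw [← hpres.map_eq] at hmeas
        rw [← integral_map hpres.aemeasurable hmeas, hpres.map_eq]
    _ = (∫ p, G p ∂(μ.prod ν)) * ∫ t, ψ t := integral_prod_mul G ψ

lemma integral_line_eq_zero_of_nonneg [μ.IsOpenPosMeasure] [ν.IsOpenPosMeasure]
    (hG : Integrable G (μ.prod ν)) (hG0 : ∫ p, G p ∂(μ.prod ν) = 0)
    (hcont : Continuous fun p : sphere (0 : E) 1 × E => ∫ s : ℝ, G (p.1, p.2 + s • (p.1 : E)))
    (hnonneg : ∀ (θ : sphere (0 : E) 1) (x : E), 0 ≤ ∫ s : ℝ, G (θ, x + s • (θ : E)))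
    (θ : sphere (0 : E) 1) (x : E) : ∫ s : ℝ, G (θ, x + s • (θ : E)) = 0 := by
  have hψ : Integrable fun t : ℝ => exp (-1 * t ^ 2) := integrable_exp_neg_mul_sq one_pos
  have hint := integrable_integral_line_mul hG hψ
  have hzero := integral_integral_line_mul hG hψ
  rw [hG0, zero_mul] at hzero
  have hae := (integral_eq_zero_iff_of_nonneg
    (fun _ => mul_nonneg (hnonneg _ _) (exp_pos _).le) hint).1 hzero
  have hvanish := (Continuous.ae_eq_iff_eq (μ.prod ν)
    (hcont.mul (by fun_prop)) continuous_zero).1 hae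
  exact (mul_eq_zero.1 (congrFun hvanish (θ, x))).resolve_right (exp_pos _).ne'

end LineCoordinates

section Xray

variable {n : ℕ} {f h : Euc n → ℝ}

lemma Xray_add_smul (f : Euc n → ℝ) (x θ : Euc n) (t : ℝ) :
    Xray f (x + t • θ) θ = Xray f x θ := by
  unfold Xray
  rw [← integral_add_left_eq_self (fun s : ℝ => f (x + s • θ)) t]
  simp only [add_smul, add_assoc]

lemma Xray_sub (hf : Continuous f) (hfc : HasCompactSupport f) (hh : Continuous h)
    (hhc : HasCompactSupport h) (x : Euc n) {θ : Euc n} (hθ : θ ≠ 0) :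
    Xray (f - h) x θ = Xray f x θ - Xray h x θ :=
  integral_sub (integrable_comp_add_smul hf hfc x hθ) (integrable_comp_add_smul hh hhc x hθ)

lemma continuous_Xray (hf : Continuous f) (hfc : HasCompactSupport f) :
    Continuous fun p : sphere (0 : Euc n) 1 × Euc n => Xray f p.2 p.1 := by
  -- Started at the foot of the perpendicular from `0`, all integrands share a compact support.
  let foot (p : sphere (0 : Euc n) 1 × Euc n) : Euc n :=
    p.2 + (-inner ℝ (p.1 : Euc n) p.2) • (p.1 : Euc n)
  have hfoot (p) : Xray f p.2 p.1 = ∫ s : ℝ, f (foot p + s • (p.1 : Euc n)) :=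
    (Xray_add_smul f p.2 p.1 _).symm
  have hinner (p) (s : ℝ) : inner ℝ (p.1 : Euc n) (foot p + s • (p.1 : Euc n)) = s := by
    simp [foot, inner_add_right, real_inner_smul_right]
  obtain ⟨R, -, hR⟩ := hfc.exists_pos_le_norm
  simp only [hfoot, ← continuousOn_univ]
  refine continuousOn_integral_of_compact_support (isCompact_closedBall (0 : ℝ) R)
    (by unfold Function.uncurry; fun_prop) fun p s _ hs => hR _ ?_
  calc R ≤ |s| := by simpa using (not_le.1 (mt mem_closedBall_zero_iff.2 hs)).le
    _ ≤ ‖(p.1 : Euc n)‖ * ‖foot p + s • (p.1 : Euc n)‖ := by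
      simpa only [hinner] using
        abs_real_inner_le_norm (p.1 : Euc n) (foot p + s • (p.1 : Euc n))
    _ = ‖foot p + s • (p.1 : Euc n)‖ := by rw [norm_eq_of_mem_sphere, one_mul]

end Xray

section Injectivity

variable {n : ℕ} {f h : Euc n → ℝ} {φ : ℝ → ℝ} {μ : Measure (sphere (0 : Euc n) 1)}
  [IsFiniteMeasure μ]

lemma integrable_comp_Xray (hφ : Continuous φ) (hf : Continuous f) (hfc : HasCompactSupport f)
    (x : Euc n) : Integrable (fun θ : sphere (0 : Euc n) 1 => φ (Xray f x θ)) μ :=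
  (hφ.comp ((continuous_Xray hf hfc).comp (.prodMk_left x))).integrable_of_hasCompactSupport
    (.of_compactSpace _)

lemma integral_sub_mul_sub_comp_Xray_eq_zero (hφ : Continuous φ)
    (hf : Continuous f) (hfc : HasCompactSupport f)
    (hh : Continuous h) (hhc : HasCompactSupport h)
    (hK : ∀ x, ∫ θ, φ (Xray f x θ) ∂μ = ∫ θ, φ (Xray h x θ) ∂μ) :
    ∫ p : sphere (0 : Euc n) 1 × Euc n,
      (f - h) p.2 * (φ (Xray f p.2 p.1) - φ (Xray h p.2 p.1)) ∂(μ.prod volume) = 0 := by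
  have hXf := continuous_Xray hf hfc
  have hXh := continuous_Xray hh hhc
  rw [integral_prod_symm _ (integrable_prod_mul_of_hasCompactSupport_snd (hf.sub hh) (hfc.sub hhc)
    (by fun_prop))]
  refine integral_eq_zero_of_ae (.of_forall fun x => ?_)
  simp only [integral_const_mul, integral_sub (integrable_comp_Xray hφ hf hfc x)
    (integrable_comp_Xray hφ hh hhc x), hK x, sub_self, mul_zero, Pi.zero_apply]

theorem Xray_eq_of_integral_comp_Xray_eq [μ.IsOpenPosMeasure]
    (hφ : Continuous φ) (hφm : StrictMono φ)
    (hf : Continuous f) (hfc : HasCompactSupport f)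
    (hh : Continuous h) (hhc : HasCompactSupport h)
    (hK : ∀ x, ∫ θ, φ (Xray f x θ) ∂μ = ∫ θ, φ (Xray h x θ) ∂μ) (x : Euc n)
    (θ : sphere (0 : Euc n) 1) : Xray f x θ = Xray h x θ := by
  have hXf := continuous_Xray hf hfc
  have hXh := continuous_Xray hh hhc
  let G (p : sphere (0 : Euc n) 1 × Euc n) : ℝ :=
    (f - h) p.2 * (φ (Xray f p.2 p.1) - φ (Xray h p.2 p.1))
  have hline (θ : sphere (0 : Euc n) 1) (x : Euc n) : ∫ s : ℝ, G (θ, x + s • (θ : Euc n)) =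
      (Xray f x θ - Xray h x θ) * (φ (Xray f x θ) - φ (Xray h x θ)) := by
    simp only [G, Xray_add_smul, integral_mul_const,
      ← Xray_sub hf hfc hh hhc x (ne_zero_of_mem_unit_sphere θ)]
    rfl
  have hG : Integrable G (μ.prod volume) :=
    integrable_prod_mul_of_hasCompactSupport_snd (hf.sub hh) (hfc.sub hhc) (by fun_prop)
  have hG0 := integral_sub_mul_sub_comp_Xray_eq_zero hφ hf hfc hh hhc hK
  have hprod : (Xray f x θ - Xray h x θ) * (φ (Xray f x θ) - φ (Xray h x θ)) = 0 := by
    rw [← hline]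
    refine integral_line_eq_zero_of_nonneg hG hG0 ?_ (fun θ x => ?_) θ x
    · simp only [hline]
      fun_prop
    · rw [hline]
      exact (monotone_id.monovary hφm.monotone).sub_mul_sub_nonneg _ _
  rcases mul_eq_zero.1 hprod with hX | hφX
  · exact sub_eq_zero.1 hX
  · exact hφm.injective (sub_eq_zero.1 hφX)

theorem singlePixel_injective_general [μ.IsOpenPosMeasure]
    (hφ : Continuous φ) (hφi : Function.Injective φ)
    (hf : Continuous f) (hfc : HasCompactSupport f)
    (hh : Continuous h) (hhc : HasCompactSupport h)
    (hK : ∀ x, ∫ θ, φ (Xray f x θ) ∂μ = ∫ θ, φ (Xray h x θ) ∂μ) :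
    (∀ x θ : Euc n, ‖θ‖ = 1 → Xray f x θ = Xray h x θ) ∧
    ((∀ g : Euc n → ℝ, Continuous g → HasCompactSupport g →
        (∀ x θ : Euc n, ‖θ‖ = 1 → Xray g x θ = 0) → g = 0) → f = h) := by
  have hX (x θ : Euc n) (hθ : ‖θ‖ = 1) : Xray f x θ = Xray h x θ := by
    rcases hφ.strictMono_of_inj hφi with hmono | hanti
    · exact Xray_eq_of_integral_comp_Xray_eq hφ hmono hf hfc hh hhc hK x
        ⟨θ, mem_sphere_zero_iff_norm.2 hθ⟩
    · exact Xray_eq_of_integral_comp_Xray_eq (φ := -φ) (μ := μ) hφ.neg hanti.neg hf hfc hh hhc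
        (by simpa [integral_neg] using hK) x ⟨θ, mem_sphere_zero_iff_norm.2 hθ⟩
  refine ⟨hX, fun hinj =>
    sub_eq_zero.1 (hinj (f - h) (hf.sub hh) (hfc.sub hhc) fun x θ hθ => ?_)⟩
  rw [Xray_sub hf hfc hh hhc x (norm_ne_zero_iff.1 (hθ ▸ one_ne_zero)), hX x θ hθ, sub_self]

end Injectivity

instance isFiniteMeasure_sphereMeasure (n : ℕ) : IsFiniteMeasure (sphereMeasure n) :=
  inferInstanceAs (IsFiniteMeasure (volume : Measure (Euc n)).toSphere)

instance isOpenPosMeasure_sphereMeasure (n : ℕ) : (sphereMeasure n).IsOpenPosMeasure :=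
  inferInstanceAs (volume : Measure (Euc n)).toSphere.IsOpenPosMeasure

/-- For `n ≥ 2` and `f, h` continuous with compact support, `Kf = Kh` everywhere
implies `Xf = Xh` everywhere; in particular, if the X-ray transform is injective on continuous
compactly supported functions, then `f = h`. -/
theorem singlePixel_injective (n : ℕ) (hn : 2 ≤ n) (f h : Euc n → ℝ)
    (hf : Continuous f) (hfc : HasCompactSupport f)
    (hh : Continuous h) (hhc : HasCompactSupport h)
    (hK : ∀ x : Euc n, singlePixel f x = singlePixel h x) :
    (∀ (x θ : Euc n), ‖θ‖ = 1 → Xray f x θ = Xray h x θ) ∧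
    ((∀ g : Euc n → ℝ, Continuous g → HasCompactSupport g →
        (∀ (x θ : Euc n), ‖θ‖ = 1 → Xray g x θ = 0) → g = 0) → f = h) :=
  singlePixel_injective_general (by fun_prop) (exp_injective.comp neg_injective) hf hfc hh hhc hK
end
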